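/- Let p and q be primes satisfying conditions (1), and let m be the natural number such that 2^m is the order of the 2-Sylow subgroup of the ideal class group of Q(√(-2q)). Then the 2-class group of the triquadratic field K_pq = Q(√p, √q, √(-2)) is cyclic of order 2^(m+1), i.e. isomorphic to Z/2^(m+1)Z. -/

import Mathlib

noncomputable section

open IntermediateField NumberField

/-- Conditions (1). -/
def Cond1 (p q : ℕ) : Prop :=
  p.Prime ∧ q.Prime ∧ p % 4 = 1 ∧ q % 4 = 3 ∧
    jacobiSym 2 p = -1 ∧ jacobiSym 2 q = 1 ∧ jacobiSym (p : ℤ) q = -1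

/-- The imaginary quadratic field `ℚ(√(-2q))` as a subfield of `ℂ`,
where `√(-2q) = i√(2q)`. -/
def k0 (q : ℕ) : IntermediateField ℚ ℂ :=
  adjoin ℚ {Complex.I * ((Real.sqrt (2 * q) : ℝ) : ℂ)}

/-- The triquadratic field `K_pq = ℚ(√p, √q, √(-2))` as a subfield of `ℂ`,
where `√(-2) = i√2`. -/
def Kf (p q : ℕ) : IntermediateField ℚ ℂ :=
  adjoin ℚ {((Real.sqrt p : ℝ) : ℂ), ((Real.sqrt q : ℝ) : ℂ),
    Complex.I * ((Real.sqrt 2 : ℝ) : ℂ)}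

section TwoGroups

variable {X : Type*} [CommGroup X] [Finite X]

theorem card_le_of_subsingleton_involutions
    (hX : ∀ a b : X, a ^ 2 = 1 → b ^ 2 = 1 → a ≠ 1 → b ≠ 1 → a = b) (k : ℕ) :
    ∀ S : Subgroup X, (∀ x ∈ S, x ^ 2 ^ k = 1) → Nat.card S ≤ 2 ^ k := by
  induction k with
  | zero =>
    intro S hS
    have : S = ⊥ := by
      rw [eq_bot_iff]; intro x hx; simpa using hS x hx
    subst this; simp
  | succ k ih =>
    intro S hS
    let f : S →* X := (powMonoidHom 2).comp S.subtype
    have h1 : Nat.card f.range ≤ 2 ^ k := by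
      apply ih
      rintro _ ⟨x, rfl⟩
      have := hS x x.2
      simp only [f, MonoidHom.comp_apply, Subgroup.subtype_apply, powMonoidHom_apply]
      rw [← pow_mul, ← pow_succ']; exact this
    have h2 : Nat.card f.ker ≤ 2 := by
      by_contra! hc
      have : Finite f.ker := inferInstance
      have := Fintype.ofFinite f.ker
      rw [Nat.card_eq_fintype_card, Fintype.two_lt_card_iff] at hc
      obtain ⟨a, b, c, hab, hac, hbc⟩ := hc
      have key : ∀ u v : f.ker, u ≠ 1 → v ≠ 1 → u = v := by
        intro u v hu hv
        have hu2 : (u.1.1) ^ 2 = 1 := u.2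
        have hv2 : (v.1.1) ^ 2 = 1 := v.2
        refine Subtype.ext (Subtype.ext (hX _ _ hu2 hv2 ?_ ?_))
        · intro h; exact hu (Subtype.ext (Subtype.ext h))
        · intro h; exact hv (Subtype.ext (Subtype.ext h))
      by_cases ha : a = 1
      · exact hbc (key b c (fun h => hab (ha.trans h.symm)) (fun h => hac (ha.trans h.symm)))
      · by_cases hb : b = 1
        · exact hac (key a c ha (fun h => hbc (hb.trans h.symm)))
        · exact hab (key a b ha hb)
    have h3 : Nat.card f.ker * Nat.card f.range = Nat.card S := by
      rw [← Subgroup.index_ker, Subgroup.card_mul_index]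
    rw [← h3, pow_succ']
    exact Nat.mul_le_mul h2 h1

theorem IsPGroup.isCyclic_of_subsingleton_involutions (h2 : IsPGroup 2 X)
    (hX : ∀ a b : X, a ^ 2 = 1 → b ^ 2 = 1 → a ≠ 1 → b ≠ 1 → a = b) : IsCyclic X := by
  obtain ⟨g, hg⟩ := Monoid.exists_orderOf_eq_exponent (Monoid.ExponentExists.of_finite (G := X))
  obtain ⟨k, hk⟩ := (IsPGroup.iff_orderOf.1 h2) g
  apply isCyclic_of_card_le_orderOf g
  have := card_le_of_subsingleton_involutions hX k ⊤ (fun x _ => by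
    rw [← hk, hg]; exact Monoid.pow_exponent_eq_one x)
  simpa [hk] using this

omit [Finite X] in
theorem IsPGroup.zpowers_eq_top_of_not_isSquare [IsCyclic X] (h2 : IsPGroup 2 X) {x : X}
    (hx : ¬ IsSquare x) : Subgroup.zpowers x = ⊤ := by
  obtain ⟨g, hg⟩ := IsCyclic.exists_generator (α := X)
  obtain ⟨i, hi⟩ := (Subgroup.mem_zpowers_iff).1 (hg x)
  have hodd : Odd i := by
    rw [← Int.not_even_iff_odd]
    rintro ⟨r, hr⟩
    exact hx ⟨g ^ r, by rw [← zpow_add, ← hr, hi]⟩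
  obtain ⟨k, hk⟩ := (IsPGroup.iff_orderOf.1 h2) g
  have hcop : IsCoprime i ((2 : ℤ) ^ k) := by
    apply IsCoprime.pow_right
    obtain ⟨r, rfl⟩ := hodd
    exact ⟨1, -r, by ring⟩
  obtain ⟨a, b, hab⟩ := hcop
  rw [eq_top_iff]
  intro y _
  have hgx : g ∈ Subgroup.zpowers x := by
    refine Subgroup.mem_zpowers_iff.2 ⟨a, ?_⟩
    have h1 : g ^ ((2 : ℤ) ^ k) = 1 := by
      have := pow_orderOf_eq_one g
      rw [hk] at this
      exact_mod_cast this
    calc x ^ a = g ^ (a * i) := by rw [← hi, ← zpow_mul, mul_comm]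
      _ = g ^ (a * i + b * 2 ^ k) := by rw [zpow_add, mul_comm b, zpow_mul g (2 ^ k), h1]; simp
      _ = g := by rw [hab, zpow_one]
  exact (Subgroup.zpowers_le.2 hgx) (hg y)

end TwoGroups

theorem IsPGroup.tower_isCyclic_and_card {G H C : Type*} [CommGroup G] [CommGroup H] [CommGroup C]
    [Finite G] [Finite H] [Finite C]
    (tG : IsPGroup 2 G) (tH : IsPGroup 2 H) (tC : IsPGroup 2 C)
    (N : G →* H) (j : H →* G) (N0 : H →* C) (j0 : C →* H)
    (hj0 : ∀ c, c ^ 2 = 1 → j0 c = 1 → c = 1)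
    (hH : ∀ a b : H, a ^ 2 = 1 → b ^ 2 = 1 → a ≠ 1 → b ≠ 1 → a = b)
    (hG : ∀ a b : G, a ^ 2 = 1 → b ^ 2 = 1 → a ≠ 1 → b ≠ 1 → a = b)
    (hNj : ∀ c, N0 (j0 c) = c ^ 2)
    (g : G) (hg1 : ¬ IsSquare (N g)) (hg2 : ¬ IsSquare (N0 (N g)))
    (P : H) (hP : ¬ IsSquare P) (hPc : ∃ c, P ^ 2 = j0 c)
    (t : C) (ht : t ≠ 1) (hjt : j (j0 t) = 1)
    (hGN : ∀ x : G, x ^ 2 = j (N x)) (m : ℕ) (hm : Nat.card C = 2 ^ m) :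
    IsCyclic G ∧ Nat.card G = 2 ^ (m + 1) := by
  have := tG.isCyclic_of_subsingleton_involutions hG
  have := tH.isCyclic_of_subsingleton_involutions hH
  refine ⟨inferInstance, ?_⟩
  have hinj : Function.Injective j0 := by
    rw [injective_iff_map_eq_one]
    intro c hc
    by_contra hne
    obtain ⟨k, hk⟩ := (IsPGroup.iff_orderOf.1 tC) c
    cases k with
    | zero => exact hne (orderOf_eq_one_iff.1 (by simpa using hk))
    | succ k =>
      have h1 : c ^ 2 ^ k = 1 := hj0 _ (by
        rw [← pow_mul, ← pow_succ, ← hk, pow_orderOf_eq_one]) (by rw [map_pow, hc, one_pow])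
      have := orderOf_dvd_of_pow_eq_one h1
      rw [hk] at this
      have := Nat.le_of_dvd (by positivity) this
      have := Nat.pow_lt_pow_right (a := 2) (by norm_num) (Nat.lt_succ_self k)
      omega
  obtain ⟨a, ha⟩ := IsPGroup.iff_card.1 tG
  obtain ⟨b, hb⟩ := IsPGroup.iff_card.1 tH
  have hbm : m + 1 ≤ b := by
    have hr : Nat.card j0.range = 2 ^ m := by
      rw [← hm]; exact (Nat.card_congr (MonoidHom.ofInjective hinj).toEquiv).symm
    have hne : j0.range ≠ ⊤ := by
      intro h
      have : N g ∈ j0.range := h ▸ Subgroup.mem_top _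
      obtain ⟨c, hc⟩ := this
      exact hg2 ⟨c, by rw [← hc, hNj, pow_two]⟩
    have hdvd : Nat.card j0.range ≤ Nat.card H := Nat.le_of_dvd Nat.card_pos
      (Subgroup.card_subgroup_dvd_card _)
    have hlt : Nat.card j0.range < Nat.card H := by
      refine lt_of_le_of_ne hdvd fun h => hne (Subgroup.eq_top_of_card_eq _ h)
    rw [hr, hb] at hlt
    exact (Nat.pow_lt_pow_iff_right (by norm_num)).1 hlt
  have hge : m + 1 ≤ a := by
    have h1 := tH.zpowers_eq_top_of_not_isSquare hg1
    have h2 : orderOf (N g) = 2 ^ b := by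
      rw [← hb, ← Nat.card_zpowers, h1]; simp
    have h3 : 2 ^ b ∣ 2 ^ a := by
      rw [← h2, ← ha]; exact (orderOf_map_dvd N g).trans (orderOf_dvd_natCard g)
    exact hbm.trans ((Nat.pow_dvd_pow_iff_le_right (by norm_num)).1 h3)
  have hle : a ≤ m + 1 := by
    obtain ⟨γ, hγ⟩ := IsCyclic.exists_generator (α := G)
    have hoγ : orderOf γ = 2 ^ a := by
      rw [← ha]; exact orderOf_eq_card_of_forall_mem_zpowers hγ
    obtain ⟨c, hc⟩ := hPc
    have hP1 := tH.zpowers_eq_top_of_not_isSquare hP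
    have h4 : γ ^ 4 ∈ (j.comp j0).range := by
      have : N γ ∈ Subgroup.zpowers P := hP1 ▸ Subgroup.mem_top _
      obtain ⟨i, hi⟩ := Subgroup.mem_zpowers_iff.1 this
      refine ⟨c ^ i, ?_⟩
      rw [MonoidHom.comp_apply, map_zpow, map_zpow, ← hc, map_pow, ← zpow_natCast, ← zpow_mul,
        mul_comm, zpow_mul, ← map_zpow, hi, zpow_natCast, ← hGN, ← pow_mul]
    have hcard : Nat.card (j.comp j0).ker * Nat.card (j.comp j0).range = 2 ^ m := by
      rw [← Subgroup.index_ker, Subgroup.card_mul_index, hm]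
    have hker : 2 ≤ Nat.card (j.comp j0).ker := by
      have : Nontrivial (j.comp j0).ker :=
        ⟨⟨⟨t, by simpa [MonoidHom.mem_ker] using hjt⟩, 1, fun h => ht (congrArg Subtype.val h)⟩⟩
      exact Finite.one_lt_card
    have h5 : orderOf (γ ^ 4) ∣ Nat.card (j.comp j0).range := by
      have := orderOf_dvd_natCard (⟨γ ^ 4, h4⟩ : (j.comp j0).range)
      rwa [Subgroup.orderOf_mk] at this
    have h6 : orderOf γ ∣ 4 * orderOf (γ ^ 4) := by
      apply orderOf_dvd_of_pow_eq_one
      rw [pow_mul, pow_orderOf_eq_one]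
    have h7 := Nat.le_of_dvd (Nat.mul_pos (by norm_num) Nat.card_pos)
      (h6.trans (Nat.mul_dvd_mul_left 4 h5))
    have h8 : 2 ^ a ≤ 2 ^ (m + 1) := by
      rw [← hoγ, pow_succ, ← hcard]; nlinarith
    exact (Nat.pow_le_pow_iff_right (by norm_num)).1 h8
  rw [ha, le_antisymm hle hge]

theorem Sylow.mem_iff_of_comm {X : Type*} [CommGroup X] [Finite X] (P : Sylow 2 X) (x : X) :
    x ∈ P ↔ ∃ k : ℕ, x ^ 2 ^ k = 1 := by
  constructor
  · intro hx
    obtain ⟨k, hk⟩ := P.2 ⟨x, hx⟩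
    exact ⟨k, congrArg Subtype.val hk⟩
  · rintro ⟨k, hk⟩
    have h1 : IsPGroup 2 (Subgroup.zpowers x) := by
      rintro ⟨y, hy⟩
      obtain ⟨i, rfl⟩ := Subgroup.mem_zpowers_iff.1 hy
      refine ⟨k, Subtype.ext ?_⟩
      simp only [SubmonoidClass.mk_pow, Subgroup.coe_one]
      rw [← zpow_natCast, ← zpow_mul, mul_comm, zpow_mul, zpow_natCast, hk, one_zpow]
    obtain ⟨Q, hQ⟩ := h1.exists_le_sylow
    have : Q = P := (Sylow.unique_of_normal P inferInstance).uniq Q |>.trans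
      ((Sylow.unique_of_normal P inferInstance).uniq P).symm
    rw [← this]
    exact hQ (Subgroup.mem_zpowers x)

theorem Sylow.map_mem_of_comm {X Y : Type*} [CommGroup X] [Finite X] [CommGroup Y] [Finite Y]
    (P : Sylow 2 X) (Q : Sylow 2 Y) (f : X →* Y) {x : X} (hx : x ∈ P) : f x ∈ Q := by
  rw [Sylow.mem_iff_of_comm] at hx ⊢
  obtain ⟨k, hk⟩ := hx
  exact ⟨k, by rw [← map_pow, hk, map_one]⟩

/-- Restriction of a homomorphism of finite commutative groups to the Sylow 2-subgroups. -/
def Sylow.restrictHom {X Y : Type*} [CommGroup X] [Finite X] [CommGroup Y] [Finite Y]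
    (P : Sylow 2 X) (Q : Sylow 2 Y) (f : X →* Y) :
    (P : Subgroup X) →* (Q : Subgroup Y) :=
  (f.comp (P : Subgroup X).subtype).codRestrict _ fun x => Sylow.map_mem_of_comm P Q f x.2

theorem isSquare_of_pow_odd {X : Type*} [CommGroup X] {n : ℕ} (hn : Odd n) {x : X}
    (h : IsSquare (x ^ n)) : IsSquare x := by
  obtain ⟨r, rfl⟩ := hn
  obtain ⟨y, hy⟩ := h
  refine ⟨y * (x ^ r)⁻¹, ?_⟩
  rw [mul_mul_mul_comm, ← hy, ← mul_inv, ← pow_add, ← two_mul, pow_succ', mul_assoc, mul_inv_cancel,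
    mul_one]

theorem Sylow.nonempty_mulEquiv_zmod_of_tower {G H C : Type*}
    [CommGroup G] [CommGroup H] [CommGroup C] [Finite G] [Finite H] [Finite C]
    (N : G →* H) (j : H →* G) (N0 : H →* C) (j0 : C →* H)
    (hj0 : ∀ c, c ^ 2 = 1 → j0 c = 1 → c = 1)
    (hH : ∀ a b : H, a ^ 2 = 1 → b ^ 2 = 1 → a ≠ 1 → b ≠ 1 → a = b)
    (hG : ∀ a b : G, a ^ 2 = 1 → b ^ 2 = 1 → a ≠ 1 → b ≠ 1 → a = b)
    (hNj : ∀ c, N0 (j0 c) = c ^ 2)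
    (g : G) (hg1 : ¬ IsSquare (N g)) (hg2 : ¬ IsSquare (N0 (N g)))
    (P : H) (hP : ¬ IsSquare P) (hPc : ∃ c, P ^ 2 = j0 c)
    (t : C) (ht : t ≠ 1) (ht2 : t ^ 2 = 1) (hjt : j (j0 t) = 1)
    (hGN : ∀ x : G, (∃ k : ℕ, x ^ 2 ^ k = 1) → x ^ 2 = j (N x)) (m : ℕ)
    (hm : ∀ Q : Sylow 2 C, Nat.card (Q : Subgroup C) = 2 ^ m) (S : Sylow 2 G) :
    Nonempty ((S : Subgroup G) ≃* Multiplicative (ZMod (2 ^ (m + 1)))) := by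
  obtain ⟨T⟩ : Nonempty (Sylow 2 H) := inferInstance
  obtain ⟨U⟩ : Nonempty (Sylow 2 C) := inferInstance
  let n := (S : Subgroup G).index * (T : Subgroup H).index * (U : Subgroup C).index
  have hn : Odd n := by
    have o1 : Odd (S : Subgroup G).index := by
      rw [← Nat.not_even_iff_odd, even_iff_two_dvd]; exact S.not_dvd_index
    have o2 : Odd (T : Subgroup H).index := by
      rw [← Nat.not_even_iff_odd, even_iff_two_dvd]; exact T.not_dvd_index
    have o3 : Odd (U : Subgroup C).index := by
      rw [← Nat.not_even_iff_odd, even_iff_two_dvd]; exact U.not_dvd_index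
    exact (o1.mul o2).mul o3
  have hgS : g ^ n ∈ (S : Subgroup G) := by
    simp only [n, mul_assoc]; rw [pow_mul]; exact pow_mem (Subgroup.pow_index_mem _ _) _
  have hPT : P ^ n ∈ (T : Subgroup H) := by
    simp only [n]; rw [mul_comm (Subgroup.index _), mul_assoc, pow_mul]
    exact pow_mem (Subgroup.pow_index_mem _ _) _
  have hU : ∀ c : C, c ^ n ∈ (U : Subgroup C) := fun c => by
    simp only [n]; rw [mul_comm, pow_mul]; exact pow_mem (Subgroup.pow_index_mem _ _) _
  have res := IsPGroup.tower_isCyclic_and_card S.2 T.2 U.2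
    (S.restrictHom T N) (T.restrictHom S j) (T.restrictHom U N0) (U.restrictHom T j0)
    (fun c hc h => Subtype.ext (hj0 c (congrArg Subtype.val hc) (congrArg Subtype.val h)))
    (fun a b ha hb ha' hb' => Subtype.ext (hH a b (congrArg Subtype.val ha)
      (congrArg Subtype.val hb) (fun h => ha' (Subtype.ext h)) (fun h => hb' (Subtype.ext h))))
    (fun a b ha hb ha' hb' => Subtype.ext (hG a b (congrArg Subtype.val ha)
      (congrArg Subtype.val hb) (fun h => ha' (Subtype.ext h)) (fun h => hb' (Subtype.ext h))))
    (fun c => Subtype.ext (hNj c))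
    ⟨g ^ n, hgS⟩
    (fun ⟨y, hy⟩ => hg1 (isSquare_of_pow_odd hn (by
      rw [← map_pow]; exact ⟨y, congrArg Subtype.val hy⟩)))
    (fun ⟨y, hy⟩ => hg2 (isSquare_of_pow_odd hn (by
      rw [← map_pow, ← map_pow]; exact ⟨y, congrArg Subtype.val hy⟩)))
    ⟨P ^ n, hPT⟩
    (fun ⟨y, hy⟩ => hP (isSquare_of_pow_odd hn ⟨y, congrArg Subtype.val hy⟩))
    (by
      obtain ⟨c, hc⟩ := hPc
      refine ⟨⟨c ^ n, hU c⟩, Subtype.ext ?_⟩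
      change (P ^ n) ^ 2 = j0 (c ^ n)
      rw [map_pow, ← hc, ← pow_mul, ← pow_mul, mul_comm])
    ⟨t, (Sylow.mem_iff_of_comm U t).2 ⟨1, by simpa using ht2⟩⟩
    (fun h => ht (congrArg Subtype.val h)) (Subtype.ext hjt)
    (fun x => Subtype.ext (hGN x ((Sylow.mem_iff_of_comm S x).1 x.2))) m (hm U)
  have := res.1
  exact ⟨mulEquivOfCyclicCardEq (by rw [res.2, Nat.card_congr Multiplicative.toAdd, Nat.card_zmod])⟩

theorem Nat.exists_mul_sq_of_coprime_mul_eq {a b D v : ℕ} (hab : a.Coprime b) (hD : 0 < D)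
    (h : a * b = D * v ^ 2) :
    ∃ e f c d : ℕ, e * f = D ∧ a = e * c ^ 2 ∧ b = f * d ^ 2 := by
  have hg : D.gcd a * D.gcd b = D := by
    rw [← Nat.Coprime.gcd_mul D hab, h]; simp
  obtain ⟨a', ha'⟩ := Nat.gcd_dvd_right D a
  obtain ⟨b', hb'⟩ := Nat.gcd_dvd_right D b
  have hsq : a' * b' = v ^ 2 := by
    apply Nat.eq_of_mul_eq_mul_left hD
    rw [← h]; conv_rhs => rw [ha', hb']
    conv_lhs => rw [← hg]
    ring
  have hcop : a'.Coprime b' := Nat.Coprime.coprime_dvd_left ⟨_, by rw [mul_comm]; exact ha'⟩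
    (Nat.Coprime.coprime_dvd_right ⟨_, by rw [mul_comm]; exact hb'⟩ hab)
  obtain ⟨c, hc⟩ := exists_associated_pow_of_mul_eq_pow (by
    rw [gcd_eq_nat_gcd]; exact Nat.isUnit_iff.2 hcop) hsq
  obtain ⟨d, hd⟩ := exists_associated_pow_of_mul_eq_pow (a := b') (b := a') (by
    rw [gcd_eq_nat_gcd]; exact Nat.isUnit_iff.2 hcop.symm) (by rw [mul_comm]; exact hsq)
  rw [associated_iff_eq] at hc hd
  exact ⟨D.gcd a, D.gcd b, c, d, hg, by rw [hc]; exact ha', by rw [hd]; exact hb'⟩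

theorem Pell.exists_factor_of_odd {D : ℕ} (hD : Odd D) (hns : ¬ IsSquare (D : ℤ)) :
    ∃ e f c d : ℕ, e * f = D ∧
      ((f * d ^ 2 = e * c ^ 2 + 1 ∧ f ≠ 1) ∨ (f * d ^ 2 = e * c ^ 2 + 2 ∧ Odd c ∧ Odd d)) := by
  have hpos : 0 < D := hD.pos
  obtain ⟨a, ha1, ha2, ha3⟩ := Pell.IsFundamental.exists_of_not_isSquare
    (by exact_mod_cast hpos) hns
  have hp := a.prop
  obtain ⟨t, ht⟩ := Int.eq_ofNat_of_zero_le (by omega : 0 ≤ a.x)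
  obtain ⟨u, hu⟩ := Int.eq_ofNat_of_zero_le (by omega : 0 ≤ a.y)
  rw [ht, hu] at hp
  have ht1 : 1 < t := by omega
  have hp' : t ^ 2 = D * u ^ 2 + 1 := by
    have : (t : ℤ) ^ 2 = D * u ^ 2 + 1 := by linarith
    exact_mod_cast this
  rcases Nat.even_or_odd' t with ⟨s, rfl | rfl⟩
  · obtain ⟨s, rfl⟩ : ∃ r, s = r + 1 := ⟨s - 1, by omega⟩
    have hfac : (2 * s + 1) * (2 * s + 3) = D * u ^ 2 := by
      have : (2 * s + 1) * (2 * s + 3) + 1 = D * u ^ 2 + 1 := by rw [← hp']; ring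
      omega
    have hcop : (2 * s + 1).Coprime (2 * s + 3) := by
      have : Nat.Coprime (2 * s + 1) 2 := by simp
      exact (Nat.coprime_self_add_right (m := 2 * s + 1) (n := 2)).2 this
    obtain ⟨e, f, c, d, hef, hc, hd⟩ := Nat.exists_mul_sq_of_coprime_mul_eq hcop hpos hfac
    refine ⟨e, f, c, d, hef, Or.inr ⟨by omega, ?_, ?_⟩⟩
    · have h1 : Odd (e * c ^ 2) := hc ▸ ⟨s, rfl⟩
      exact (Nat.odd_pow_iff (by norm_num)).1 (Nat.odd_mul.1 h1).2
    · have h1 : Odd (f * d ^ 2) := hd ▸ ⟨s + 1, by ring⟩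
      exact (Nat.odd_pow_iff (by norm_num)).1 (Nat.odd_mul.1 h1).2
  · have hue : Even u := by
      by_contra hodd
      rw [Nat.not_even_iff_odd] at hodd
      have h1 : Odd (D * u ^ 2) := hD.mul hodd.pow
      have h2 : Odd ((2 * s + 1) ^ 2) := Odd.pow ⟨s, rfl⟩
      rw [hp'] at h2
      exact (Nat.not_even_iff_odd.2 h2) h1.add_one
    obtain ⟨v, rfl⟩ := hue
    have hfac : s * (s + 1) = D * v ^ 2 := by
      have : 4 * (s * (s + 1)) + 1 = 4 * (D * v ^ 2) + 1 := by
        calc 4 * (s * (s + 1)) + 1 = (2 * s + 1) ^ 2 := by ring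
          _ = _ := by rw [hp']; ring
      omega
    obtain ⟨e, f, c, d, hef, hc, hd⟩ := Nat.exists_mul_sq_of_coprime_mul_eq
      (by simp : s.Coprime (s + 1)) hpos hfac
    refine ⟨e, f, c, d, hef, Or.inl ⟨by omega, ?_⟩⟩
    rintro rfl
    have he : e = D := by omega
    subst he
    have hd1 : 1 < d := by nlinarith
    have := @ha3 (Pell.Solution₁.mk d c (by
      have : (d : ℤ) ^ 2 = e * c ^ 2 + 1 := by exact_mod_cast (by omega : d ^ 2 = e * c ^ 2 + 1)
      linarith)) (by simpa using hd1)
    rw [ht] at this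
    have h3 : 2 * s + 1 ≤ d := by
      rw [Pell.Solution₁.x_mk] at this; exact_mod_cast this
    nlinarith

/-- The arithmetic content of `Cond1`, expressed with Legendre symbols. -/
structure Cond1Data (p q : ℕ) [Fact p.Prime] [Fact q.Prime] : Prop where
  p8 : p % 8 = 5
  q8 : q % 8 = 7
  p_two : legendreSym p 2 = -1
  p_neg_two : legendreSym p (-2) = -1
  p_q : legendreSym p q = -1
  q_two : legendreSym q 2 = 1
  q_neg_one : legendreSym q (-1) = -1
  q_p : legendreSym q p = -1

theorem Cond1.data {p q : ℕ} (h : Cond1 p q) [Fact p.Prime] [Fact q.Prime] :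
    Cond1Data p q := by
  obtain ⟨hp, hq, hp4, hq4, h2p, h2q, hpq⟩ := h
  have hpo : Odd p := Nat.odd_iff.2 (by omega)
  have hqo : Odd q := Nat.odd_iff.2 (by omega)
  have hp2 : p ≠ 2 := by omega
  have hq2 : q ≠ 2 := by omega
  have p8 : p % 8 = 5 := by
    have h1 := h2p
    rw [jacobiSym.at_two hpo, ZMod.χ₈_nat_mod_eight] at h1
    have : p % 8 = 1 ∨ p % 8 = 5 := by omega
    rcases this with h | h
    · rw [h] at h1; exact absurd h1 (by decide)
    · exact h
  have q8 : q % 8 = 7 := by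
    have h1 := h2q
    rw [jacobiSym.at_two hqo, ZMod.χ₈_nat_mod_eight] at h1
    have : q % 8 = 3 ∨ q % 8 = 7 := by omega
    rcases this with h | h
    · rw [h] at h1; exact absurd h1 (by decide)
    · exact h
  have pm1 : legendreSym p (-1) = 1 := by
    rw [legendreSym.at_neg_one hp2, ZMod.χ₄_nat_one_mod_four hp4]
  have p_two : legendreSym p 2 = -1 := by rw [jacobiSym.legendreSym.to_jacobiSym]; exact h2p
  have q_p : legendreSym q p = -1 := by rw [jacobiSym.legendreSym.to_jacobiSym]; exact hpq
  refine ⟨p8, q8, p_two, ?_, ?_, ?_, ?_, q_p⟩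
  · rw [show (-2 : ℤ) = -1 * 2 by norm_num, legendreSym.mul, pm1, p_two, one_mul]
  · rw [← legendreSym.quadratic_reciprocity_one_mod_four hp4 hq2, q_p]
  · rw [jacobiSym.legendreSym.to_jacobiSym]; exact h2q
  · rw [legendreSym.at_neg_one hq2, ZMod.χ₄_nat_three_mod_four hq4]

theorem Int.false_of_dvd_of_legendreSym {r : ℕ} [Fact r.Prime] (hr : r ≠ 2) {a x y k : ℤ}
    (h : legendreSym r a = -1) (hx : x = 1 ∨ x = 2) (hk : x ^ 2 - a * y ^ 2 = r * k) : False := by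
  have h1 := (legendreSym.prime_dvd_of_eq_neg_one h (x := x) (y := y) ⟨k, hk⟩).1
  have h2 := (Fact.out : r.Prime).two_le
  rcases hx with rfl | rfl
  · have := Int.le_of_dvd (by norm_num) h1; omega
  · have := Int.le_of_dvd (by norm_num) h1; omega

theorem Nat.Prime.not_isSquare_int {p : ℕ} (hp : p.Prime) : ¬ IsSquare (p : ℤ) := by
  intro h
  exact (Nat.prime_iff_prime_int.1 hp).irreducible.not_isSquare h

section Cond1

variable {p q : ℕ} [Fact p.Prime] [Fact q.Prime]

theorem Int.odd_sq_mod_eight {c : ℤ} (h : Odd c) : c ^ 2 % 8 = 1 := by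
  obtain ⟨k, rfl⟩ := h
  obtain ⟨l, hl⟩ := Int.even_mul_succ_self k
  have : (2 * k + 1) ^ 2 = 8 * l + 1 := by
    calc (2 * k + 1) ^ 2 = 4 * (k * (k + 1)) + 1 := by ring
      _ = _ := by rw [hl]; ring
  omega

theorem Cond1Data.exists_pell_p (H : Cond1Data p q) : ∃ A B : ℤ, A ^ 2 - p * B ^ 2 = -1 := by
  have hp : p.Prime := Fact.out
  have hp8 := H.p8
  obtain ⟨e, f, c, d, hef, h⟩ := Pell.exists_factor_of_odd (Nat.odd_iff.2 (by omega))
    hp.not_isSquare_int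
  have : e = 1 ∧ f = p ∨ e = p ∧ f = 1 := by
    rcases hp.eq_one_or_self_of_dvd e ⟨f, hef.symm⟩ with rfl | rfl
    · left; omega
    · right; exact ⟨rfl, Nat.eq_of_mul_eq_mul_left hp.pos (by omega)⟩
  rcases this with ⟨rfl, rfl⟩ | ⟨rfl, rfl⟩
  · rcases h with ⟨h, -⟩ | ⟨h, -, -⟩
    · exact ⟨c, d, by zify at h; linarith⟩
    · exfalso; zify at h
      exact Int.false_of_dvd_of_legendreSym (by omega) H.p_neg_two (x := 2) (y := c)
        (k := 2 * d ^ 2) (Or.inr rfl) (by linarith)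
  · rcases h with ⟨h, h1⟩ | ⟨h, -, -⟩
    · exact absurd rfl h1
    · exfalso; zify at h
      exact Int.false_of_dvd_of_legendreSym (by omega) H.p_two (x := 2) (y := d)
        (k := - 2 * c ^ 2) (Or.inr rfl) (by linarith)

theorem Cond1Data.exists_pell_q (H : Cond1Data p q) : ∃ a b : ℤ, a ^ 2 - q * b ^ 2 = 2 := by
  have hp : q.Prime := Fact.out
  have hp8 := H.q8
  obtain ⟨e, f, c, d, hef, h⟩ := Pell.exists_factor_of_odd (Nat.odd_iff.2 (by omega))
    hp.not_isSquare_int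
  have : e = 1 ∧ f = q ∨ e = q ∧ f = 1 := by
    rcases hp.eq_one_or_self_of_dvd e ⟨f, hef.symm⟩ with rfl | rfl
    · left; omega
    · right; exact ⟨rfl, Nat.eq_of_mul_eq_mul_left hp.pos (by omega)⟩
  rcases this with ⟨rfl, rfl⟩ | ⟨rfl, rfl⟩
  · rcases h with ⟨h, -⟩ | ⟨h, hc, hd⟩
    · exfalso; zify at h
      exact Int.false_of_dvd_of_legendreSym (by omega) H.q_neg_one (x := 1) (y := c)
        (k := d ^ 2) (Or.inl rfl) (by linarith)
    · exfalso
      have h1 := Int.odd_sq_mod_eight (c := c) (by exact_mod_cast hc)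
      have h2 := Int.odd_sq_mod_eight (c := d) (by exact_mod_cast hd)
      zify at h hp8
      obtain ⟨k, hk⟩ : ∃ k : ℤ, (f : ℤ) = 8 * k + 7 := ⟨f / 8, by omega⟩
      obtain ⟨l, hl⟩ : ∃ l : ℤ, (d : ℤ) ^ 2 = 8 * l + 1 := ⟨d ^ 2 / 8, by omega⟩
      have : (f : ℤ) * d ^ 2 = 8 * (8 * k * l + k + 7 * l) + 7 := by rw [hk, hl]; ring
      omega
  · rcases h with ⟨h, h1⟩ | ⟨h, -, -⟩
    · exact absurd rfl h1
    · exact ⟨d, c, by zify at h; linarith⟩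

theorem Cond1Data.exists_pell_pq (H : Cond1Data p q) :
    ∃ z y : ℤ, p * z ^ 2 - q * y ^ 2 = -2 := by
  have hp : p.Prime := Fact.out
  have hq : q.Prime := Fact.out
  have hp8 := H.p8
  have hq8 := H.q8
  have hpq : p ≠ q := by rintro rfl; omega
  have hns : ¬ IsSquare (((p * q : ℕ) : ℤ)) := by
    rintro ⟨s, hs⟩
    have h1 : (p : ℤ) ∣ s := (Nat.prime_iff_prime_int.1 hp).dvd_of_dvd_pow (n := 2)
      ⟨q, by rw [pow_two, ← hs]; push_cast; ring⟩
    obtain ⟨r, rfl⟩ := h1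
    have h2 : (q : ℤ) = p * r ^ 2 := by
      have : (p : ℤ) * q = p * (p * r ^ 2) := by push_cast at hs; rw [hs]; ring
      exact mul_left_cancel₀ (by exact_mod_cast hp.ne_zero) this
    have h3 : p ∣ q := Int.natCast_dvd_natCast.1 ⟨r ^ 2, h2⟩
    exact hpq ((Nat.prime_dvd_prime_iff_eq hp hq).1 h3)
  have hodd : Odd (p * q) := (Nat.odd_iff.2 (by omega)).mul (Nat.odd_iff.2 (by omega))
  obtain ⟨e, f, c, d, hef, h⟩ := Pell.exists_factor_of_odd hodd hns
  have he : e ∣ p * q := ⟨f, hef.symm⟩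
  obtain ⟨e1, e2, he1, he2, rfl⟩ := Nat.dvd_mul.1 he
  have hp0 := hp.pos
  have hq0 := hq.pos
  have hp2 : p ≠ 2 := by omega
  have hq2 : q ≠ 2 := by omega
  rcases hp.eq_one_or_self_of_dvd e1 he1 with rfl | rfl <;>
  rcases hq.eq_one_or_self_of_dvd e2 he2 with rfl | rfl
  · obtain rfl : f = p * q := by omega
    exfalso
    rcases h with ⟨h, -⟩ | ⟨h, -, -⟩ <;> zify at h
    · exact Int.false_of_dvd_of_legendreSym hq2 H.q_neg_one (x := 1) (y := c)
        (k := p * d ^ 2) (Or.inl rfl) (by linarith)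
    · exact Int.false_of_dvd_of_legendreSym hp2 H.p_neg_two (x := 2) (y := c)
        (k := 2 * q * d ^ 2) (Or.inr rfl) (by linarith)
  · obtain rfl : f = p := Nat.eq_of_mul_eq_mul_left hq0 (by linarith)
    exfalso
    rcases h with ⟨h, -⟩ | ⟨h, -, -⟩ <;> zify at h
    · exact Int.false_of_dvd_of_legendreSym hq2 H.q_p (x := 1) (y := d)
        (k := -c ^ 2) (Or.inl rfl) (by linarith)
    · have h2p : legendreSym e2 (2 * f) = -1 := by rw [legendreSym.mul, H.q_two, H.q_p, one_mul]
      exact Int.false_of_dvd_of_legendreSym hq2 h2p (x := 2) (y := d)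
        (k := -2 * c ^ 2) (Or.inr rfl) (by linarith)
  · obtain rfl : f = q := Nat.eq_of_mul_eq_mul_left hp0 (by linarith)
    rcases h with ⟨h, -⟩ | ⟨h, -, -⟩ <;> zify at h
    · exfalso
      exact Int.false_of_dvd_of_legendreSym hp2 H.p_q (x := 1) (y := d)
        (k := -c ^ 2) (Or.inl rfl) (by linarith)
    · exact ⟨c, d, by linarith⟩
  · obtain rfl : f = 1 := Nat.eq_of_mul_eq_mul_left (Nat.mul_pos hp0 hq0) (by linarith)
    rcases h with ⟨h, h1⟩ | ⟨h, -, -⟩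
    · exact absurd rfl h1
    · exfalso; zify at h
      exact Int.false_of_dvd_of_legendreSym hp2 H.p_two (x := 2) (y := d)
        (k := -2 * e2 * c ^ 2) (Or.inr rfl) (by linarith)

end Cond1

/-- `L = M(θ)` is a quadratic extension of fields with `θ ^ 2 = d ∈ M`. -/
structure IsQuadExt {M L : Type*} [Field M] [Field L] [Algebra M L] (θ : L) (d : M) : Prop where
  sq : θ ^ 2 = algebraMap M L d
  notMem : ∀ x : M, algebraMap M L x ≠ θ
  span : ∀ z : L, ∃ x y : M, z = algebraMap M L x + algebraMap M L y * θ

namespace IsQuadExt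

variable {M L : Type*} [Field M] [Field L] [Algebra M L] {θ : L} {d : M}

theorem coord_unique (h : IsQuadExt θ d) {x y x' y' : M}
    (e : algebraMap M L x + algebraMap M L y * θ = algebraMap M L x' + algebraMap M L y' * θ) :
    x = x' ∧ y = y' := by
  have hy : y = y' := by
    by_contra hne
    have hy0 : algebraMap M L (y - y') ≠ 0 := by
      simpa [sub_eq_zero] using hne
    apply h.notMem ((x' - x) / (y - y'))
    rw [map_div₀, div_eq_iff hy0, map_sub, map_sub]
    linear_combination -e
  subst hy
  exact ⟨(algebraMap M L).injective (by linear_combination e), rfl⟩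

theorem ne_zero (h : IsQuadExt θ d) : θ ≠ 0 := fun h0 => h.notMem 0 (by simp [h0])

theorem exists_lift (h : IsQuadExt θ d) {E : Type*} [CommRing E] (φ : M →+* E) (c : E)
    (hc : c ^ 2 = φ d) :
    ∃ ψ : L →+* E, (∀ x, ψ (algebraMap M L x) = φ x) ∧ ψ θ = c := by
  choose X Y hXY using h.span
  have key : ∀ z x y, z = algebraMap M L x + algebraMap M L y * θ → X z = x ∧ Y z = y :=
    fun z x y hz => h.coord_unique ((hXY z).symm.trans hz)
  refine ⟨{ toFun := fun z => φ (X z) + φ (Y z) * c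
            map_one' := ?_
            map_mul' := ?_
            map_zero' := ?_
            map_add' := ?_ }, ?_, ?_⟩
  · obtain ⟨h1, h2⟩ := key 1 1 0 (by simp)
    simp [h1, h2]
  · intro z w
    obtain ⟨h1, h2⟩ := key (z * w) (X z * X w + d * (Y z * Y w)) (X z * Y w + Y z * X w) (by
      conv_lhs => rw [hXY z, hXY w]
      simp only [map_add, map_mul]
      linear_combination (algebraMap M L (Y z) * algebraMap M L (Y w)) * h.sq)
    rw [h1, h2]
    simp only [map_add, map_mul]
    linear_combination (-φ (Y z) * φ (Y w)) * hc
  · obtain ⟨h1, h2⟩ := key 0 0 0 (by simp)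
    simp [h1, h2]
  · intro z w
    obtain ⟨h1, h2⟩ := key (z + w) (X z + X w) (Y z + Y w) (by
      conv_lhs => rw [hXY z, hXY w]
      simp only [map_add]; ring)
    rw [h1, h2]; simp only [map_add]; ring
  · intro x
    obtain ⟨h1, h2⟩ := key (algebraMap M L x) x 0 (by simp)
    simp [h1, h2]
  · obtain ⟨h1, h2⟩ := key θ 0 1 (by simp)
    simp [h1, h2]

theorem finrank_eq_two (h : IsQuadExt θ d) : Module.finrank M L = 2 := by
  have hli : LinearIndependent M ![(1 : L), θ] := by
    rw [LinearIndependent.pair_iff]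
    intro s t hst
    have := h.coord_unique (x := s) (y := t) (x' := 0) (y' := 0) (by
      rw [Algebra.smul_def, Algebra.smul_def] at hst; simpa using hst)
    exact this
  have hsp : ⊤ ≤ Submodule.span M (Set.range ![(1 : L), θ]) := by
    intro z _
    obtain ⟨x, y, rfl⟩ := h.span z
    refine add_mem ?_ ?_
    · rw [Algebra.algebraMap_eq_smul_one]
      exact Submodule.smul_mem _ _ (Submodule.subset_span ⟨0, rfl⟩)
    · rw [← Algebra.smul_def]
      exact Submodule.smul_mem _ _ (Submodule.subset_span ⟨1, rfl⟩)
  rw [Module.finrank_eq_card_basis (Module.Basis.mk hli hsp), Fintype.card_fin]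

theorem isQuadraticExtension (h : IsQuadExt θ d) : Algebra.IsQuadraticExtension M L :=
  { (Module.Free.of_divisionRing M L : Module.Free M L) with finrank_eq_two' := h.finrank_eq_two }

theorem exists_conj (h : IsQuadExt θ d) : ∃ σ : L ≃ₐ[M] L, σ θ = -θ := by
  obtain ⟨ψ, h1, h2⟩ := h.exists_lift (algebraMap M L) (-θ) (by rw [neg_sq, h.sq])
  have hinv : ∀ z, ψ (ψ z) = z := fun z => by
    obtain ⟨x, y, rfl⟩ := h.span z
    simp [h1, h2]
  exact ⟨AlgEquiv.ofRingEquiv (f := RingEquiv.ofBijective ψ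
    ⟨ψ.injective, fun z => ⟨ψ z, hinv z⟩⟩) h1, h2⟩

/-- The nontrivial automorphism of a quadratic extension. -/
def conj (h : IsQuadExt θ d) : L ≃ₐ[M] L := h.exists_conj.choose

@[simp] theorem conj_gen (h : IsQuadExt θ d) : h.conj θ = -θ := h.exists_conj.choose_spec

theorem conj_coord (h : IsQuadExt θ d) (x y : M) :
    h.conj (algebraMap M L x + algebraMap M L y * θ) =
      algebraMap M L x - algebraMap M L y * θ := by
  simp [sub_eq_add_neg]

theorem norm_eq_mul_conj [CharZero M] (h : IsQuadExt θ d) (z : L) :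
    algebraMap M L (Algebra.norm M z) = z * h.conj z := by
  classical
  have := h.isQuadraticExtension
  have hne : (1 : L ≃ₐ[M] L) ≠ h.conj := by
    intro e
    have h1 : θ = -θ := by conv_rhs => rw [← h.conj_gen, ← e]; simp
    have : CharZero L := charZero_of_injective_algebraMap (algebraMap M L).injective
    exact h.ne_zero (self_eq_neg.1 h1)
  have hcard : Fintype.card (L ≃ₐ[M] L) = 2 := by
    rw [← Nat.card_eq_fintype_card, IsGalois.card_aut_eq_finrank, h.finrank_eq_two]
  have huniv : (Finset.univ : Finset (L ≃ₐ[M] L)) = {1, h.conj} := by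
    symm
    rw [← Finset.card_eq_iff_eq_univ, Finset.card_pair hne, hcard]
  rw [Algebra.norm_eq_prod_automorphisms, huniv, Finset.prod_pair hne]
  rfl

theorem norm_coord [CharZero M] (h : IsQuadExt θ d) (x y : M) :
    Algebra.norm M (algebraMap M L x + algebraMap M L y * θ) = x ^ 2 - d * y ^ 2 := by
  apply (algebraMap M L).injective
  rw [h.norm_eq_mul_conj, conj_coord]
  simp only [map_sub, map_mul, map_pow]
  linear_combination (-(algebraMap M L y) ^ 2) * h.sq

theorem exists_norm_eq [CharZero M] (h : IsQuadExt θ d) (z : L) :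
    ∃ x y : M, Algebra.norm M z = x ^ 2 - d * y ^ 2 := by
  obtain ⟨x, y, rfl⟩ := h.span z
  exact ⟨x, y, h.norm_coord x y⟩

/-- An element whose norm is a square differs from an element of the base field by a square. -/
theorem exists_mul_sq_of_norm_eq_sq [CharZero M] (h : IsQuadExt θ d) {a : L} (ha : a ≠ 0) {f : M}
    (hf : Algebra.norm M a = f ^ 2) :
    ∃ (g : M) (k : L), g ≠ 0 ∧ k ≠ 0 ∧ a = algebraMap M L g * k ^ 2 := by
  have hN : a * h.conj a = algebraMap M L f ^ 2 := by
    rw [← h.norm_eq_mul_conj, hf, map_pow]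
  have hca : h.conj a ≠ 0 := by simpa using ha
  have hf0 : algebraMap M L f ≠ 0 := by
    intro h0; rw [h0] at hN
    exact mul_ne_zero ha hca (by simpa using hN)
  have hf0' : f ≠ 0 := by rintro rfl; simp at hf0
  by_cases ht : a = -algebraMap M L f
  · exact ⟨-f, 1, neg_ne_zero.2 hf0', one_ne_zero, by rw [ht]; simp⟩
  · have hb : a + algebraMap M L f ≠ 0 := fun e => ht (eq_neg_of_add_eq_zero_left e)
    have hNb := h.norm_eq_mul_conj (a + algebraMap M L f)
    have := h.isQuadraticExtension
    have hnb0 : Algebra.norm M (a + algebraMap M L f) ≠ 0 := Algebra.norm_ne_zero_iff.2 hb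
    have hnb0' : algebraMap M L (Algebra.norm M (a + algebraMap M L f)) ≠ 0 := by simpa using hnb0
    refine ⟨f / Algebra.norm M (a + algebraMap M L f), a + algebraMap M L f,
      div_ne_zero hf0' hnb0, hb, ?_⟩
    rw [map_div₀, div_mul_eq_mul_div, eq_div_iff hnb0', hNb, map_add, AlgEquiv.commutes]
    linear_combination (a + algebraMap M L f) * hN

end IsQuadExt

section IdealSquares

variable {R : Type*} [CommRing R] [IsDedekindDomain R]

open UniqueFactorizationMonoid in
open scoped Classical in
theorem Ideal.exists_eq_sq_of_even_count {I : Ideal R} (hI : I ≠ ⊥)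
    (h : ∀ v : Ideal R, Irreducible v → Even ((normalizedFactors I).count v)) :
    ∃ J : Ideal R, I = J ^ 2 := by
  refine ⟨∏ v ∈ (normalizedFactors I).toFinset, v ^ ((normalizedFactors I).count v / 2), ?_⟩
  conv_lhs => rw [← Ideal.prod_normalizedFactors_eq_self hI, Finset.prod_multiset_count]
  rw [← Finset.prod_pow]
  refine Finset.prod_congr rfl fun v hv => ?_
  rw [← pow_mul]
  congr 1
  have := h v (irreducible_of_normalized_factor v (Multiset.mem_toFinset.1 hv))
  exact (Nat.div_mul_cancel this.two_dvd).symm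

open UniqueFactorizationMonoid in
open scoped Classical in
theorem Ideal.exists_mul_pow_mul_pow_eq_sq {I v₁ v₂ : Ideal R} (hI : I ≠ ⊥) (h₁ : Irreducible v₁)
    (h₂ : Irreducible v₂)
    (h : ∀ v : Ideal R, Irreducible v → v ≠ v₁ → v ≠ v₂ → Even ((normalizedFactors I).count v)) :
    ∃ (i₁ i₂ : ℕ) (J : Ideal R), I * v₁ ^ i₁ * v₂ ^ i₂ = J ^ 2 := by
  have h10 : ∀ n, v₁ ^ n ≠ 0 := fun n => pow_ne_zero _ h₁.ne_zero
  have h20 : ∀ n, v₂ ^ n ≠ 0 := fun n => pow_ne_zero _ h₂.ne_zero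
  refine ⟨(normalizedFactors I).count v₁,
    if v₁ = v₂ then 0 else (normalizedFactors I).count v₂, ?_⟩
  apply Ideal.exists_eq_sq_of_even_count
  · exact mul_ne_zero (mul_ne_zero hI (h10 _)) (h20 _)
  intro v hv
  rw [normalizedFactors_mul (mul_ne_zero hI (h10 _)) (h20 _), normalizedFactors_mul hI (h10 _),
    normalizedFactors_pow, normalizedFactors_pow, normalizedFactors_irreducible h₁,
    normalizedFactors_irreducible h₂]
  simp only [Multiset.count_add, Multiset.count_nsmul, normalize_eq, Multiset.count_singleton]
  by_cases e1 : v = v₁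
  · subst e1
    by_cases e2 : v = v₂
    · subst e2; simp
    · simp [e2]
  · by_cases e2 : v = v₂
    · subst e2; simp [e1, Ne.symm e1]
    · simpa [e1, e2] using h v hv e1 e2

end IdealSquares

section NumberFields

variable {M L : Type*} [Field M] [NumberField M] [Field L] [NumberField L]

/-- The principal fractional ideal generated by `a` is the square of a fractional ideal. -/
def IsIdealSquare (a : M) : Prop :=
  a ≠ 0 ∧ ∃ (c : M) (b : 𝓞 M) (J : Ideal (𝓞 M)),
    c ≠ 0 ∧ a * c ^ 2 = algebraMap (𝓞 M) M b ∧ Ideal.span {b} = J ^ 2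

namespace IsIdealSquare

omit [NumberField M] in
theorem mul {a a' : M} (h : IsIdealSquare a) (h' : IsIdealSquare a') : IsIdealSquare (a * a') := by
  obtain ⟨h0, c, b, J, hc, hb, hJ⟩ := h
  obtain ⟨h0', c', b', J', hc', hb', hJ'⟩ := h'
  refine ⟨mul_ne_zero h0 h0', c * c', b * b', J * J', mul_ne_zero hc hc', ?_, ?_⟩
  · rw [map_mul, ← hb, ← hb']; ring
  · rw [← Ideal.span_singleton_mul_span_singleton, hJ, hJ']; ring

omit [NumberField M] in
theorem sq {k : M} (hk : k ≠ 0) : IsIdealSquare (k ^ 2) :=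
  ⟨pow_ne_zero _ hk, k⁻¹, 1, ⊤, inv_ne_zero hk, by simp [hk], by simp [← Ideal.one_eq_top]⟩

theorem of_int {b : 𝓞 M} (hb : b ≠ 0) {J : Ideal (𝓞 M)} (h : Ideal.span {b} = J ^ 2) :
    IsIdealSquare (algebraMap (𝓞 M) M b) :=
  ⟨by simpa using hb, 1, b, J, one_ne_zero, by simp, h⟩

theorem unit (u : (𝓞 M)ˣ) : IsIdealSquare (algebraMap (𝓞 M) M u) :=
  of_int u.ne_zero (J := ⊤) (by simp [← Ideal.one_eq_top, Ideal.span_singleton_eq_top.2 u.isUnit])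

omit [NumberField M] in
theorem mul_sq_iff {a k : M} (hk : k ≠ 0) : IsIdealSquare (a * k ^ 2) ↔ IsIdealSquare a := by
  constructor
  · intro h
    have := h.mul (sq (inv_ne_zero hk))
    rwa [mul_assoc, ← mul_pow, mul_inv_cancel₀ hk, one_pow, mul_one] at this
  · exact fun h => h.mul (sq hk)

theorem exists_span_eq_sq {b : 𝓞 M} (h : IsIdealSquare (algebraMap (𝓞 M) M b)) :
    ∃ J : Ideal (𝓞 M), Ideal.span {b} = J ^ 2 := by
  obtain ⟨h0, c, b', J, hc, hb', hJ⟩ := h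
  obtain ⟨n, m, hm, rfl⟩ := IsFractionRing.div_surjective (A := 𝓞 M) c
  have hm0 : m ≠ 0 := nonZeroDivisors.ne_zero hm
  have hn0 : n ≠ 0 := by rintro rfl; simp at hc
  have hm0' : algebraMap (𝓞 M) M m ≠ 0 := by simpa using hm0
  have e : b * n ^ 2 = b' * m ^ 2 := by
    apply RingOfIntegers.coe_injective
    simp only [map_mul, map_pow]
    rw [← hb']; field_simp
  have e2 : Ideal.span {b} * (Ideal.span {n}) ^ 2 = (J * Ideal.span {m}) ^ 2 := by
    rw [mul_pow, ← hJ, Ideal.span_singleton_pow, Ideal.span_singleton_pow,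
      Ideal.span_singleton_mul_span_singleton, Ideal.span_singleton_mul_span_singleton, e]
  have hdvd : Ideal.span {n} ∣ J * Ideal.span {m} := by
    rw [← UniqueFactorizationMonoid.pow_dvd_pow_iff_dvd (n := 2) two_ne_zero, ← e2]
    exact dvd_mul_left _ _
  obtain ⟨J', hJ'⟩ := hdvd
  refine ⟨J', ?_⟩
  have : (Ideal.span {n}) ^ 2 ≠ (0 : Ideal (𝓞 M)) := pow_ne_zero _ (by simpa using hn0)
  apply mul_right_cancel₀ this
  rw [e2, hJ', mul_pow, mul_comm]

theorem norm [Algebra M L] {a : L} (h : IsIdealSquare a) : IsIdealSquare (Algebra.norm M a) := by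
  obtain ⟨h0, c, b, J, hc, hb, hJ⟩ := h
  refine ⟨Algebra.norm_ne_zero_iff.2 h0, Algebra.norm M c, Algebra.intNorm (𝓞 M) (𝓞 L) b,
    Ideal.relNorm (𝓞 M) J, Algebra.norm_ne_zero_iff.2 hc, ?_, ?_⟩
  · rw [Algebra.algebraMap_intNorm (L := L), ← map_pow, ← map_mul, hb]
  · rw [← Ideal.relNorm_singleton, hJ, map_pow]

end IsIdealSquare

open UniqueFactorizationMonoid in
open scoped Classical in
/-- If a prime `P` of `L` does not contain the different, it is unramified. -/
theorem Ideal.count_map_eq_of_notMem_different [Algebra M L] {δ : 𝓞 L}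
    (hδ : δ ∈ differentIdeal (𝓞 M) (𝓞 L))
    {P : Ideal (𝓞 L)} [P.IsPrime] (hP : P ≠ ⊥) (hδP : δ ∉ P) {v : Ideal (𝓞 M)} (hv : Irreducible v)
    [P.LiesOver v] {I : Ideal (𝓞 M)} (hI : I ≠ ⊥) :
    (normalizedFactors (I.map (algebraMap (𝓞 M) (𝓞 L)))).count P =
      (normalizedFactors I).count v := by
  have hPirr : Irreducible P := (Ideal.prime_of_isPrime hP inferInstance).irreducible
  have hvp : v.IsPrime := Ideal.isPrime_of_prime hv.prime
  have hvmax : v.IsMaximal := hvp.isMaximal hv.ne_zero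
  have hle : v.map (algebraMap (𝓞 M) (𝓞 L)) ≤ P := by
    rw [Ideal.map_le_iff_le_comap, ← Ideal.under_def, ← Ideal.over_def P v]
  have hnle : ¬ v.map (algebraMap (𝓞 M) (𝓞 L)) ≤ P ^ 2 := by
    intro h
    have := pow_sub_one_dvd_differentIdeal (𝓞 M) (p := v) P 2 hv.ne_zero (Ideal.dvd_iff_le.2 h)
    exact hδP ((Ideal.dvd_iff_le.1 (by simpa using this)) hδ)
  have hram : Ideal.ramificationIdx' v P = 1 :=
    Ideal.ramificationIdx'_spec (by simpa using hle) hnle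
  have hImap : I.map (algebraMap (𝓞 M) (𝓞 L)) ≠ ⊥ := Ideal.map_ne_bot_of_ne_bot hI
  have := Ideal.IsDedekindDomain.emultiplicity_map_eq_ramificationIdx'_mul (w := P) hI hv hPirr hP
  rw [hram, Nat.cast_one, one_mul, emultiplicity_eq_count_normalizedFactors hPirr hImap,
    emultiplicity_eq_count_normalizedFactors hv hI] at this
  simpa using this

/-- Descent of ideal squares to the base field, up to the ramified primes. -/
theorem IsIdealSquare.descend [Algebra M L] {π₁ π₂ : 𝓞 M} (h₁ : Prime π₁) (h₂ : Prime π₂)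
    {δ : 𝓞 L} (hδ : δ ∈ differentIdeal (𝓞 M) (𝓞 L))
    (hdvd : ∃ n : ℕ, δ ∣ algebraMap (𝓞 M) (𝓞 L) (π₁ * π₂) ^ n) {g : M}
    (hg : IsIdealSquare (algebraMap M L g)) :
    ∃ i₁ i₂ : ℕ, IsIdealSquare
      (g * algebraMap (𝓞 M) M π₁ ^ i₁ * algebraMap (𝓞 M) M π₂ ^ i₂) := by
  classical
  have hg0 : g ≠ 0 := by
    rintro rfl; exact hg.1 (map_zero _)
  obtain ⟨a, m, hm, rfl⟩ := IsFractionRing.div_surjective (A := 𝓞 M) g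
  have hm0 : m ≠ 0 := nonZeroDivisors.ne_zero hm
  have hm0' : algebraMap (𝓞 M) M m ≠ 0 := by simpa using hm0
  have ha0 : a ≠ 0 := by rintro rfl; simp at hg0
  set b := a * m with hb
  have hb0 : b ≠ 0 := mul_ne_zero ha0 hm0
  have eb : algebraMap (𝓞 M) M a / algebraMap (𝓞 M) M m = algebraMap (𝓞 M) M b *
      (algebraMap (𝓞 M) M m)⁻¹ ^ 2 := by
    rw [hb, map_mul]; field_simp
  have hbL : IsIdealSquare (algebraMap (𝓞 L) L (algebraMap (𝓞 M) (𝓞 L) b)) := by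
    rw [eb, map_mul, map_pow, IsIdealSquare.mul_sq_iff (by simpa using hm0)] at hg
    exact hg
  obtain ⟨J, hJ⟩ := hbL.exists_span_eq_sq
  have irr : ∀ {π : 𝓞 M}, Prime π → Irreducible (Ideal.span {π}) := fun hπ =>
    (Ideal.prime_of_isPrime (by simpa using hπ.ne_zero)
      ((Ideal.span_singleton_prime hπ.ne_zero).2 hπ)).irreducible
  have hspan : (Ideal.span {b} : Ideal (𝓞 M)) ≠ ⊥ := by simpa using hb0
  obtain ⟨i₁, i₂, J', hJ'⟩ := Ideal.exists_mul_pow_mul_pow_eq_sq hspan (irr h₁) (irr h₂) (by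
    intro v hv hv1 hv2
    have hvp : v.IsPrime := Ideal.isPrime_of_prime hv.prime
    have hvmax : v.IsMaximal := hvp.isMaximal hv.ne_zero
    obtain ⟨P, hPmax, hPv⟩ := Ideal.exists_maximal_ideal_liesOver_of_isIntegral (S := 𝓞 L) v
    have hP0 : P ≠ ⊥ := Ideal.ne_bot_of_liesOver_of_ne_bot hv.ne_zero P
    have hδP : δ ∉ P := by
      intro hmem
      obtain ⟨n, hn⟩ := hdvd
      have h3 := hPmax.isPrime.mem_of_pow_mem n (Ideal.mem_of_dvd P hn hmem)
      have h4 : π₁ * π₂ ∈ v := by rw [Ideal.over_def P v]; exact h3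
      have eqv : ∀ {π : 𝓞 M}, Prime π → π ∈ v → v = Ideal.span {π} := fun {π} hπ hmem =>
        (((Ideal.span_singleton_prime hπ.ne_zero).2 hπ).isMaximal
          (by simpa using hπ.ne_zero)).eq_of_le hvp.ne_top
          ((Ideal.span_singleton_le_iff_mem _).2 hmem) |>.symm
      rcases hvp.mem_or_mem h4 with h5 | h5
      · exact hv1 (eqv h₁ h5)
      · exact hv2 (eqv h₂ h5)
    rw [← Ideal.count_map_eq_of_notMem_different hδ hP0 hδP hv hspan, Ideal.map_span,
      Set.image_singleton, hJ, UniqueFactorizationMonoid.normalizedFactors_pow,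
      Multiset.count_nsmul]
    exact even_two_mul _)
  refine ⟨i₁, i₂, ?_⟩
  rw [eb, mul_right_comm _ (_ ^ 2), mul_right_comm _ (_ ^ 2),
    IsIdealSquare.mul_sq_iff (inv_ne_zero hm0')]
  have := IsIdealSquare.of_int (b := b * π₁ ^ i₁ * π₂ ^ i₂) (J := J') (mul_ne_zero (mul_ne_zero hb0
    (pow_ne_zero _ h₁.ne_zero)) (pow_ne_zero _ h₂.ne_zero)) (by
      rw [← hJ']; simp [← Ideal.span_singleton_mul_span_singleton, Ideal.span_singleton_pow])
  simpa using this

end NumberFields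

section ClassGroups

variable {M L : Type*} [Field M] [NumberField M] [Field L] [NumberField L]

/-- A generator of a quadratic extension gives an element of the different. -/
theorem mem_differentIdeal_of_quadratic [Algebra M L] (hfin : Module.finrank M L = 2) {x : 𝓞 L}
    {t n : 𝓞 M} (hx : x ^ 2 - algebraMap (𝓞 M) (𝓞 L) t * x + algebraMap (𝓞 M) (𝓞 L) n = 0)
    (hnm : ∀ y : M, algebraMap M L y ≠ algebraMap (𝓞 L) L x) :
    2 * x - algebraMap (𝓞 M) (𝓞 L) t ∈ differentIdeal (𝓞 M) (𝓞 L) := by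
  have hq : Algebra.IsQuadraticExtension M L :=
    { (Module.Free.of_divisionRing M L : Module.Free M L) with finrank_eq_two' := hfin }
  have h_int : IsIntegral (𝓞 M) x := Algebra.IsIntegral.isIntegral x
  set P : Polynomial (𝓞 M) := Polynomial.X ^ 2 - Polynomial.C t * Polynomial.X + Polynomial.C n
  have hPm : P.Monic := by
    have : P = Polynomial.X ^ 2 + (Polynomial.C (-t) * Polynomial.X + Polynomial.C n) := by
      simp [P]; ring
    rw [this]
    apply Polynomial.monic_X_pow_add
    exact lt_of_le_of_lt Polynomial.degree_linear_le (by norm_num)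
  have hPd : P.natDegree = 2 := by
    have : P = Polynomial.C 1 * Polynomial.X ^ 2 + Polynomial.C (-t) * Polynomial.X
      + Polynomial.C n := by simp [P]; ring
    rw [this]
    exact Polynomial.natDegree_quadratic one_ne_zero
  have hPx : Polynomial.aeval x P = 0 := by simpa [P] using hx
  have hxL : algebraMap (𝓞 L) L x ∉ (algebraMap M L).range := by
    rintro ⟨y, hy⟩; exact hnm y hy
  have hmin : minpoly (𝓞 M) x = P := by
    have hdvd : minpoly (𝓞 M) x ∣ P := (minpoly.isIntegrallyClosed_dvd_iff h_int P).1 hPx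
    refine (Polynomial.eq_of_monic_of_dvd_of_natDegree_le (minpoly.monic h_int) hPm hdvd ?_).symm
    rw [hPd]
    have h1 := minpoly.isIntegrallyClosed_eq_field_fractions M L h_int
    have h2 : (minpoly M (algebraMap (𝓞 L) L x)).natDegree ≤ (minpoly (𝓞 M) x).natDegree := by
      rw [h1]; exact Polynomial.natDegree_map_le
    refine le_trans ?_ h2
    exact (minpoly.two_le_natDegree_iff (Algebra.IsIntegral.isIntegral _)).2 hxL
  have hadj : Algebra.adjoin M {algebraMap (𝓞 L) L x} = ⊤ := by
    have hx0 : IntermediateField.adjoin M {algebraMap (𝓞 L) L x} = ⊤ := by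
      apply Field.primitive_element_iff_minpoly_natDegree_eq M _ |>.2
      apply le_antisymm
      · exact minpoly.natDegree_le _
      · rw [hfin]
        exact (minpoly.two_le_natDegree_iff (Algebra.IsIntegral.isIntegral _)).2 hxL
    rw [← IntermediateField.adjoin_simple_toSubalgebra_of_isAlgebraic
      (Algebra.IsAlgebraic.isAlgebraic (R := M) (algebraMap (𝓞 L) L x)), hx0]; simp
  have := aeval_derivative_mem_differentIdeal (𝓞 M) M L x hadj
  rw [hmin] at this
  convert this using 1
  simp only [P, Polynomial.derivative_X_pow,
    Polynomial.derivative_C_mul, Polynomial.derivative_X, Polynomial.derivative_C, map_add, map_sub,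
    map_mul, map_pow, Polynomial.aeval_C, Polynomial.aeval_X, map_one, map_zero]
  norm_num
  exact Or.inl (map_ofNat (algebraMap (𝓞 M) (𝓞 L)) 2).symm

theorem ClassGroup.mk0_eq_of_sq {I J : nonZeroDivisors (Ideal (𝓞 M))} {b b' : 𝓞 M}
    (hI : (I : Ideal (𝓞 M)) ^ 2 = Ideal.span {b}) (hJ : (J : Ideal (𝓞 M)) ^ 2 = Ideal.span {b'})
    {u : (𝓞 M)ˣ} {k : M}
    (h : algebraMap (𝓞 M) M b = algebraMap (𝓞 M) M b' * algebraMap (𝓞 M) M u * k ^ 2) :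
    mk0 I = mk0 J := by
  obtain ⟨n, m, hm, rfl⟩ := IsFractionRing.div_surjective (A := 𝓞 M) k
  have hm0 : m ≠ 0 := nonZeroDivisors.ne_zero hm
  have hm0' : algebraMap (𝓞 M) M m ≠ 0 := by simpa using hm0
  have e : b * m ^ 2 = b' * u * n ^ 2 := by
    apply RingOfIntegers.coe_injective
    simp only [map_mul, map_pow]
    rw [h]; field_simp
  have e2 : (Ideal.span {m} * I : Ideal (𝓞 M)) ^ 2 = (Ideal.span {n} * J) ^ 2 := by
    rw [mul_pow, mul_pow, hI, hJ, Ideal.span_singleton_pow, Ideal.span_singleton_pow,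
      Ideal.span_singleton_mul_span_singleton, Ideal.span_singleton_mul_span_singleton,
      mul_comm _ b, e, Ideal.span_singleton_eq_span_singleton]
    refine ⟨u⁻¹, ?_⟩
    calc b' * u * n ^ 2 * ((u⁻¹ : (𝓞 M)ˣ) : 𝓞 M) = n ^ 2 * b' * (u * ((u⁻¹ : (𝓞 M)ˣ) : 𝓞 M)) := by
          ring
      _ = _ := by simp
  have e3 : (Ideal.span {m} * I : Ideal (𝓞 M)) = Ideal.span {n} * J := by
    apply le_antisymm <;> rw [← Ideal.dvd_iff_le,
      ← UniqueFactorizationMonoid.pow_dvd_pow_iff_dvd (n := 2) two_ne_zero, e2]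
  have hn0 : n ≠ 0 := by
    rintro rfl
    have h0 : (I : Ideal (𝓞 M)) ≠ 0 := nonZeroDivisors.ne_zero I.2
    simp [hm0] at e3
    exact h0 e3
  exact mk0_eq_mk0_iff.2 ⟨m, n, hm0, hn0, e3⟩

theorem ClassGroup.exists_sq_eq_span {c : ClassGroup (𝓞 M)} (hc : c ^ 2 = 1) :
    ∃ (I : nonZeroDivisors (Ideal (𝓞 M))) (b : 𝓞 M), c = mk0 I ∧
      (I : Ideal (𝓞 M)) ^ 2 = Ideal.span {b} ∧ IsIdealSquare (algebraMap (𝓞 M) M b) := by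
  obtain ⟨I, rfl⟩ := mk0_surjective c
  have hc' : mk0 ⟨(I : Ideal (𝓞 M)) ^ 2, pow_mem I.2 2⟩ = 1 := by
    rw [← hc, ← map_pow]; congr 1
  obtain ⟨b, hb'⟩ := (mk0_eq_one_iff _).1 hc'
  have hb' : (I : Ideal (𝓞 M)) ^ 2 = Ideal.span {b} := hb'
  refine ⟨I, b, rfl, hb', IsIdealSquare.of_int ?_ hb'.symm⟩
  rintro rfl
  exact pow_ne_zero 2 (nonZeroDivisors.ne_zero I.2) (by simpa using hb')

theorem ClassGroup.eq_one_of_sq_eq_one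
    (H : ∀ a : M, IsIdealSquare a → ∃ (u : (𝓞 M)ˣ) (k : M), a = algebraMap (𝓞 M) M u * k ^ 2)
    (c : ClassGroup (𝓞 M)) (hc : c ^ 2 = 1) : c = 1 := by
  obtain ⟨I, b, rfl, hI, hb⟩ := exists_sq_eq_span hc
  obtain ⟨u, k, h⟩ := H _ hb
  rw [← map_one mk0]
  exact mk0_eq_of_sq (b' := 1) (u := u) (k := k) hI (by simp [Ideal.one_eq_top])
    (by simpa using h)

theorem ClassGroup.eq_one_of_sq_pow_eq_one
    (H : ∀ a : M, IsIdealSquare a → ∃ (u : (𝓞 M)ˣ) (k : M), a = algebraMap (𝓞 M) M u * k ^ 2)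
    (n : ℕ) : ∀ c : ClassGroup (𝓞 M), c ^ 2 ^ n = 1 → c = 1 := by
  induction n with
  | zero => simp
  | succ n ih =>
    intro c hc
    apply eq_one_of_sq_eq_one H
    apply ih
    rwa [← pow_mul, ← pow_succ']

theorem ClassGroup.eq_of_sq_eq_one {x₀ : M}
    (H : ∀ a : M, IsIdealSquare a → ∃ (u : (𝓞 M)ˣ) (k : M),
      a = algebraMap (𝓞 M) M u * k ^ 2 ∨ a = x₀ * algebraMap (𝓞 M) M u * k ^ 2)
    (a b : ClassGroup (𝓞 M)) (ha : a ^ 2 = 1) (hb : b ^ 2 = 1) (ha1 : a ≠ 1) (hb1 : b ≠ 1) :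
    a = b := by
  obtain ⟨I, x, rfl, hI, hx⟩ := exists_sq_eq_span ha
  obtain ⟨J, y, rfl, hJ, hy⟩ := exists_sq_eq_span hb
  have one : ∀ (I : nonZeroDivisors (Ideal (𝓞 M))) (b : 𝓞 M),
      (I : Ideal (𝓞 M)) ^ 2 = Ideal.span {b} → ∀ (u : (𝓞 M)ˣ) (k : M),
      algebraMap (𝓞 M) M b = algebraMap (𝓞 M) M u * k ^ 2 →
      mk0 I = 1 := fun I b hI u k h => by
    rw [← map_one mk0]
    exact mk0_eq_of_sq (b' := 1) (u := u) (k := k) hI (by simp [Ideal.one_eq_top])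
      (by simpa using h)
  obtain ⟨u, k, h | h⟩ := H _ hx
  · exact absurd (one I x hI u k h) ha1
  obtain ⟨u', k', h' | h'⟩ := H _ hy
  · exact absurd (one J y hJ u' k' h') hb1
  refine mk0_eq_of_sq (u := u * u'⁻¹) (k := k / k') hI hJ ?_
  have hk' : k' ≠ 0 := by
    rintro rfl
    exact hy.1 (by rw [h']; simp)
  have hu' : algebraMap (𝓞 M) M u' * algebraMap (𝓞 M) M ((u'⁻¹ : (𝓞 M)ˣ) : 𝓞 M) = 1 := by
    rw [← map_mul]; simp
  rw [h, h', Units.val_mul, map_mul]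
  field_simp
  linear_combination -x₀ * k ^ 2 * hu'

theorem Ideal.relNorm_mem_nonZeroDivisors [Algebra M L] (I : nonZeroDivisors (Ideal (𝓞 L))) :
    Ideal.relNorm (𝓞 M) (I : Ideal (𝓞 L)) ∈ nonZeroDivisors (Ideal (𝓞 M)) :=
  mem_nonZeroDivisors_of_ne_zero fun h =>
    nonZeroDivisors.ne_zero I.2 (Ideal.relNorm_eq_bot_iff.1 h)

variable (M L) in
/-- The norm map on ideals, restricted to nonzero ideals. -/
def Ideal.relNormHom [Algebra M L] :
    nonZeroDivisors (Ideal (𝓞 L)) →* nonZeroDivisors (Ideal (𝓞 M)) where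
  toFun I := ⟨Ideal.relNorm (𝓞 M) (I : Ideal (𝓞 L)), Ideal.relNorm_mem_nonZeroDivisors I⟩
  map_one' := by ext1; simp
  map_mul' I J := by ext1; simp

theorem ClassGroup.mk0_relNormHom_congr [Algebra M L] {I J : nonZeroDivisors (Ideal (𝓞 L))}
    (h : mk0 I = mk0 J) : mk0 (Ideal.relNormHom M L I) = mk0 (Ideal.relNormHom M L J) := by
  obtain ⟨x, y, hx, hy, e⟩ := mk0_eq_mk0_iff.1 h
  refine mk0_eq_mk0_iff.2 ⟨Algebra.intNorm (𝓞 M) (𝓞 L) x, Algebra.intNorm (𝓞 M) (𝓞 L) y,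
    Algebra.intNorm_ne_zero.2 hx, Algebra.intNorm_ne_zero.2 hy, ?_⟩
  simp only [Ideal.relNormHom, MonoidHom.coe_mk, OneHom.coe_mk, ← Ideal.relNorm_singleton]
  rw [← map_mul, ← map_mul, e]

variable (M L) in
/-- The norm map on class groups. -/
def ClassGroup.norm [Algebra M L] : ClassGroup (𝓞 L) →* ClassGroup (𝓞 M) :=
  MonoidHom.mk' (fun c => mk0 (Ideal.relNormHom M L (mk0_surjective c).choose)) fun a b => by
    rw [← map_mul, ← map_mul]
    apply mk0_relNormHom_congr
    rw [map_mul, (mk0_surjective a).choose_spec, (mk0_surjective b).choose_spec,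
      (mk0_surjective (a * b)).choose_spec]

theorem ClassGroup.norm_mk0 [Algebra M L] (I : nonZeroDivisors (Ideal (𝓞 L))) :
    norm M L (mk0 I) = mk0 (Ideal.relNormHom M L I) :=
  mk0_relNormHom_congr (mk0_surjective (mk0 I)).choose_spec

theorem RingOfIntegers.finrank_eq [Algebra M L] :
    Module.finrank (𝓞 M) (𝓞 L) = Module.finrank M L :=
  (IsFractionRing.finrank_eq (𝓞 M) M (𝓞 L) L).symm

theorem ClassGroup.norm_extendedHom [Algebra M L] (hfin : Module.finrank M L = 2)
    (c : ClassGroup (𝓞 M)) : norm M L (extendedHom (𝓞 M) (𝓞 L) c) = c ^ 2 := by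
  obtain ⟨I, rfl⟩ := mk0_surjective c
  rw [extendedHom_mk0, norm_mk0, ← map_pow]
  congr 1
  ext1
  change Ideal.relNorm (𝓞 M) (Ideal.map (algebraMap (𝓞 M) (𝓞 L)) (I : Ideal (𝓞 M))) =
    (I : Ideal (𝓞 M)) ^ 2
  rw [Ideal.relNorm_algebraMap, RingOfIntegers.finrank_eq, hfin]

theorem Ideal.map_relNorm_eq_mul_conj [Algebra M L] {θ : L} {d : M} (h : IsQuadExt θ d)
    (I : Ideal (𝓞 L)) :
    (Ideal.relNorm (𝓞 M) I).map (algebraMap (𝓞 M) (𝓞 L)) =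
      I * I.map (RingOfIntegers.mapAlgEquiv h.conj) := by
  by_cases hI : I = ⊥
  · simp [hI]
  have hle : (Ideal.relNorm (𝓞 M) I).map (algebraMap (𝓞 M) (𝓞 L)) ≤
      I * I.map (RingOfIntegers.mapAlgEquiv h.conj) := by
    rw [Ideal.relNorm_apply, Ideal.map_span, Ideal.span_le]
    rintro _ ⟨_, ⟨x, hx, rfl⟩, rfl⟩
    have : algebraMap (𝓞 M) (𝓞 L) (Algebra.intNorm (𝓞 M) (𝓞 L) x) =
        x * RingOfIntegers.mapAlgEquiv h.conj x := by
      apply RingOfIntegers.coe_injective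
      rw [map_mul, ← IsScalarTower.algebraMap_apply (𝓞 M) (𝓞 L) L,
        IsScalarTower.algebraMap_apply (𝓞 M) M L, Algebra.algebraMap_intNorm (L := L),
        h.norm_eq_mul_conj]
      rfl
    rw [this]
    exact Ideal.mul_mem_mul hx (Ideal.mem_map_of_mem _ hx)
  obtain ⟨J, hJ⟩ := Ideal.dvd_iff_le.2 hle
  have h1 : Ideal.absNorm (I.map (RingOfIntegers.mapAlgEquiv h.conj)) = Ideal.absNorm I := by
    rw [← Ideal.absNorm_relNorm (𝓞 M), Ideal.relNorm_map_algEquiv, Ideal.absNorm_relNorm]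
  have h2 := congrArg Ideal.absNorm hJ
  rw [Ideal.absNorm_algebraMap, Ideal.absNorm_relNorm, RingOfIntegers.finrank_eq,
    h.finrank_eq_two, map_mul, map_mul, h1, ← pow_two] at h2
  have h3 : Ideal.absNorm I ≠ 0 := fun h0 => hI (Ideal.absNorm_eq_zero_iff.1 h0)
  have h4 : Ideal.absNorm J = 1 := by
    have h5 : Ideal.absNorm I ^ 2 * 1 = Ideal.absNorm I ^ 2 * Ideal.absNorm J := by
      rw [mul_one]; exact h2
    exact (mul_left_cancel₀ (pow_ne_zero 2 h3) h5).symm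
  rw [hJ, Ideal.absNorm_eq_one_iff.1 h4, Ideal.mul_top]

end ClassGroups

/-- Equality of nonzero elements up to nonzero squares. -/
def SqRel {M : Type*} [Field M] (a b : M) : Prop := ∃ k, k ≠ 0 ∧ a = b * k ^ 2

namespace SqRel

variable {M : Type*} [Field M]

theorem refl (a : M) : SqRel a a := ⟨1, one_ne_zero, by simp⟩

theorem symm {a b : M} : SqRel a b → SqRel b a := by
  rintro ⟨k, hk, rfl⟩
  exact ⟨k⁻¹, inv_ne_zero hk, by field_simp⟩

theorem trans {a b c : M} : SqRel a b → SqRel b c → SqRel a c := by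
  rintro ⟨k, hk, rfl⟩ ⟨l, hl, rfl⟩
  exact ⟨l * k, mul_ne_zero hl hk, by ring⟩

theorem mul {a b c d : M} : SqRel a b → SqRel c d → SqRel (a * c) (b * d) := by
  rintro ⟨k, hk, rfl⟩ ⟨l, hl, rfl⟩
  exact ⟨k * l, mul_ne_zero hk hl, by ring⟩

theorem pow {a b : M} (h : SqRel a b) (n : ℕ) : SqRel (a ^ n) (b ^ n) := by
  obtain ⟨k, hk, rfl⟩ := h
  exact ⟨k ^ n, pow_ne_zero n hk, by ring⟩

theorem sq {a : M} (ha : a ≠ 0) : SqRel (a ^ 2) 1 := ⟨a, ha, by ring⟩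

theorem mul_self {a : M} (ha : a ≠ 0) : SqRel (a * a) 1 := ⟨a, ha, by ring⟩

theorem pow_even {a : M} (ha : a ≠ 0) {n : ℕ} (hn : Even n) : SqRel (a ^ n) 1 := by
  obtain ⟨m, rfl⟩ := hn
  exact ⟨a ^ m, pow_ne_zero m ha, by ring⟩

theorem pow_odd {a : M} (ha : a ≠ 0) {n : ℕ} (hn : Odd n) : SqRel (a ^ n) a := by
  obtain ⟨m, rfl⟩ := hn
  exact ⟨a ^ m, pow_ne_zero m ha, by ring⟩

theorem map {E : Type*} [Field E] (φ : M →+* E) {a b : M} (h : SqRel a b) :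
    SqRel (φ a) (φ b) := by
  obtain ⟨k, hk, rfl⟩ := h
  exact ⟨φ k, by simpa using hk, by simp⟩

theorem pos_iff {a b : ℝ} (h : SqRel a b) : 0 < a ↔ 0 < b := by
  obtain ⟨k, hk, rfl⟩ := h
  exact mul_pos_iff_of_pos_right (by positivity)

/-- If `b * u` is known up to squares and `u ^ 2 ≈ 1`, then so is `b`. -/
theorem of_mul_right {a b u : M} (hu : u ≠ 0) (h : SqRel (a * u) b) : SqRel a (b * u) := by
  have := h.mul (refl u)
  rw [mul_assoc] at this
  exact (((refl a).mul (mul_self hu)).trans (by rw [mul_one]; exact refl a)).symm.trans this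

end SqRel

theorem IsQuadExt.exists_sqRel_of_norm_aux {M L : Type*} [Field M] [NumberField M] [Field L]
    [NumberField L] [Algebra M L] {θ : L} {d : M} (h : IsQuadExt θ d)
    {π₁ π₂ : 𝓞 M} (h₁ : Prime π₁) (h₂ : Prime π₂)
    {δ : 𝓞 L} (hδ : δ ∈ differentIdeal (𝓞 M) (𝓞 L))
    (hdvd : ∃ n : ℕ, δ ∣ algebraMap (𝓞 M) (𝓞 L) (π₁ * π₂) ^ n) {a : L}
    (ha : IsIdealSquare a) (hN : SqRel (Algebra.norm M a) 1) :
    ∃ (g : M) (i₁ i₂ : ℕ), IsIdealSquare g ∧ SqRel a (algebraMap M L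
      (g * algebraMap (𝓞 M) M π₁ ^ i₁ * algebraMap (𝓞 M) M π₂ ^ i₂)) := by
  obtain ⟨f, hf0, hf⟩ := hN
  rw [one_mul] at hf
  obtain ⟨g, k, hg, hk, rfl⟩ := h.exists_mul_sq_of_norm_eq_sq ha.1 hf
  obtain ⟨i₁, i₂, hi⟩ := IsIdealSquare.descend h₁ h₂ hδ hdvd ((IsIdealSquare.mul_sq_iff hk).1 ha)
  refine ⟨_, i₁, i₂, hi, ?_⟩
  have h0 : algebraMap (𝓞 M) M π₁ ^ i₁ * algebraMap (𝓞 M) M π₂ ^ i₂ ≠ 0 :=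
    mul_ne_zero (pow_ne_zero _ (by simpa using h₁.ne_zero))
      (pow_ne_zero _ (by simpa using h₂.ne_zero))
  have e : SqRel (g * algebraMap (𝓞 M) M π₁ ^ i₁ * algebraMap (𝓞 M) M π₂ ^ i₂ *
      algebraMap (𝓞 M) M π₁ ^ i₁ * algebraMap (𝓞 M) M π₂ ^ i₂) g := ⟨_, h0, by ring⟩
  exact SqRel.trans ⟨k, hk, rfl⟩ (e.map (algebraMap M L)).symm

theorem IsQuadExt.exists_sqRel_of_norm {M L : Type*} [Field M] [NumberField M] [Field L]
    [NumberField L] [Algebra M L] {θ : L} {d : 𝓞 M} (h : IsQuadExt θ (algebraMap (𝓞 M) M d))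
    {π₁ π₂ : 𝓞 M} (h₁ : Prime π₁) (h₂ : Prime π₂)
    (hdvd : ∃ n : ℕ, 2 * d ∣ (π₁ * π₂) ^ n) {a : L}
    (ha : IsIdealSquare a) (hN : SqRel (Algebra.norm M a) 1) :
    ∃ (g : M) (i₁ i₂ : ℕ), IsIdealSquare g ∧ SqRel a (algebraMap M L
      (g * algebraMap (𝓞 M) M π₁ ^ i₁ * algebraMap (𝓞 M) M π₂ ^ i₂)) := by
  have h_int : IsIntegral (𝓞 M) θ := by
    refine ⟨Polynomial.X ^ 2 - Polynomial.C d, Polynomial.monic_X_pow_sub_C _ two_ne_zero, ?_⟩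
    simp [h.sq, ← IsScalarTower.algebraMap_apply]
  obtain ⟨θ', hθ'⟩ : ∃ θ' : 𝓞 L, algebraMap (𝓞 L) L θ' = θ :=
    ⟨⟨θ, isIntegral_trans (R := ℤ) (A := 𝓞 M) θ h_int⟩, rfl⟩
  have hsq : θ' ^ 2 = algebraMap (𝓞 M) (𝓞 L) d := by
    apply RingOfIntegers.coe_injective
    rw [map_pow, hθ', h.sq, ← IsScalarTower.algebraMap_apply, ← IsScalarTower.algebraMap_apply]
  have hδ := mem_differentIdeal_of_quadratic h.finrank_eq_two (x := θ') (t := 0) (n := -d)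
    (by simp [hsq]) (fun y => by rw [hθ']; exact h.notMem y)
  refine h.exists_sqRel_of_norm_aux h₁ h₂ hδ ?_ ha hN
  obtain ⟨n, e, he⟩ := hdvd
  refine ⟨n, θ' * algebraMap (𝓞 M) (𝓞 L) e, ?_⟩
  rw [← map_pow, he]
  simp only [map_mul, ← hsq, map_ofNat, map_zero]
  ring

theorem Rat.exists_sqRel_of_isIdealSquare {a : ℚ} (ha : IsIdealSquare a) :
    ∃ i : ℕ, SqRel a ((-1) ^ i) := by
  obtain ⟨h0, c, b, J, hc, hb, hJ⟩ := ha
  have := IsPrincipalIdealRing.of_surjective Rat.ringOfIntegersEquiv.symm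
    Rat.ringOfIntegersEquiv.symm.surjective
  obtain ⟨j, rfl⟩ := (Submodule.isPrincipal_iff _).1 (IsPrincipalIdealRing.principal J)
  rw [Ideal.submodule_span_eq, Ideal.span_singleton_pow,
    Ideal.span_singleton_eq_span_singleton] at hJ
  obtain ⟨u, hu⟩ := hJ.symm
  have hj0 : algebraMap (𝓞 ℚ) ℚ j ≠ 0 := by
    intro h
    rw [← hu, map_mul, map_pow, h] at hb
    simp [h0, hc] at hb
  have hu' : algebraMap (𝓞 ℚ) ℚ u = 1 ∨ algebraMap (𝓞 ℚ) ℚ u = -1 := by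
    have h1 := Int.isUnit_iff.1 (u.isUnit.map Rat.ringOfIntegersEquiv)
    rw [← Rat.ringOfIntegersEquiv_apply_coe]
    rcases h1 with h1 | h1 <;> simp [h1]
  have hs : SqRel a (algebraMap (𝓞 ℚ) ℚ u) := by
    have e1 : SqRel (a * c ^ 2) a := ⟨c, hc, rfl⟩
    refine e1.symm.trans ⟨_, hj0, ?_⟩
    rw [hb, ← hu, map_mul, map_pow, mul_comm]
  rcases hu' with h | h
  · exact ⟨0, by rwa [h] at hs⟩
  · exact ⟨1, by rw [h] at hs; simpa using hs⟩

section RealQuadratic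

variable {B : Type*} [Field B] [NumberField B] {p : ℕ} [Fact p.Prime] {sp : B}

theorem IsQuadExt.exists_coord_half (hB : IsQuadExt sp (p : ℚ)) (x : 𝓞 B) :
    ∃ m n : ℤ, 2 * algebraMap (𝓞 B) B x = m + n * sp ∧
      m ^ 2 - p * n ^ 2 = 4 * Algebra.norm ℤ x := by
  have hp : p.Prime := Fact.out
  obtain ⟨X, Y, hXY⟩ := hB.span (algebraMap (𝓞 B) B x)
  have hN : X ^ 2 - p * Y ^ 2 = (Algebra.norm ℤ x : ℤ) := by
    rw [Algebra.coe_norm_int]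
    change _ = Algebra.norm ℚ (algebraMap (𝓞 B) B x)
    rw [hXY, hB.norm_coord]
  have h_int : ∀ z : B, IsIntegral ℤ z → ∀ r : ℚ, algebraMap ℚ B r = z → ∃ m : ℤ, (m : ℚ) = r := by
    intro z hz r hr
    rw [← hr, isIntegral_algebraMap_iff (algebraMap ℚ B).injective] at hz
    exact IsIntegrallyClosed.isIntegral_iff.1 hz
  have hx : IsIntegral ℤ (algebraMap (𝓞 B) B x) := x.2
  have hcx : IsIntegral ℤ (hB.conj (algebraMap (𝓞 B) B x)) := hx.map hB.conj
  obtain ⟨m, hm⟩ := h_int _ (hx.add hcx) (2 * X) (by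
    rw [hXY, hB.conj_coord, map_mul, map_ofNat]; ring)
  obtain ⟨t, ht⟩ : ∃ t : ℤ, (t : ℚ) = 2 * p * Y := by
    have : IsIntegral ℤ ((2 * p * Y : ℚ)) := by
      apply IsIntegral.of_pow (n := 2) two_pos
      have : (2 * p * Y : ℚ) ^ 2 = ((p * (m ^ 2 - 4 * Algebra.norm ℤ x) : ℤ) : ℚ) := by
        push_cast; rw [hm, ← hN]; ring
      rw [this]
      exact isIntegral_algebraMap
    exact IsIntegrallyClosed.isIntegral_iff.1 this
  have ht2 : t ^ 2 = p * (m ^ 2 - 4 * Algebra.norm ℤ x) := by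
    have : ((t ^ 2 : ℤ) : ℚ) = ((p * (m ^ 2 - 4 * Algebra.norm ℤ x) : ℤ) : ℚ) := by
      push_cast; rw [ht, hm, ← hN]; ring
    exact_mod_cast this
  obtain ⟨n, rfl⟩ := (Nat.prime_iff_prime_int.1 hp).dvd_of_dvd_pow (Dvd.intro _ ht2.symm)
  have hp0 : (p : ℤ) ≠ 0 := by exact_mod_cast hp.ne_zero
  have hn : (n : ℚ) = 2 * Y := by
    have hp0' : (p : ℚ) ≠ 0 := by exact_mod_cast hp.ne_zero
    apply mul_left_cancel₀ hp0'
    push_cast at ht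
    linear_combination ht
  refine ⟨m, n, ?_, ?_⟩
  · have h1 : ((m : ℤ) : B) = algebraMap ℚ B (2 * X) := by rw [← hm]; simp
    have h2 : ((n : ℤ) : B) = algebraMap ℚ B (2 * Y) := by rw [← hn]; simp
    rw [hXY, h1, h2]
    simp only [map_mul, map_ofNat]; ring
  · apply mul_left_cancel₀ hp0
    linear_combination -ht2

omit [NumberField B] [Fact p.Prime] in
theorem IsQuadExt.exists_of_coord_half [CharZero B] (hB : IsQuadExt sp (p : ℚ)) (hp : p % 4 = 1)
    {m n : ℤ} (h : Even (m - n)) : ∃ x : 𝓞 B, 2 * algebraMap (𝓞 B) B x = m + n * sp := by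
  obtain ⟨k, hk⟩ := h
  have hsp : sp ^ 2 = (p : B) := by rw [hB.sq]; simp
  obtain ⟨c, hc⟩ : ∃ c : ℕ, p = 4 * c + 1 := ⟨p / 4, by omega⟩
  have h2 : (2 : B) ≠ 0 := two_ne_zero
  have h_int : IsIntegral ℤ ((1 + sp) / 2) := by
    refine ⟨Polynomial.X ^ 2 - Polynomial.X - Polynomial.C (c : ℤ), ?_, ?_⟩
    · have : (Polynomial.X ^ 2 - Polynomial.X - Polynomial.C (c : ℤ)) =
        Polynomial.X ^ 2 + (Polynomial.C (-1) * Polynomial.X + Polynomial.C (-(c : ℤ))) := by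
        simp; ring
      rw [this]
      apply Polynomial.monic_X_pow_add
      exact lt_of_le_of_lt Polynomial.degree_linear_le (by norm_num)
    · simp only [Polynomial.eval₂_sub, Polynomial.eval₂_pow, Polynomial.eval₂_X,
        Polynomial.eval₂_C]
      rw [hc] at hsp
      push_cast at hsp
      field_simp
      simp only [algebraMap_int_eq, eq_intCast, Int.cast_natCast]
      linear_combination hsp
  obtain ⟨y, hy⟩ : ∃ y : 𝓞 B, algebraMap (𝓞 B) B y = (1 + sp) / 2 := ⟨⟨_, h_int⟩, rfl⟩
  refine ⟨k + n * y, ?_⟩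
  have hk' : (m : B) - n = k + k := by exact_mod_cast congrArg (Int.cast : ℤ → B) hk
  simp only [map_add, map_mul, map_intCast, hy]
  field_simp
  linear_combination -hk'

theorem IsQuadExt.natCast_prime (hB : IsQuadExt sp (p : ℚ)) (hp : p % 8 = 5) {r : ℕ}
    [Fact r.Prime] (hr : r = 2 ∨ legendreSym r p = -1) : Prime (r : 𝓞 B) := by
  have hrp : r.Prime := Fact.out
  have hri : Prime (r : ℤ) := Nat.prime_iff_prime_int.1 hrp
  have hr0 : (r : 𝓞 B) ≠ 0 := by exact_mod_cast hrp.ne_zero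
  have key : ∀ x : 𝓞 B, (r : ℤ) ∣ Algebra.norm ℤ x → (r : 𝓞 B) ∣ x := by
    rintro x ⟨c, hc⟩
    obtain ⟨m, n, hmn, hN⟩ := hB.exists_coord_half x
    have fin : ∀ m' n' : ℤ, m = r * m' → n = r * n' → Even (m' - n') → (r : 𝓞 B) ∣ x := by
      rintro m' n' rfl rfl he
      obtain ⟨y, hy⟩ := hB.exists_of_coord_half (by omega) he
      refine ⟨y, ?_⟩
      apply RingOfIntegers.coe_injective
      apply mul_left_cancel₀ (two_ne_zero (α := B))
      rw [hmn, map_mul, mul_left_comm, hy]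
      push_cast; ring
    rw [hc] at hN
    rcases hr with rfl | hr
    · obtain ⟨c', hc'⟩ : ∃ c' : ℤ, (p : ℤ) = 8 * c' + 5 := ⟨p / 8, by omega⟩
      rw [hc'] at hN
      push_cast at hN
      have hpar : Even m ∧ Even n := by
        rcases Int.even_or_odd m with hm | hm <;> rcases Int.even_or_odd n with hn | hn
        · exact ⟨hm, hn⟩
        · exfalso
          obtain ⟨a, rfl⟩ := hm
          have h1 := Int.odd_sq_mod_eight hn
          have h2 : (a + a) ^ 2 - (8 * c' + 5) * n ^ 2 =
            4 * a ^ 2 - 8 * (c' * n ^ 2) - 5 * n ^ 2 := by ring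
          omega
        · exfalso
          obtain ⟨a, rfl⟩ := hn
          have h1 := Int.odd_sq_mod_eight hm
          have h2 : m ^ 2 - (8 * c' + 5) * (a + a) ^ 2 =
            m ^ 2 - 8 * (c' * (a + a) ^ 2) - 20 * a ^ 2 := by ring
          omega
        · exfalso
          have h1 := Int.odd_sq_mod_eight hm
          have h3 := Int.odd_sq_mod_eight hn
          have h2 : m ^ 2 - (8 * c' + 5) * n ^ 2 =
            m ^ 2 - 8 * (c' * n ^ 2) - 5 * n ^ 2 := by ring
          omega
      obtain ⟨⟨a, rfl⟩, ⟨b, rfl⟩⟩ := hpar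
      refine fin a b (by push_cast; ring) (by push_cast; ring) ?_
      have h1 : a ^ 2 - b ^ 2 = 2 * (c + 4 * c' * b ^ 2 + 2 * b ^ 2) := by linarith
      have h2 : Even (a ^ 2 - b ^ 2) := ⟨c + 4 * c' * b ^ 2 + 2 * b ^ 2, by rw [h1]; ring⟩
      rwa [Int.even_sub, Int.even_pow' two_ne_zero, Int.even_pow' two_ne_zero,
        ← Int.even_sub] at h2
    · have hr2 : r ≠ 2 := by
        rintro rfl
        have h1 : legendreSym 2 (p : ℤ) = 1 := by
          have := legendreSym.mod 2 (p : ℤ)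
          rw [this, show ((p : ℤ) % ((2 : ℕ) : ℤ)) = 1 by push_cast; omega, legendreSym.at_one]
        rw [h1] at hr; omega
      obtain ⟨⟨m', hm⟩, ⟨n', hn⟩⟩ := legendreSym.prime_dvd_of_eq_neg_one hr (x := m) (y := n)
        ⟨4 * c, by linear_combination hN⟩
      refine fin m' n' hm hn ?_
      have hro : Odd (r : ℤ) := by exact_mod_cast hrp.odd_of_ne_two hr2
      have h1 : Even (m ^ 2 - p * n ^ 2) := by rw [hN]; exact ⟨2 * (r * c), by ring⟩
      have hpo : ¬ Even (p : ℤ) := by rw [Int.not_even_iff]; omega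
      have h2 : Even (m - n) := by
        rw [Int.even_sub, Int.even_pow' two_ne_zero, Int.even_mul, Int.even_pow' two_ne_zero] at h1
        rw [Int.even_sub, h1]; tauto
      rw [hm, hn, ← mul_sub, Int.even_mul] at h2
      exact h2.resolve_left (Int.not_even_iff_odd.2 hro)
  have h2 : Algebra.norm ℤ (r : 𝓞 B) = (r : ℤ) ^ 2 := by
    have := Algebra.norm_algebraMap_of_basis (RingOfIntegers.basis B) (r : ℤ)
    rw [map_natCast] at this
    rw [this, ← Module.finrank_eq_card_basis (RingOfIntegers.basis B), RingOfIntegers.rank,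
      hB.finrank_eq_two]
  refine ⟨hr0, ?_, ?_⟩
  · intro hu
    have h1 := hu.map (Algebra.norm ℤ (S := 𝓞 B))
    rw [h2] at h1
    exact hri.not_isUnit ((isUnit_pow_iff two_ne_zero).1 h1)
  · rintro x y ⟨z, hz⟩
    have h1 := congrArg (Algebra.norm ℤ) hz
    rw [map_mul, map_mul, h2] at h1
    have h3 : (r : ℤ) ∣ Algebra.norm ℤ x * Algebra.norm ℤ y :=
      ⟨r * Algebra.norm ℤ z, by rw [h1]; ring⟩
    exact (hri.dvd_or_dvd h3).imp (key x) (key y)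

end RealQuadratic

section RealQuadratic

variable {B : Type*} [Field B] [NumberField B] {p : ℕ} [Fact p.Prime] {sp : B}

omit [Fact p.Prime] in
theorem IsQuadExt.exists_ringHom_real (hB : IsQuadExt sp (p : ℚ)) : Nonempty (B →+* ℝ) := by
  obtain ⟨ψ, -⟩ := hB.exists_lift (algebraMap ℚ ℝ) (Real.sqrt p)
    (by rw [Real.sq_sqrt (Nat.cast_nonneg p)]; simp)
  exact ⟨ψ⟩

omit [Fact p.Prime] in
theorem IsQuadExt.exists_unit (hB : IsQuadExt sp (p : ℚ)) (h : ∃ a b : ℤ, a ^ 2 - p * b ^ 2 = -1) :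
    ∃ ε : (𝓞 B)ˣ, Algebra.norm ℚ (algebraMap (𝓞 B) B ε) = -1 := by
  obtain ⟨a, b, hab⟩ := h
  obtain ⟨s, hs⟩ : ∃ s : 𝓞 B, algebraMap (𝓞 B) B s = sp := by
    refine ⟨⟨sp, ?_⟩, rfl⟩
    apply IsIntegral.of_pow (n := 2) two_pos
    rw [hB.sq, map_natCast]
    simpa using isIntegral_algebraMap (R := ℤ) (A := B) (x := (p : ℤ))
  have hs2 : s ^ 2 = p := by
    apply RingOfIntegers.coe_injective
    rw [map_pow, hs, hB.sq]; simp
  have habs : (a ^ 2 - p * b ^ 2 : 𝓞 B) = -1 := by exact_mod_cast congrArg (Int.cast : ℤ → 𝓞 B) hab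
  have hmul : (a + b * s) * (-(a - b * s)) = 1 := by
    linear_combination -habs + b ^ 2 * hs2
  refine ⟨⟨a + b * s, -(a - b * s), hmul, by rw [mul_comm]; exact hmul⟩, ?_⟩
  have h1 : algebraMap (𝓞 B) B (a + b * s) = algebraMap ℚ B a + algebraMap ℚ B b * sp := by
    simp [hs]
  rw [h1, hB.norm_coord]
  exact_mod_cast congrArg (Int.cast : ℤ → ℚ) hab

variable {ε : (𝓞 B)ˣ}

/-- Ideal squares in a real quadratic field with a unit of norm `-1` are units up to squares. -/
theorem IsQuadExt.exists_sqRel_unit (hB : IsQuadExt sp (p : ℚ)) (hp : p % 4 = 1)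
    (hε : Algebra.norm ℚ (algebraMap (𝓞 B) B ε) = -1) {a : B} (ha : IsIdealSquare a) :
    ∃ i j : ℕ, SqRel a ((-1) ^ i * algebraMap (𝓞 B) B ε ^ j) := by
  have hpp : p.Prime := Fact.out
  have hprime : Prime (p : 𝓞 ℚ) := by
    have h1 : Prime (p : ℤ) := Nat.prime_iff_prime_int.1 hpp
    have := (MulEquiv.prime_iff (p := (p : ℤ)) Rat.ringOfIntegersEquiv.symm).2 h1
    simpa using this
  obtain ⟨x, hx⟩ := hB.exists_of_coord_half hp (m := 1) (n := 1) (by simp)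
  obtain ⟨c, hc⟩ : ∃ c : ℕ, p = 4 * c + 1 := ⟨p / 4, by omega⟩
  have hsp : sp ^ 2 = (p : B) := by rw [hB.sq]; simp
  have hsp0 := hB.ne_zero
  have hδ := mem_differentIdeal_of_quadratic (M := ℚ) hB.finrank_eq_two (x := x) (t := 1)
    (n := -(c : 𝓞 ℚ)) (by
      apply RingOfIntegers.coe_injective
      apply mul_left_cancel₀ (show (4 : B) ≠ 0 by norm_num)
      rw [hc] at hsp
      push_cast at hsp hx ⊢
      change 4 * (algebraMap (𝓞 B) B x ^ 2 - 1 * algebraMap (𝓞 B) B x + -(c : B)) = 4 * 0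
      linear_combination hsp + (2 * algebraMap (𝓞 B) B x + 1 + sp - 2) * hx) (by
      intro y hy
      apply hB.notMem (2 * y - 1)
      rw [map_sub, map_mul, hy]
      push_cast at hx
      simp only [map_ofNat, map_one]
      linear_combination hx)
  have hstep : ∀ a : B, IsIdealSquare a → SqRel (Algebra.norm ℚ a) 1 →
      ∃ i : ℕ, SqRel a ((-1) ^ i) := by
    intro a ha hN
    obtain ⟨g, i₁, i₂, hg, hr⟩ := hB.exists_sqRel_of_norm_aux hprime hprime hδ ⟨1, by
      refine ⟨(2 * x - 1) * p, ?_⟩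
      apply RingOfIntegers.coe_injective
      simp only [map_mul, map_natCast, map_sub, map_ofNat, map_one, pow_one, hx]
      push_cast
      linear_combination -(p : B) * hsp⟩ ha hN
    obtain ⟨i, hi⟩ := Rat.exists_sqRel_of_isIdealSquare hg
    refine ⟨i, hr.trans ?_⟩
    have hps : ∀ i : ℕ, SqRel ((p : B) ^ i) 1 := fun i => by
      rw [← hsp, ← pow_mul, mul_comm, pow_mul]
      exact SqRel.sq (pow_ne_zero i hsp0)
    have := ((hi.map (algebraMap ℚ B)).mul (hps i₁)).mul (hps i₂)
    simpa using this
  obtain ⟨i, hi⟩ := Rat.exists_sqRel_of_isIdealSquare (ha.norm (M := ℚ))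
  have hε0 : algebraMap (𝓞 B) B ε ≠ 0 := by simp
  rcases Nat.even_or_odd i with he | ho
  · obtain ⟨j, hj⟩ := hstep a ha (by rwa [he.neg_one_pow] at hi)
    exact ⟨j, 0, by simpa using hj⟩
  · obtain ⟨j, hj⟩ := hstep (a * algebraMap (𝓞 B) B ε) (ha.mul (IsIdealSquare.unit ε)) (by
      rw [map_mul, hε]
      rw [ho.neg_one_pow] at hi
      simpa using hi.mul (SqRel.refl (-1)))
    exact ⟨j, 1, by simpa using hj.of_mul_right hε0⟩

omit [NumberField B] [Fact p.Prime] in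
theorem IsQuadExt.ringHom_mul_conj [CharZero B] (hB : IsQuadExt sp (p : ℚ)) (φ : B →+* ℝ) (z : B) :
    φ z * φ (hB.conj z) = (Algebra.norm ℚ z : ℚ) := by
  rw [← map_mul, ← hB.norm_eq_mul_conj]; simp

theorem IsQuadExt.sqRel_one_of_pos (hB : IsQuadExt sp (p : ℚ)) (hp : p % 4 = 1)
    (hε : Algebra.norm ℚ (algebraMap (𝓞 B) B ε) = -1) {a : B} (ha : IsIdealSquare a)
    (hpos : ∀ φ : B →+* ℝ, 0 < φ a) : SqRel a 1 := by
  obtain ⟨φ⟩ := hB.exists_ringHom_real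
  obtain ⟨i, j, hr⟩ := hB.exists_sqRel_unit hp hε ha
  set e := algebraMap (𝓞 B) B ε
  have he0 : e ≠ 0 := by simp [e]
  have h1 := hpos φ
  have h2 := hpos (φ.comp hB.conj)
  have r1 := hr.map φ
  have r2 := (hr.map (φ.comp (hB.conj : B →+* B)))
  have hee := hB.ringHom_mul_conj φ e
  rw [hε] at hee
  have hj : Even j := by
    by_contra hj
    have h3 := mul_pos h1 h2
    rw [(r1.mul r2).pos_iff] at h3
    have : φ ((-1) ^ i * e ^ j) * (φ.comp hB.conj) ((-1) ^ i * e ^ j) = -1 := by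
      simp only [map_mul, map_pow, map_neg, map_one, RingHom.comp_apply, RingHom.coe_coe]
      calc _ = ((-1 : ℝ) ^ i) ^ 2 * (φ e * φ (hB.conj e)) ^ j := by ring
        _ = _ := by
          rw [hee, ← pow_mul, mul_comm i, pow_mul]
          simp [(Nat.not_even_iff_odd.1 hj).neg_one_pow]
    erw [this] at h3
    norm_num at h3
  have hr₁ : SqRel a ((-1) ^ i) := by
    simpa using hr.trans ((SqRel.refl _).mul (SqRel.pow_even he0 hj))
  have hi : Even i := by
    by_contra hi
    rw [(Nat.not_even_iff_odd.1 hi).neg_one_pow] at hr₁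
    have h3 := (hr₁.map φ).pos_iff.1 h1
    simp at h3
    linarith
  rwa [hi.neg_one_pow] at hr₁

/-- Ideal squares in a CM extension of a real quadratic field with a unit of norm `-1`. -/
theorem IsQuadExt.exists_sqRel_of_cm (hB : IsQuadExt sp (p : ℚ)) (hp : p % 4 = 1)
    (hε : Algebra.norm ℚ (algebraMap (𝓞 B) B ε) = -1) {L : Type*} [Field L] [NumberField L]
    [Algebra B L] {θ : L} {n : ℕ} (hL : IsQuadExt θ (-(n : B)))
    {π₁ π₂ : 𝓞 B} (h₁ : Prime π₁) (h₂ : Prime π₂)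
    (hdvd : ∃ k : ℕ, 2 * (n : 𝓞 B) ∣ (π₁ * π₂) ^ k) {a : L} (ha : IsIdealSquare a) :
    ∃ i j i₁ i₂ : ℕ, SqRel a (algebraMap B L ((-1) ^ i * algebraMap (𝓞 B) B ε ^ j *
      algebraMap (𝓞 B) B π₁ ^ i₁ * algebraMap (𝓞 B) B π₂ ^ i₂)) := by
  have hN := ha.norm (M := B)
  have h1 : SqRel (Algebra.norm B a) 1 := by
    apply hB.sqRel_one_of_pos hp hε hN
    intro φ
    obtain ⟨x, y, hxy⟩ := hL.exists_norm_eq a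
    have h0 : φ (Algebra.norm B a) ≠ 0 := by simpa using ha.1
    apply lt_of_le_of_ne _ h0.symm
    rw [hxy]
    simp only [map_sub, map_mul, map_pow, map_neg, map_natCast]
    nlinarith [sq_nonneg (φ x), mul_nonneg (Nat.cast_nonneg (α := ℝ) n) (sq_nonneg (φ y))]
  have hL' : IsQuadExt θ (algebraMap (𝓞 B) B (-(n : 𝓞 B))) := by simpa using hL
  obtain ⟨g, i₁, i₂, hg, hr⟩ := hL'.exists_sqRel_of_norm h₁ h₂ (by simpa using hdvd) ha h1
  obtain ⟨i, j, hij⟩ := hB.exists_sqRel_unit hp hε hg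
  exact ⟨i, j, i₁, i₂, hr.trans
    (((hij.mul (SqRel.refl _)).mul (SqRel.refl _)).map (algebraMap B L))⟩

end RealQuadratic

/-- A quadratic residue obstruction to representing `r z ^ 2` by `x ^ 2 - q t y ^ 2`. -/
theorem Rat.false_of_legendreSym {q : ℕ} [Fact q.Prime] {r t : ℤ} (hr : legendreSym q r = -1)
    (ht : ¬ (q : ℤ) ∣ t) {x y z : ℚ} (hz : z ≠ 0) (h : x ^ 2 - r * z ^ 2 = q * t * y ^ 2) :
    False := by
  have hq : Prime (q : ℤ) := Nat.prime_iff_prime_int.1 Fact.out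
  set u := x / z
  have hu : u ^ 2 - r = q * t * (y / z) ^ 2 := by
    simp only [u]; field_simp; linear_combination h
  set c := u.num
  set e : ℤ := (u.den : ℤ)
  have he : (e : ℚ) ≠ 0 := by simp [e]
  have huc : u * e = c := by simp [c, e, Rat.mul_den_eq_num u]
  set v := y / z * e
  have hv : (c : ℚ) ^ 2 - r * e ^ 2 = q * t * v ^ 2 := by
    rw [← huc]; simp only [v]; linear_combination (e : ℚ) ^ 2 * hu
  have hvd : v * v.den = v.num := Rat.mul_den_eq_num v
  have hZ : (c ^ 2 - r * e ^ 2) * (v.den : ℤ) ^ 2 = q * (t * v.num ^ 2) := by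
    have : (((c ^ 2 - r * e ^ 2) * (v.den : ℤ) ^ 2 : ℤ) : ℚ) = ((q * (t * v.num ^ 2) : ℤ) : ℚ) := by
      push_cast; rw [hv, ← hvd]; ring
    exact_mod_cast this
  rcases hq.dvd_or_dvd (Dvd.intro _ hZ.symm) with h1 | h1
  · obtain ⟨h2, h3⟩ := legendreSym.prime_dvd_of_eq_neg_one hr h1
    have := u.reduced
    have h4 : q ∣ u.num.natAbs.gcd u.den :=
      Nat.dvd_gcd (Int.natCast_dvd.1 h2) (Int.natCast_dvd_natCast.1 h3)
    rw [this] at h4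
    exact hq.not_isUnit (by simp [Nat.dvd_one.1 h4])
  · obtain ⟨f, hf⟩ := hq.dvd_of_dvd_pow h1
    rw [hf] at hZ
    have h2 : (q : ℤ) ∣ t * v.num ^ 2 := by
      refine ⟨(c ^ 2 - r * e ^ 2) * f ^ 2, mul_left_cancel₀ hq.ne_zero ?_⟩
      linear_combination -hZ
    have h3 := hq.dvd_of_dvd_pow ((hq.dvd_or_dvd h2).resolve_left ht)
    have h4 : q ∣ v.num.natAbs.gcd v.den :=
      Nat.dvd_gcd (Int.natCast_dvd.1 h3) (Int.natCast_dvd_natCast.1 ⟨f, hf⟩)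
    rw [v.reduced] at h4
    exact hq.not_isUnit (by simp [Nat.dvd_one.1 h4])

/-- `a` is a unit of the ring of integers up to squares. -/
def IsUnitSq {M : Type*} [Field M] (a : M) : Prop :=
  ∃ u : (𝓞 M)ˣ, SqRel a (algebraMap (𝓞 M) M u)

namespace IsUnitSq

variable {M L : Type*} [Field M] [Field L]

theorem unit (u : (𝓞 M)ˣ) : IsUnitSq (algebraMap (𝓞 M) M u) := ⟨u, SqRel.refl _⟩

theorem neg_one : IsUnitSq (-1 : M) := ⟨-1, by simpa using SqRel.refl _⟩

theorem mul {a b : M} : IsUnitSq a → IsUnitSq b → IsUnitSq (a * b) := by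
  rintro ⟨u, hu⟩ ⟨v, hv⟩
  exact ⟨u * v, by simpa using hu.mul hv⟩

theorem pow {a : M} (n : ℕ) : IsUnitSq a → IsUnitSq (a ^ n) := by
  rintro ⟨u, hu⟩
  exact ⟨u ^ n, by simpa using hu.pow n⟩

theorem of_sqRel {a b : M} (h : SqRel a b) : IsUnitSq b → IsUnitSq a := by
  rintro ⟨u, hu⟩
  exact ⟨u, h.trans hu⟩

theorem map [Algebra M L] {a : M} : IsUnitSq a → IsUnitSq (algebraMap M L a) := by
  rintro ⟨u, hu⟩
  refine ⟨Units.map (algebraMap (𝓞 M) (𝓞 L)) u, ?_⟩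
  have := hu.map (algebraMap M L)
  rw [← IsScalarTower.algebraMap_apply, IsScalarTower.algebraMap_apply (𝓞 M) (𝓞 L) L] at this
  exact this

end IsUnitSq

theorem isUnit_of_pow_isUnit_aux {M : Type*} [Field M] {a : M} {u : (𝓞 M)ˣ}
    (h : a ^ 2 = algebraMap (𝓞 M) M u) : ∃ v : (𝓞 M)ˣ, algebraMap (𝓞 M) M v = a := by
  obtain ⟨y, hy⟩ : ∃ y : 𝓞 M, algebraMap (𝓞 M) M y = a :=
    ⟨⟨a, IsIntegral.of_pow two_pos (by rw [h]; exact RingOfIntegers.isIntegral_coe _)⟩, rfl⟩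
  have hy2 : y ^ 2 = u := by
    apply RingOfIntegers.coe_injective
    rw [map_pow, hy, h]
  have : IsUnit y := (isUnit_pow_iff two_ne_zero).1 (hy2 ▸ u.isUnit)
  exact ⟨this.unit, hy⟩

section Biquadratic

variable {B F : Type*} [Field B] [NumberField B] [Field F] [NumberField F] [Algebra B F]
  {p q : ℕ} [Fact p.Prime] [Fact q.Prime] {sp : B} {sq : F}

/-- Algebraic integers and units of `ℚ(√p, √q)` built from solutions of Pell-type equations. -/
structure PellUnits (F : Type*) [Field F] (α x : 𝓞 F) (U V μ : (𝓞 F)ˣ) : Prop where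
  α_sq : α ^ 2 = 2 * U
  x_sq : x ^ 2 = 2 * V
  α_mul_x : α * x = 2 * μ

theorem IsQuadExt.exists_pellUnits (hB : IsQuadExt sp (p : ℚ)) (hF : IsQuadExt sq (q : B))
    (H : Cond1Data p q) : ∃ (α x : 𝓞 F) (U V μ : (𝓞 F)ˣ), PellUnits F α x U V μ ∧
      Algebra.norm B (algebraMap (𝓞 F) F α) = 2 ∧ Algebra.norm B (algebraMap (𝓞 F) F x) = -2 ∧
      Algebra.norm B (algebraMap (𝓞 F) F μ) = -1 := by
  obtain ⟨a, b, hab⟩ := H.exists_pell_q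
  obtain ⟨z, y, hzy⟩ := H.exists_pell_pq
  have hspB : sp ^ 2 = (p : B) := by rw [hB.sq]; simp
  have hsp : algebraMap B F sp ^ 2 = p := by rw [← map_pow, hspB]; simp
  have hsq : sq ^ 2 = q := by rw [hF.sq]; simp
  have mkint : ∀ (c : F) (n : ℕ), c ^ 2 = n → ∃ s : 𝓞 F, algebraMap (𝓞 F) F s = c ∧ s ^ 2 = n := by
    intro c n h
    have : IsIntegral ℤ c := by
      apply IsIntegral.of_pow (n := 2) two_pos
      rw [h]
      simpa using isIntegral_algebraMap (R := ℤ) (A := F) (x := (n : ℤ))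
    obtain ⟨s, hs⟩ : ∃ s : 𝓞 F, algebraMap (𝓞 F) F s = c := ⟨⟨c, this⟩, rfl⟩
    refine ⟨s, hs, RingOfIntegers.coe_injective ?_⟩
    rw [map_pow, hs, h, map_natCast]
  obtain ⟨P, hP, hP2⟩ := mkint _ _ hsp
  obtain ⟨Q, hQ, hQ2⟩ := mkint _ _ hsq
  have hab' : (a ^ 2 - q * b ^ 2 : 𝓞 F) = 2 := by
    exact_mod_cast congrArg (Int.cast : ℤ → 𝓞 F) hab
  have hzy' : (p * z ^ 2 - q * y ^ 2 : 𝓞 F) = -2 := by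
    exact_mod_cast congrArg (Int.cast : ℤ → 𝓞 F) hzy
  have hU : (1 + q * b ^ 2 + a * b * Q : 𝓞 F) * (1 + q * b ^ 2 - a * b * Q) = 1 := by
    linear_combination -(a : 𝓞 F) ^ 2 * b ^ 2 * hQ2 - q * b ^ 2 * hab'
  have hV : (p * z ^ 2 + 1 + z * y * (P * Q) : 𝓞 F) * (p * z ^ 2 + 1 - z * y * (P * Q)) = 1 := by
    linear_combination -(z : 𝓞 F) ^ 2 * y ^ 2 * Q ^ 2 * hP2 - (z : 𝓞 F) ^ 2 * y ^ 2 * p * hQ2 +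
      p * z ^ 2 * hzy'
  let U : (𝓞 F)ˣ := ⟨_, _, hU, by rw [mul_comm]; exact hU⟩
  let V : (𝓞 F)ˣ := ⟨_, _, hV, by rw [mul_comm]; exact hV⟩
  have hα : (a + b * Q : 𝓞 F) ^ 2 = 2 * U := by
    change _ = 2 * (1 + q * b ^ 2 + a * b * Q : 𝓞 F)
    linear_combination (b : 𝓞 F) ^ 2 * hQ2 + hab'
  have hx : (z * P + y * Q : 𝓞 F) ^ 2 = 2 * V := by
    change _ = 2 * (p * z ^ 2 + 1 + z * y * (P * Q) : 𝓞 F)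
    linear_combination (z : 𝓞 F) ^ 2 * hP2 + (y : 𝓞 F) ^ 2 * hQ2 - hzy'
  obtain ⟨μ, hμ⟩ := isUnit_of_pow_isUnit_aux (M := F) (u := U * V)
    (a := algebraMap (𝓞 F) F ((a + b * Q) * (z * P + y * Q)) / 2) (by
      rw [div_pow, ← map_pow, mul_pow, hα, hx]
      simp only [map_mul, map_ofNat, Units.val_mul]
      ring)
  have hμ' : (a + b * Q) * (z * P + y * Q) = 2 * (μ : 𝓞 F) := by
    apply RingOfIntegers.coe_injective
    rw [map_mul (algebraMap (𝓞 F) F) 2, hμ, map_ofNat]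
    field_simp
  have n1 : Algebra.norm B (algebraMap (𝓞 F) F (a + b * Q)) = 2 := by
    have : algebraMap (𝓞 F) F (a + b * Q) = algebraMap B F a + algebraMap B F b * sq := by
      rw [map_add, map_mul, hQ]
      simp only [map_intCast]
    rw [this, hF.norm_coord]
    exact_mod_cast congrArg (Int.cast : ℤ → B) hab
  have n2 : Algebra.norm B (algebraMap (𝓞 F) F (z * P + y * Q)) = -2 := by
    have : algebraMap (𝓞 F) F (z * P + y * Q) =
        algebraMap B F (z * sp) + algebraMap B F y * sq := by
      rw [map_add, map_mul, map_mul, hQ, hP, map_mul]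
      simp only [map_intCast]
    rw [this, hF.norm_coord, mul_pow, hspB, mul_comm]
    exact_mod_cast congrArg (Int.cast : ℤ → B) hzy
  refine ⟨_, _, U, V, μ, ⟨hα, hx, hμ'⟩, n1, n2, ?_⟩
  have h3 := congrArg (fun t => Algebra.norm B (algebraMap (𝓞 F) F t)) hμ'
  simp only [map_mul] at h3
  have h4 : Algebra.norm B (algebraMap (𝓞 F) F 2) = 2 ^ 2 := by
    have : algebraMap (𝓞 F) F 2 = algebraMap B F 2 + algebraMap B F 0 * sq := by
      rw [map_ofNat, map_ofNat, map_zero, zero_mul, add_zero]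
    rw [this, hF.norm_coord]; ring
  rw [h4, n1, n2] at h3
  apply mul_left_cancel₀ (show (2 : B) ^ 2 ≠ 0 by norm_num)
  rw [← h3]; norm_num

variable {ε : (𝓞 B)ˣ}

omit [NumberField F] in
theorem IsQuadExt.even_of_norm_sqRel (hB : IsQuadExt sp (p : ℚ)) (hF : IsQuadExt sq (q : B))
    (H : Cond1Data p q) (hε : Algebra.norm ℚ (algebraMap (𝓞 B) B ε) = -1) {a : F} {i j : ℕ}
    (h : SqRel (Algebra.norm B a) ((-1) ^ i * algebraMap (𝓞 B) B ε ^ j)) : Even j := by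
  by_contra hj
  have hj := Nat.not_even_iff_odd.1 hj
  obtain ⟨k, hk, e⟩ := h
  obtain ⟨X, Y, hXY⟩ := hF.exists_norm_eq a
  rw [hXY] at e
  obtain ⟨x, x', rfl⟩ := hB.span X
  obtain ⟨y, y', rfl⟩ := hB.span Y
  have hn := congrArg (Algebra.norm ℚ) e
  have hneg : Algebra.norm ℚ (-1 : B) = 1 := by
    have : (-1 : B) = algebraMap ℚ B (-1) + algebraMap ℚ B 0 * sp := by simp
    rw [this, hB.norm_coord]; norm_num
  rw [map_mul, map_mul, map_pow, map_pow, map_pow, hneg, hε, hj.neg_one_pow, one_pow] at hn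
  have hsp : sp ^ 2 = algebraMap ℚ B p := hB.sq
  have e2 : (algebraMap ℚ B x + algebraMap ℚ B x' * sp) ^ 2 -
      q * (algebraMap ℚ B y + algebraMap ℚ B y' * sp) ^ 2 =
      algebraMap ℚ B (x ^ 2 + p * x' ^ 2 - q * (y ^ 2 + p * y' ^ 2)) +
      algebraMap ℚ B (2 * x * x' - q * (2 * y * y')) * sp := by
    simp only [map_add, map_sub, map_mul, map_pow, map_natCast, map_ofNat] at hsp ⊢
    linear_combination (algebraMap ℚ B x' ^ 2 - q * algebraMap ℚ B y' ^ 2) * hsp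
  rw [e2, hB.norm_coord] at hn
  refine Rat.false_of_legendreSym (q := q) (r := -1) (t := 1) H.q_neg_one ?_
    (x := x ^ 2 - p * x' ^ 2 + q * (y ^ 2 - p * y' ^ 2))
    (y := 2 * (x * y - p * (x' * y'))) (z := Algebra.norm ℚ k)
    (Algebra.norm_ne_zero_iff.2 hk) ?_
  · intro h
    have := Int.le_of_dvd one_pos h
    have := (Fact.out : q.Prime).two_le
    omega
  · push_cast
    linear_combination hn

end Biquadratic

section

variable {M L : Type*} [Field M] [Field L]

theorem SqRel.of_sq_eq_neg {w a : M} (hw : w ≠ 0) (h : w ^ 2 = -a) : SqRel a (-1) :=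
  ⟨w, hw, by linear_combination h⟩

theorem IsUnitSq.of_sqRel_neg_one {a : M} (h : SqRel a (-1)) : IsUnitSq a := neg_one.of_sqRel h

theorem IsUnitSq.exists_eq {a : M} : IsUnitSq a →
    ∃ (u : (𝓞 M)ˣ) (k : M), a = algebraMap (𝓞 M) M u * k ^ 2 := by
  rintro ⟨u, k, -, h⟩
  exact ⟨u, k, h⟩

theorem IsUnitSq.exists_eq_or {a b x₀ : M} (hx : x₀ ≠ 0) {n : ℕ} (h : SqRel a (b * x₀ ^ n))
    (hb : IsUnitSq b) : ∃ (u : (𝓞 M)ˣ) (k : M),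
      a = algebraMap (𝓞 M) M u * k ^ 2 ∨ a = x₀ * algebraMap (𝓞 M) M u * k ^ 2 := by
  obtain ⟨u, hu⟩ := hb
  rcases Nat.even_or_odd n with hn | hn
  · obtain ⟨k, -, hk⟩ := h.trans (hu.mul (SqRel.pow_even hx hn))
    exact ⟨u, k, Or.inl (by rw [hk, mul_one])⟩
  · obtain ⟨k, -, hk⟩ := h.trans (hu.mul (SqRel.pow_odd hx hn))
    exact ⟨u, k, Or.inr (by rw [hk, mul_comm x₀])⟩

/-- An algebraic integer whose relative norm is prime is prime. -/
theorem RingOfIntegers.prime_of_norm [NumberField M] [NumberField L] [Algebra M L] {x : 𝓞 L}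
    {π : 𝓞 M} (hπ : Prime π)
    (h : Algebra.norm M (algebraMap (𝓞 L) L x) = algebraMap (𝓞 M) M π) : Prime x := by
  have h1 : Ideal.relNorm (𝓞 M) (Ideal.span {x}) = Ideal.span {π} := by
    rw [Ideal.relNorm_singleton]
    congr 2
    apply RingOfIntegers.coe_injective
    rw [Algebra.algebraMap_intNorm (L := L), h]
  have hx : x ≠ 0 := by
    rintro rfl
    rw [map_zero, Algebra.norm_zero] at h
    exact hπ.ne_zero (RingOfIntegers.coe_injective (by rw [← h, map_zero]))
  have htop : ∀ I : Ideal (𝓞 L), Ideal.relNorm (𝓞 M) I = ⊤ → I = ⊤ := by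
    intro I hI
    have h2 := Ideal.relNorm_le_comap (𝓞 M) I
    rw [hI, top_le_iff, Ideal.comap_eq_top_iff] at h2
    exact h2
  have hnt : Ideal.span {x} ≠ ⊤ := by
    intro h2
    rw [h2, ← Ideal.one_eq_top, map_one, Ideal.one_eq_top, eq_comm,
      Ideal.span_singleton_eq_top] at h1
    exact hπ.not_isUnit h1
  obtain ⟨P, hP, hle⟩ := Ideal.exists_le_maximal _ hnt
  obtain ⟨J, hJ⟩ := Ideal.dvd_iff_le.2 hle
  have hirr : Irreducible (Ideal.span {π}) :=
    (Ideal.prime_iff_isPrime (by simpa using hπ.ne_zero)).2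
      ((Ideal.span_singleton_prime hπ.ne_zero).2 hπ) |>.irreducible
  have h3 : Ideal.span {π} = Ideal.relNorm (𝓞 M) P * Ideal.relNorm (𝓞 M) J := by
    rw [← map_mul, ← hJ, h1]
  have hJt : J = ⊤ := by
    rcases hirr.isUnit_or_isUnit h3 with h4 | h4
    · exact absurd (htop P (by rwa [Ideal.isUnit_iff] at h4)) hP.ne_top
    · exact htop J (by rwa [Ideal.isUnit_iff] at h4)
  rw [hJt, ← Ideal.one_eq_top, mul_one] at hJ
  rw [← Ideal.span_singleton_prime hx, hJ]
  exact hP.isPrime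

end

section IdealSquares

variable {B F : Type*} [Field B] [NumberField B] [Field F] [NumberField F] [Algebra B F]
  {p q : ℕ} [Fact p.Prime] [Fact q.Prime] {sp : B} {sq : F}

theorem Cond1Data.prime_two (H : Cond1Data p q) (hB : IsQuadExt sp (p : ℚ)) :
    Prime (2 : 𝓞 B) := by
  have : Fact (Nat.Prime 2) := ⟨Nat.prime_two⟩
  simpa using hB.natCast_prime H.p8 (r := 2) (Or.inl rfl)

theorem Cond1Data.prime_q (H : Cond1Data p q) (hB : IsQuadExt sp (p : ℚ)) :
    Prime (q : 𝓞 B) := hB.natCast_prime H.p8 (Or.inr H.q_p)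

theorem IsIdealSquare.isUnitSq_of_cm_two (H : Cond1Data p q) (hB : IsQuadExt sp (p : ℚ))
    {w : F} (hF : IsQuadExt w (-((2 : ℕ) : B))) {a : F} (ha : IsIdealSquare a) : IsUnitSq a := by
  obtain ⟨ε, hε⟩ := hB.exists_unit H.exists_pell_p
  have h2 : IsUnitSq (2 : F) :=
    .of_sqRel_neg_one (.of_sq_eq_neg hF.ne_zero
      (by rw [hF.sq, map_neg, map_natCast, Nat.cast_ofNat]))
  obtain ⟨i, j, i₁, i₂, hr⟩ := hB.exists_sqRel_of_cm (by have := H.p8; omega) hε hF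
    (H.prime_two hB) (H.prime_two hB) ⟨1, by norm_num⟩ ha
  refine IsUnitSq.of_sqRel hr ?_
  simp only [map_mul, map_pow, map_neg, map_one, map_ofNat]
  exact (((IsUnitSq.neg_one.pow _).mul ((IsUnitSq.unit ε).map.pow _)).mul (h2.pow _)).mul
    (h2.pow _)

theorem IsIdealSquare.exists_unit_of_cm_two_mul (H : Cond1Data p q) (hB : IsQuadExt sp (p : ℚ))
    {s : F} (hF : IsQuadExt s (-((2 * q : ℕ) : B))) {a : F} (ha : IsIdealSquare a) :
    ∃ (u : (𝓞 F)ˣ) (k : F),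
      a = algebraMap (𝓞 F) F u * k ^ 2 ∨ a = 2 * algebraMap (𝓞 F) F u * k ^ 2 := by
  obtain ⟨ε, hε⟩ := hB.exists_unit H.exists_pell_p
  have hq : SqRel (q : F) (-1 * 2) := by
    apply SqRel.of_mul_right two_ne_zero
    exact .of_sq_eq_neg hF.ne_zero (by
      rw [hF.sq, map_neg, map_natCast, Nat.cast_mul, Nat.cast_ofNat, mul_comm])
  obtain ⟨i, j, i₁, i₂, hr⟩ := hB.exists_sqRel_of_cm (by have := H.p8; omega) hε hF
    (H.prime_two hB) (H.prime_q hB) ⟨2, by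
      rw [show (2 * (q : 𝓞 B)) ^ 2 = 2 * ((2 * q : ℕ) : 𝓞 B) * q by push_cast; ring]
      exact dvd_mul_right _ _⟩ ha
  simp only [map_mul, map_pow, map_neg, map_one, map_ofNat, map_natCast] at hr
  have h2 := hr.trans ((SqRel.refl _).mul (hq.pow i₂))
  rw [mul_pow] at h2
  refine IsUnitSq.exists_eq_or two_ne_zero (n := i₁ + i₂)
    (b := (-1) ^ i * algebraMap B F (algebraMap (𝓞 B) B ε) ^ j * (-1) ^ i₂) ?_
    (((IsUnitSq.neg_one.pow _).mul ((IsUnitSq.unit ε).map.pow _)).mul (IsUnitSq.neg_one.pow _))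
  convert h2 using 1
  ring

variable {ε : (𝓞 B)ˣ} {α x : 𝓞 F} {U V μ : (𝓞 F)ˣ}

omit [NumberField F] in
theorem PellUnits.sqRel_two [CharZero F] (h : PellUnits F α x U V μ) :
    SqRel (2 : F) (algebraMap (𝓞 F) F U) := by
  have h1 := congrArg (algebraMap (𝓞 F) F) h.α_sq
  simp only [map_mul, map_pow, map_ofNat] at h1
  rw [← one_mul (algebraMap (𝓞 F) F U)]
  apply SqRel.of_mul_right (by simp)
  rw [← h1]
  apply SqRel.sq
  intro h0
  rw [h0] at h1
  simp at h1

theorem IsIdealSquare.exists_sqRel_of_real (H : Cond1Data p q) (hB : IsQuadExt sp (p : ℚ))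
    (hF : IsQuadExt sq (q : B)) (hε : Algebra.norm ℚ (algebraMap (𝓞 B) B ε) = -1)
    (hμ : Algebra.norm B (algebraMap (𝓞 F) F μ) = -1)
    {a : F} (ha : IsIdealSquare a) : ∃ i j k l : ℕ,
      SqRel a ((-1) ^ i * algebraMap B F (algebraMap (𝓞 B) B ε) ^ j *
        algebraMap (𝓞 F) F μ ^ k * 2 ^ l) := by
  have hp : p % 4 = 1 := by have := H.p8; omega
  obtain ⟨i, j, hN⟩ := hB.exists_sqRel_unit hp hε ha.norm
  have hj := hB.even_of_norm_sqRel hF H hε hN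
  have hμ0 : algebraMap (𝓞 F) F μ ^ i ≠ 0 := by simp
  have hN' : SqRel (Algebra.norm B (a * algebraMap (𝓞 F) F μ ^ i)) 1 := by
    rw [map_mul, map_pow, hμ]
    have h1 := (hN.trans ((SqRel.refl _).mul (SqRel.pow_even (by simp) hj))).mul
      (SqRel.refl ((-1 : B) ^ i))
    rw [mul_one] at h1
    exact h1.trans (SqRel.mul_self (by simp))
  have hF' : IsQuadExt sq (algebraMap (𝓞 B) B (q : 𝓞 B)) := by simpa using hF
  have ha' : IsIdealSquare (a * algebraMap (𝓞 F) F μ ^ i) := by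
    have := ha.mul (IsIdealSquare.unit (μ ^ i))
    rwa [Units.val_pow_eq_pow_val, map_pow] at this
  obtain ⟨g, i₁, i₂, hg, hr⟩ := hF'.exists_sqRel_of_norm (H.prime_two hB) (H.prime_q hB)
    ⟨1, by simp⟩ ha' hN'
  obtain ⟨i', j', hij⟩ := hB.exists_sqRel_unit hp hε hg
  refine ⟨i', j', i, i₁, ?_⟩
  have hq : SqRel (q : F) 1 := by
    have := SqRel.sq hF.ne_zero
    rwa [hF.sq, map_natCast] at this
  have h2 := hr.trans (((hij.mul (SqRel.refl _)).mul (SqRel.refl _)).map (algebraMap B F))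
  simp only [map_mul, map_pow, map_neg, map_one, map_ofNat, map_natCast] at h2
  have h3 := SqRel.of_mul_right hμ0 (h2.trans ((SqRel.refl _).mul (hq.pow _)))
  convert h3 using 1
  ring

theorem IsIdealSquare.isUnitSq_of_real (H : Cond1Data p q) (hB : IsQuadExt sp (p : ℚ))
    (hF : IsQuadExt sq (q : B)) {a : F} (ha : IsIdealSquare a) : IsUnitSq a := by
  obtain ⟨ε, hε⟩ := hB.exists_unit H.exists_pell_p
  obtain ⟨α, x, U, V, μ, hP, -, -, hμ⟩ := hB.exists_pellUnits hF H
  obtain ⟨i, j, k, l, hr⟩ := ha.exists_sqRel_of_real H hB hF hε hμ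
  refine IsUnitSq.of_sqRel hr ?_
  exact (((IsUnitSq.neg_one.pow _).mul ((IsUnitSq.unit ε).map.pow _)).mul
    ((IsUnitSq.unit μ).pow _)).mul (IsUnitSq.pow _ ⟨U, hP.sqRel_two⟩)

omit [NumberField B] [Fact q.Prime] [NumberField F] in
/-- Every real embedding of `ℚ(√p)` extends to `ℚ(√p, √q)`. -/
theorem IsQuadExt.exists_ringHom_real_extend (hF : IsQuadExt sq (q : B)) (φ : B →+* ℝ) :
    ∃ ψ : F →+* ℝ, ∀ b, ψ (algebraMap B F b) = φ b := by
  obtain ⟨ψ, h, -⟩ := hF.exists_lift φ (√q) (by simp)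
  exact ⟨ψ, h⟩

omit [Fact p.Prime] [Fact q.Prime] [NumberField F] in
/-- A product of the generators of the group of ideal squares of `ℚ(√p, √q)` that is totally
positive is a power of `2` up to squares. -/
theorem IsQuadExt.sqRel_two_pow_of_pos [CharZero F] (hB : IsQuadExt sp (p : ℚ))
    (hF : IsQuadExt sq (q : B)) (hε : Algebra.norm ℚ (algebraMap (𝓞 B) B ε) = -1)
    (hμ : Algebra.norm B (algebraMap (𝓞 F) F μ) = -1) {i j k l : ℕ}
    (hpos : ∀ φ : F →+* ℝ, 0 < φ ((-1) ^ i * algebraMap B F (algebraMap (𝓞 B) B ε) ^ j *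
        algebraMap (𝓞 F) F μ ^ k * 2 ^ l)) :
    SqRel ((-1) ^ i * algebraMap B F (algebraMap (𝓞 B) B ε) ^ j *
        algebraMap (𝓞 F) F μ ^ k * 2 ^ l) (2 ^ l) := by
  obtain ⟨φ⟩ := hB.exists_ringHom_real
  obtain ⟨ψ, hψ⟩ := hF.exists_ringHom_real_extend φ
  obtain ⟨ψ', hψ'⟩ := hF.exists_ringHom_real_extend (φ.comp (hB.conj : B →+* B))
  set e := algebraMap (𝓞 B) B ε with he
  set m := algebraMap (𝓞 F) F μ with hm
  have hm0 : m ≠ 0 := by simp [hm]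
  have he0 : algebraMap B F e ≠ 0 := by simp [he]
  have hk : Even k := by
    by_contra hk
    have hmm : ψ m * ψ (hF.conj m) = -1 := by
      rw [← map_mul, ← hF.norm_eq_mul_conj, hμ]; simp
    have h1 := hpos ψ
    have h2 := hpos (ψ.comp (hF.conj : F →+* F))
    have h3 : hF.conj (algebraMap B F e) = algebraMap B F e := hF.conj.commutes _
    simp only [RingHom.comp_apply, RingHom.coe_coe, map_mul, map_pow, map_neg, map_one,
      map_ofNat, h3] at h1 h2
    have h4 := mul_pos h1 h2
    have h5 : (ψ m) ^ k * (ψ (hF.conj m)) ^ k = -1 := by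
      rw [← mul_pow, hmm, (Nat.not_even_iff_odd.1 hk).neg_one_pow]
    nlinarith [sq_nonneg ((-1) ^ i * ψ (algebraMap B F e) ^ j * 2 ^ l)]
  have hr : SqRel ((-1) ^ i * algebraMap B F e ^ j * m ^ k * 2 ^ l)
      ((-1) ^ i * algebraMap B F e ^ j * 2 ^ l) := by
    have := ((SqRel.refl ((-1) ^ i * algebraMap B F e ^ j)).mul (SqRel.pow_even hm0 hk)).mul
      (SqRel.refl (2 ^ l))
    rwa [mul_one] at this
  have hj : Even j := by
    by_contra hj
    have hee := hB.ringHom_mul_conj φ e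
    rw [hε] at hee
    have h1 := (hr.map ψ).pos_iff.1 (hpos ψ)
    have h2 := (hr.map ψ').pos_iff.1 (hpos ψ')
    simp only [map_mul, map_pow, map_neg, map_one, map_ofNat, hψ, hψ', RingHom.comp_apply,
      RingHom.coe_coe] at h1 h2
    have h4 := mul_pos h1 h2
    have h5 : (φ e) ^ j * (φ (hB.conj e)) ^ j = -1 := by
      rw [← mul_pow, hee]; push_cast; rw [(Nat.not_even_iff_odd.1 hj).neg_one_pow]
    nlinarith [sq_nonneg ((-1 : ℝ) ^ i * 2 ^ l)]
  have hr2 : SqRel ((-1) ^ i * algebraMap B F e ^ j * m ^ k * 2 ^ l) ((-1) ^ i * 2 ^ l) := by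
    have := ((SqRel.refl ((-1 : F) ^ i)).mul (SqRel.pow_even he0 hj)).mul
      (SqRel.refl (2 ^ l))
    rw [mul_one] at this
    exact hr.trans this
  have hi : Even i := by
    by_contra hi
    have h1 := (hr2.map ψ).pos_iff.1 (hpos ψ)
    simp only [map_mul, map_pow, map_neg, map_one, map_ofNat,
      (Nat.not_even_iff_odd.1 hi).neg_one_pow] at h1
    have : (0 : ℝ) < 2 ^ l := by positivity
    linarith
  have h3 : ((-1) ^ i * 2 ^ l : F) = 2 ^ l := by rw [hi.neg_one_pow, one_mul]
  exact hr2.trans (by rw [h3]; exact SqRel.refl _)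

theorem IsIdealSquare.exists_unit_of_triquadratic {K : Type*} [Field K] [NumberField K]
    [Algebra F K] (H : Cond1Data p q) (hB : IsQuadExt sp (p : ℚ)) (hF : IsQuadExt sq (q : B))
    {w : K} (hK : IsQuadExt w (-((2 : ℕ) : F))) (hP : PellUnits F α x U V μ)
    (hx : Algebra.norm B (algebraMap (𝓞 F) F x) = -2)
    (hμ : Algebra.norm B (algebraMap (𝓞 F) F μ) = -1) {a : K} (ha : IsIdealSquare a) :
    ∃ (u : (𝓞 K)ˣ) (k : K), a = algebraMap (𝓞 K) K u * k ^ 2 ∨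
      a = algebraMap F K (algebraMap (𝓞 F) F x) * algebraMap (𝓞 K) K u * k ^ 2 := by
  obtain ⟨ε, hε⟩ := hB.exists_unit H.exists_pell_p
  have hxp : Prime x := RingOfIntegers.prime_of_norm (π := -2) (H.prime_two hB).neg
    (by rw [hx, map_neg, map_ofNat])
  have hN := ha.norm (M := F)
  have hw0 := hK.ne_zero
  have hw2 : w ^ 2 = -2 := by rw [hK.sq, map_neg, map_natCast, Nat.cast_ofNat]
  have hpos : ∀ φ : F →+* ℝ, 0 < φ (Algebra.norm F a) := by
    intro φ
    obtain ⟨y, z, hyz⟩ := hK.exists_norm_eq a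
    have h0 : φ (Algebra.norm F a) ≠ 0 := by simpa using ha.1
    apply lt_of_le_of_ne _ h0.symm
    rw [hyz]
    simp only [map_sub, map_mul, map_pow, map_neg, map_natCast]
    nlinarith [sq_nonneg (φ y), sq_nonneg (φ z)]
  obtain ⟨i, j, k, l, hr⟩ := hN.exists_sqRel_of_real H hB hF hε hμ
  have hr2 := hr.trans (hB.sqRel_two_pow_of_pos hF hε hμ
    fun φ => (hr.map φ).pos_iff.1 (hpos φ))
  have hα2 : algebraMap (𝓞 F) F α ^ 2 = 2 * algebraMap (𝓞 F) F U := by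
    have := congrArg (algebraMap (𝓞 F) F) hP.α_sq
    simpa only [map_mul, map_pow, map_ofNat] using this
  obtain ⟨v, hv⟩ := isUnit_of_pow_isUnit_aux (M := K)
    (u := Units.map (algebraMap (𝓞 F) (𝓞 K)) (-U))
    (a := algebraMap F K (algebraMap (𝓞 F) F α) / w) (by
      rw [div_pow, ← map_pow, hα2, hw2]
      change _ = algebraMap (𝓞 K) K (algebraMap (𝓞 F) (𝓞 K) (-(U : 𝓞 F)))
      rw [← IsScalarTower.algebraMap_apply, IsScalarTower.algebraMap_apply (𝓞 F) F K]
      simp only [map_mul, map_neg, map_ofNat]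
      field_simp)
  have hNv : Algebra.norm F (algebraMap (𝓞 K) K v) = algebraMap (𝓞 F) F U := by
    have h1 : algebraMap (𝓞 K) K v = algebraMap F K 0 +
        algebraMap F K (-algebraMap (𝓞 F) F α / 2) * w := by
      rw [hv, div_eq_iff hw0]
      simp only [map_zero, map_div₀, map_neg, map_ofNat]
      linear_combination (algebraMap F K (algebraMap (𝓞 F) F α) / 2) * hw2
    rw [h1, hK.norm_coord]
    push_cast
    linear_combination hα2 / 2
  have ha' : IsIdealSquare (a * algebraMap (𝓞 K) K v ^ l) := by
    have := ha.mul (IsIdealSquare.unit (v ^ l))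
    rwa [Units.val_pow_eq_pow_val, map_pow] at this
  have hN' : SqRel (Algebra.norm F (a * algebraMap (𝓞 K) K v ^ l)) 1 := by
    rw [map_mul, map_pow, hNv]
    exact (hr2.mul (hP.sqRel_two.symm.pow l)).trans (SqRel.mul_self (by simp))
  have hK' : IsQuadExt w (algebraMap (𝓞 F) F (-2)) := by
    rwa [map_neg, map_ofNat]
  obtain ⟨g, i₁, i₂, hg, hr3⟩ := hK'.exists_sqRel_of_norm hxp hxp
    ⟨2, -(V : 𝓞 F) ^ 2, by linear_combination (x ^ 2 + 2 * V) * hP.x_sq⟩ ha' hN'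
  have hgu := (hg.isUnitSq_of_real H hB hF).map (L := K)
  have h4 := SqRel.of_mul_right (by simp) hr3
  simp only [map_mul, map_pow] at h4
  refine IsUnitSq.exists_eq_or (n := i₁ + i₂) (b := algebraMap F K g * algebraMap (𝓞 K) K v ^ l)
    (by simpa using hxp.ne_zero) ?_ (hgu.mul ((IsUnitSq.unit v).pow l))
  convert h4 using 1
  ring

end IdealSquares

section

variable {M : Type*} [Field M] [NumberField M]

theorem ClassGroup.mk0_ne_one_of_sq_eq_two {J : nonZeroDivisors (Ideal (𝓞 M))}
    (hJ : (J : Ideal (𝓞 M)) ^ 2 = Ideal.span {2})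
    (h : ∀ (u : (𝓞 M)ˣ) (k : M), k ^ 2 ≠ 2 * algebraMap (𝓞 M) M u) : mk0 J ≠ 1 := by
  intro h1
  obtain ⟨b, hb⟩ := (mk0_eq_one_iff J.2).1 h1
  have hb : (J : Ideal (𝓞 M)) = Ideal.span {b} := hb
  rw [hb, Ideal.span_singleton_pow, Ideal.span_singleton_eq_span_singleton] at hJ
  obtain ⟨u, hu⟩ := hJ.symm
  apply h u (algebraMap (𝓞 M) M b)
  rw [← map_pow, ← hu, map_mul, map_ofNat]

theorem ClassGroup.mk0_eq_one_of_sq_eq_two {J : nonZeroDivisors (Ideal (𝓞 M))}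
    (hJ : (J : Ideal (𝓞 M)) ^ 2 = Ideal.span {2}) {w : M} (hw : w ^ 2 = -2) : mk0 J = 1 := by
  rw [← map_one mk0]
  refine mk0_eq_of_sq (b' := 1) (u := -1) (k := w) hJ (by simp [Ideal.one_eq_top]) ?_
  rw [hw, map_ofNat]
  simp

end

section ImaginaryQuadratic

variable {k₀ : Type*} [Field k₀] [NumberField k₀] {q : ℕ} {s₀ : k₀}

theorem IsQuadExt.exists_ideal_sq_eq_two (h : IsQuadExt s₀ (-((2 * q : ℕ) : ℚ))) (hq : Odd q) :
    ∃ T : nonZeroDivisors (Ideal (𝓞 k₀)), (T : Ideal (𝓞 k₀)) ^ 2 = Ideal.span {2} := by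
  obtain ⟨s, hs⟩ : ∃ s : 𝓞 k₀, algebraMap (𝓞 k₀) k₀ s = s₀ := by
    refine ⟨⟨s₀, IsIntegral.of_pow (n := 2) two_pos ?_⟩, rfl⟩
    rw [h.sq]
    simpa using isIntegral_algebraMap (R := ℤ) (A := k₀) (x := (-((2 * q : ℕ) : ℤ)))
  have hs2 : s ^ 2 = -(2 * q) := by
    apply RingOfIntegers.coe_injective
    rw [map_pow, hs, h.sq]
    simp only [map_neg, map_natCast, map_mul, map_ofNat, Nat.cast_mul, Nat.cast_ofNat]
  obtain ⟨c, rfl⟩ := hq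
  push_cast at hs2
  have key : Ideal.span {2, s} * Ideal.span {2, s} = Ideal.span {2} := by
    apply le_antisymm
    · rw [Ideal.span_pair_mul_span_pair, Ideal.span_le]
      have h0 : ∀ y, 2 * y ∈ Ideal.span {(2 : 𝓞 k₀)} := fun y =>
        Ideal.mul_mem_right _ _ (Ideal.mem_span_singleton_self _)
      rintro y (rfl | rfl | rfl | rfl)
      · exact h0 2
      · exact h0 s
      · rw [mul_comm]; exact h0 s
      · rw [← pow_two, hs2]
        change _ ∈ Ideal.span {(2 : 𝓞 k₀)}
        convert h0 (-(2 * c + 1)) using 1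
        ring
    · rw [Ideal.span_singleton_le_iff_mem]
      have h2 : (2 : 𝓞 k₀) ∈ Ideal.span {2, s} := Ideal.subset_span (by simp)
      have h3 : s ∈ Ideal.span {2, s} := Ideal.subset_span (by simp)
      have e : -(s * s) + -c * (2 * 2) = (2 : 𝓞 k₀) := by linear_combination -hs2
      have := add_mem (neg_mem (Ideal.mul_mem_mul h3 h3))
        (Ideal.mul_mem_left _ (-(c : 𝓞 k₀)) (Ideal.mul_mem_mul h2 h2))
      rwa [e] at this
  have hne : Ideal.span {2, s} ∈ nonZeroDivisors (Ideal (𝓞 k₀)) := by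
    rw [mem_nonZeroDivisors_iff_ne_zero]
    intro h0
    rw [h0, zero_mul, eq_comm, Ideal.zero_eq_bot, Ideal.span_singleton_eq_bot] at key
    exact two_ne_zero key
  exact ⟨⟨_, hne⟩, by rw [pow_two]; exact key⟩

theorem IsIdealSquare.exists_unit_of_imaginary (h : IsQuadExt s₀ (-((2 * q : ℕ) : ℚ)))
    [Fact q.Prime] {a : k₀} (ha : IsIdealSquare a) : ∃ (u : (𝓞 k₀)ˣ) (k : k₀),
      a = algebraMap (𝓞 k₀) k₀ u * k ^ 2 ∨ a = 2 * algebraMap (𝓞 k₀) k₀ u * k ^ 2 := by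
  have hpr : ∀ r : ℕ, r.Prime → Prime (r : 𝓞 ℚ) := by
    intro r hr
    have := (MulEquiv.prime_iff (p := (r : ℤ)) Rat.ringOfIntegersEquiv.symm).2
      (Nat.prime_iff_prime_int.1 hr)
    simpa using this
  have hN : SqRel (Algebra.norm ℚ a) 1 := by
    obtain ⟨i, hi⟩ := Rat.exists_sqRel_of_isIdealSquare (ha.norm (M := ℚ))
    rcases Nat.even_or_odd i with h1 | h1
    · rwa [h1.neg_one_pow] at hi
    rw [h1.neg_one_pow] at hi
    obtain ⟨k, hk, e⟩ := hi
    obtain ⟨x, y, hxy⟩ := h.exists_norm_eq a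
    rw [hxy] at e
    have : 0 < k ^ 2 := by positivity
    have : (0 : ℚ) ≤ (2 * q : ℕ) * y ^ 2 := by positivity
    nlinarith [sq_nonneg x]
  have hq : SqRel (q : k₀) (-1 * 2) := by
    apply SqRel.of_mul_right two_ne_zero
    exact .of_sq_eq_neg h.ne_zero (by
      rw [h.sq, map_neg, map_natCast, Nat.cast_mul, Nat.cast_ofNat, mul_comm])
  have h' : IsQuadExt s₀ (algebraMap (𝓞 ℚ) ℚ (-(2 * q))) := by
    rw [Nat.cast_mul, Nat.cast_ofNat] at h
    rwa [map_neg, map_mul, map_natCast, map_ofNat]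
  obtain ⟨g, i₁, i₂, hg, hr⟩ := h'.exists_sqRel_of_norm (hpr 2 Nat.prime_two) (hpr q Fact.out)
    ⟨2, -q, by push_cast; ring⟩ ha hN
  obtain ⟨i, hi⟩ := Rat.exists_sqRel_of_isIdealSquare hg
  have h2 := hr.trans (((hi.mul (SqRel.refl _)).mul (SqRel.refl _)).map (algebraMap ℚ k₀))
  simp only [map_mul, map_pow, map_neg, map_one, map_natCast, Nat.cast_ofNat, map_ofNat] at h2
  have h3 := h2.trans ((SqRel.refl _).mul (hq.pow i₂))
  rw [mul_pow] at h3
  refine IsUnitSq.exists_eq_or two_ne_zero (n := i₁ + i₂) (b := (-1) ^ i * (-1) ^ i₂) ?_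
    ((IsUnitSq.neg_one.pow _).mul (IsUnitSq.neg_one.pow _))
  convert h3 using 1
  ring

end ImaginaryQuadratic

section

variable {B k : Type*} [Field B] [NumberField B] [Field k] [NumberField k] [Algebra B k]
  {p q : ℕ} [Fact p.Prime] [Fact q.Prime] {sp : B} {s : k}

omit [Fact p.Prime] in
theorem IsQuadExt.eq_zero_of_real_abs_lt (hB : IsQuadExt sp (p : ℚ)) {x : 𝓞 B}
    (h : ∀ φ : B →+* ℝ, φ (algebraMap (𝓞 B) B x) ^ 2 < 1) : x = 0 := by
  obtain ⟨φ⟩ := hB.exists_ringHom_real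
  have h1 := h φ
  have h2 := h (φ.comp (hB.conj : B →+* B))
  have h3 := hB.ringHom_mul_conj φ (algebraMap (𝓞 B) B x)
  rw [show algebraMap (𝓞 B) B x = (x : B) from rfl, ← Algebra.coe_norm_int] at h3
  simp only [RingHom.comp_apply, RingHom.coe_coe] at h1 h2
  have h4 : (((Algebra.norm ℤ x) ^ 2 : ℤ) : ℝ) < 1 := by
    push_cast
    rw [Rat.cast_intCast] at h3
    rw [← h3]
    change (φ (algebraMap (𝓞 B) B x) * φ (hB.conj (algebraMap (𝓞 B) B x))) ^ 2 < 1
    rw [mul_pow]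
    nlinarith [sq_nonneg (φ (algebraMap (𝓞 B) B x)),
      sq_nonneg (φ (hB.conj (algebraMap (𝓞 B) B x)))]
  have h5 : (Algebra.norm ℤ x) ^ 2 < 1 := by exact_mod_cast h4
  have h6 : Algebra.norm ℤ x = 0 := by
    nlinarith [sq_nonneg (Algebra.norm ℤ x), sq_abs (Algebra.norm ℤ x),
      Int.one_le_abs (z := Algebra.norm ℤ x)]
  exact Algebra.norm_eq_zero_iff.1 h6

theorem RingOfIntegers.exists_norm_unit (u : (𝓞 k)ˣ) :
    ∃ v : (𝓞 B)ˣ, algebraMap (𝓞 B) B v = Algebra.norm B (algebraMap (𝓞 k) k u) := by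
  refine ⟨Units.map (Algebra.intNorm (𝓞 B) (𝓞 k)) u, ?_⟩
  rw [← Algebra.algebraMap_intNorm (A := 𝓞 B)]
  rfl

/-- The prime above `2` in `ℚ(√p, √(-2q))` does not have a generator. -/
theorem IsQuadExt.sq_ne_two_mul_unit (H : Cond1Data p q) (hB : IsQuadExt sp (p : ℚ))
    (hk : IsQuadExt s (-((2 * q : ℕ) : B))) (u : (𝓞 k)ˣ) (z : k) :
    z ^ 2 ≠ 2 * algebraMap (𝓞 k) k u := by
  intro hz
  have hp : p % 4 = 1 := by have := H.p8; omega
  obtain ⟨ε, hε⟩ := hB.exists_unit H.exists_pell_p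
  have hs2 : s ^ 2 = -(2 * q) := by
    rw [hk.sq, map_neg, map_natCast, Nat.cast_mul, Nat.cast_ofNat]
  have norm2 : Algebra.norm B (2 : k) = 4 := by
    rw [show (2 : k) = algebraMap B k 2 + algebraMap B k 0 * s by
      rw [map_ofNat, map_zero]; ring, hk.norm_coord]
    norm_num
  obtain ⟨v, hv⟩ := RingOfIntegers.exists_norm_unit (B := B) u
  obtain ⟨n, hn⟩ := isUnit_of_pow_isUnit_aux (M := B) (u := v) (a := Algebra.norm B z / 2) (by
    rw [div_pow, ← map_pow, hz, map_mul, norm2, hv]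
    field_simp
    norm_num)
  have hz0 : z ≠ 0 := by
    rintro rfl
    simp at hz
  have hpos : ∀ φ : B →+* ℝ, 0 < φ (algebraMap (𝓞 B) B n) := by
    intro φ
    have h0 : φ (algebraMap (𝓞 B) B n) ≠ 0 := by simp
    apply lt_of_le_of_ne _ h0.symm
    obtain ⟨x, y, hxy⟩ := hk.exists_norm_eq z
    rw [hn, hxy]
    simp only [map_sub, map_mul, map_pow, map_neg, map_natCast, map_div₀, map_ofNat]
    have : (0 : ℝ) ≤ (2 * q : ℕ) * φ y ^ 2 := by positivity
    nlinarith [sq_nonneg (φ x)]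
  obtain ⟨c, hc, hnc⟩ := hB.sqRel_one_of_pos hp hε (IsIdealSquare.unit n) hpos
  rw [one_mul] at hnc
  obtain ⟨c, rfl⟩ := isUnit_of_pow_isUnit_aux (M := B) hnc.symm
  set t := z / algebraMap B k (algebraMap (𝓞 B) B c) with ht
  have ht2 : t ^ 2 = 2 * algebraMap (𝓞 k) k
      (u * (Units.map (algebraMap (𝓞 B) (𝓞 k)) (c⁻¹ ^ 2) : (𝓞 k)ˣ) : (𝓞 k)ˣ) := by
    have h1 : algebraMap (𝓞 k) k (Units.map (algebraMap (𝓞 B) (𝓞 k)) (c⁻¹ ^ 2) : (𝓞 k)ˣ) *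
        algebraMap B k (algebraMap (𝓞 B) B c) ^ 2 = 1 := by
      change algebraMap (𝓞 k) k (algebraMap (𝓞 B) (𝓞 k) ((c⁻¹ ^ 2 : (𝓞 B)ˣ) : 𝓞 B)) * _ = 1
      rw [← IsScalarTower.algebraMap_apply, IsScalarTower.algebraMap_apply (𝓞 B) B k,
        ← map_pow, ← map_pow, ← map_mul, ← map_mul, ← Units.val_pow_eq_pow_val, ← Units.val_mul]
      simp
    rw [ht, div_pow, hz, Units.val_mul, map_mul, div_eq_iff (pow_ne_zero _ (by simp))]
    linear_combination -2 * algebraMap (𝓞 k) k u * h1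
  generalize u * (Units.map (algebraMap (𝓞 B) (𝓞 k)) (c⁻¹ ^ 2) : (𝓞 k)ˣ) = u' at ht2
  have htN : Algebra.norm B t = 2 := by
    have h1 : t * algebraMap B k (algebraMap (𝓞 B) B c) = z := div_mul_cancel₀ _ (by simp)
    have h2 : Algebra.norm B (algebraMap B k (algebraMap (𝓞 B) B c)) =
        algebraMap (𝓞 B) B c ^ 2 := by
      rw [Algebra.norm_algebraMap, hk.finrank_eq_two]
    have h3 := congrArg (Algebra.norm B) h1
    rw [map_mul, h2, ← hnc, hn] at h3
    have : Algebra.norm B z ≠ 0 := Algebra.norm_ne_zero_iff.2 hz0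
    field_simp at h3
    exact h3
  obtain ⟨X, Y, hXY⟩ := hk.span t
  rw [hXY, hk.norm_coord] at htN
  have h_int : ∀ (y : 𝓞 k) (a b : B),
      algebraMap (𝓞 k) k y = algebraMap B k a + algebraMap B k b * s →
      ∃ r : 𝓞 B, algebraMap (𝓞 B) B r = 2 * a := by
    intro y a b h
    have hy : IsIntegral ℤ (algebraMap (𝓞 k) k y) := RingOfIntegers.isIntegral_coe y
    have h1 := hy.add (hy.map hk.conj)
    rw [h, hk.conj_coord, show ∀ x z : k, x + z + (x - z) = 2 * x by intros; ring,
      ← map_ofNat (algebraMap B k), ← map_mul, isIntegral_algebraMap_iff (algebraMap B k).injective]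
      at h1
    exact ⟨⟨_, h1⟩, rfl⟩
  obtain ⟨D, hD⟩ := h_int u' ((X ^ 2 - 2 * q * Y ^ 2) / 2) (X * Y) (by
    rw [hXY] at ht2
    simp only [map_div₀, map_sub, map_mul, map_pow, map_ofNat, map_natCast]
    apply mul_left_cancel₀ (show (2 : k) ≠ 0 by norm_num)
    linear_combination -ht2 + algebraMap B k Y ^ 2 * hs2)
  have hq0 : (q : B) ≠ 0 := by exact_mod_cast (Fact.out : q.Prime).ne_zero
  have hN : X ^ 2 + 2 * q * Y ^ 2 = 2 := by
    push_cast at htN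
    linear_combination htN
  obtain ⟨y, hy⟩ : ∃ y : 𝓞 B, algebraMap (𝓞 B) B y = q * (2 * Y) := by
    refine ⟨⟨q * (2 * Y), IsIntegral.of_pow (n := 2) two_pos ?_⟩, rfl⟩
    have : ((q : B) * (2 * Y)) ^ 2 = algebraMap (𝓞 B) B (q * (2 - D)) := by
      rw [map_mul, map_sub, hD, map_natCast, map_ofNat]
      linear_combination q * hN
    rw [this]
    exact RingOfIntegers.isIntegral_coe _
  have hy2 : y ^ 2 = q * (2 - D) := by
    apply RingOfIntegers.coe_injective
    rw [map_pow, hy, map_mul, map_sub, hD, map_natCast, map_ofNat]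
    linear_combination q * hN
  obtain ⟨S, rfl⟩ := (H.prime_q hB).dvd_of_dvd_pow ⟨_, hy2⟩
  have hS : algebraMap (𝓞 B) B S = 2 * Y := by
    apply mul_left_cancel₀ hq0
    rw [← hy, map_mul, map_natCast]
  have hS0 : S = 0 := by
    apply hB.eq_zero_of_real_abs_lt
    intro φ
    have h1 := congrArg φ hN
    simp only [map_add, map_mul, map_pow, map_ofNat, map_natCast] at h1
    rw [hS, map_mul, map_ofNat]
    have h7 : (7 : ℝ) ≤ q := by
      have := H.q8
      exact_mod_cast (show 7 ≤ q by omega)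
    nlinarith [sq_nonneg (φ X), sq_nonneg (φ Y)]
  have hY : Y = 0 := by
    rw [hS0, map_zero] at hS
    simpa using hS.symm
  rw [hY] at hN
  obtain ⟨r, hr⟩ : ∃ r : 𝓞 B, algebraMap (𝓞 B) B r = X := by
    refine ⟨⟨_, IsIntegral.of_pow (n := 2) two_pos ?_⟩, rfl⟩
    rw [show X ^ 2 = algebraMap (𝓞 B) B 2 by rw [map_ofNat]; linear_combination hN]
    exact RingOfIntegers.isIntegral_coe _
  have hr2 : r ^ 2 = 2 := by
    apply RingOfIntegers.coe_injective
    rw [map_pow, hr, map_ofNat]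
    linear_combination hN
  have h2 := H.prime_two hB
  obtain ⟨r', rfl⟩ := h2.dvd_of_dvd_pow (dvd_of_eq hr2.symm)
  apply h2.not_isUnit
  refine IsUnit.of_mul_eq_one (r' ^ 2) (mul_left_cancel₀ h2.ne_zero ?_)
  linear_combination hr2

end

section

variable {k₀ : Type*} [Field k₀] [NumberField k₀] {q : ℕ} {s₀ : k₀}

theorem IsQuadExt.norm_rat_nonneg (h : IsQuadExt s₀ (-((2 * q : ℕ) : ℚ))) (a : k₀) :
    0 ≤ Algebra.norm ℚ a := by
  obtain ⟨x, y, rfl⟩ := h.span a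
  rw [h.norm_coord]
  push_cast
  have : (0 : ℚ) ≤ q := by positivity
  nlinarith [sq_nonneg x, mul_nonneg this (sq_nonneg y)]

variable {M : Type*} [Field M] [NumberField M] [Algebra k₀ M]

/-- In an extension of `ℚ(√(-2q))`, an ideal whose norm is not a quadratic residue modulo `q`
is not a square in the class group. -/
theorem ClassGroup.not_isSquare_mk0_of_legendreSym [Fact q.Prime]
    (hq2 : q ≠ 2) (h : IsQuadExt s₀ (-((2 * q : ℕ) : ℚ)))
    {I : nonZeroDivisors (Ideal (𝓞 M))}
    (hI : legendreSym q (Ideal.absNorm (I : Ideal (𝓞 M))) = -1) :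
    ¬ IsSquare (mk0 I) := by
  rintro ⟨c, hc⟩
  obtain ⟨J, rfl⟩ := mk0_surjective c
  rw [← map_mul, mk0_eq_mk0_iff] at hc
  obtain ⟨x, y, hx, hy, hxy⟩ := hc
  have hN : ∀ z : 𝓞 M, ((Ideal.absNorm (Ideal.span {z}) : ℕ) : ℚ) =
      Algebra.norm ℚ (Algebra.norm k₀ (algebraMap (𝓞 M) M z)) := by
    intro z
    have h1 := h.norm_rat_nonneg (Algebra.norm k₀ (algebraMap (𝓞 M) M z))
    rw [Algebra.norm_norm] at h1 ⊢
    have h2 : ((Algebra.norm ℤ z : ℤ) : ℚ) = Algebra.norm ℚ (algebraMap (𝓞 M) M z) :=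
      Algebra.coe_norm_int z
    rw [← h2] at h1 ⊢
    have h3 : 0 ≤ Algebra.norm ℤ z := by exact_mod_cast h1
    rw [Ideal.absNorm_span_singleton]
    have : ((Algebra.norm ℤ z).natAbs : ℤ) = Algebra.norm ℤ z := Int.natAbs_of_nonneg h3
    rw [← Int.cast_natCast, this]
  have hn := congrArg (fun K : Ideal (𝓞 M) => ((Ideal.absNorm K : ℕ) : ℚ)) hxy
  simp only [Submonoid.coe_mul, map_mul, Nat.cast_mul, hN] at hn
  set a := Algebra.norm k₀ (algebraMap (𝓞 M) M x)
  set b := Algebra.norm k₀ (algebraMap (𝓞 M) M y)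
  set n : ℚ := ((Ideal.absNorm (J : Ideal (𝓞 M)) : ℕ) : ℚ)
  have ha : Algebra.norm ℚ a ≠ 0 := by
    rw [Algebra.norm_ne_zero_iff, Algebra.norm_ne_zero_iff]
    exact fun h0 => hx (RingOfIntegers.coe_eq_zero_iff.1 h0)
  have e : Algebra.norm ℚ (b / a * algebraMap ℚ k₀ n) =
      Ideal.absNorm (I : Ideal (𝓞 M)) := by
    have e1 : Algebra.norm ℚ (b / a) * Algebra.norm ℚ a = Algebra.norm ℚ b := by
      rw [← map_mul, div_mul_cancel₀ _ (Algebra.norm_ne_zero_iff.1 ha)]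
    rw [map_mul, Algebra.norm_algebraMap, h.finrank_eq_two]
    apply mul_right_cancel₀ ha
    rw [mul_right_comm, e1]
    linear_combination -hn
  obtain ⟨X, Y, hXY⟩ := h.span (b / a * algebraMap ℚ k₀ n)
  rw [hXY, h.norm_coord] at e
  refine Rat.false_of_legendreSym (t := -2) hI ?_ (x := X) (y := Y) (z := 1) one_ne_zero ?_
  · rw [dvd_neg]
    intro hd
    have : q ∣ 2 := by exact_mod_cast hd
    exact hq2 ((Nat.prime_dvd_prime_iff_eq Fact.out Nat.prime_two).1 this)
  · push_cast at e ⊢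
    linear_combination e

end

section PadicPoints

theorem PadicInt.exists_sq_eq_of_legendreSym {l : ℕ} [Fact l.Prime] (hl : l ≠ 2) {a : ℤ}
    (ha : legendreSym l a = 1) : ∃ c : ℚ_[l], c ^ 2 = a := by
  have ha0 : ((a : ℤ) : ZMod l) ≠ 0 := by
    intro h0
    rw [(legendreSym.eq_zero_iff l a).2 h0] at ha
    exact zero_ne_one ha
  obtain ⟨r, hr⟩ := (legendreSym.eq_one_iff l ha0).1 ha
  obtain ⟨n, rfl⟩ := ZMod.intCast_surjective r
  have hd : (l : ℤ) ∣ n ^ 2 - a := by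
    rw [← ZMod.intCast_zmod_eq_zero_iff_dvd]
    push_cast
    rw [hr]; ring
  have hn : ¬ (l : ℤ) ∣ 2 * n := by
    intro h
    rcases (Nat.prime_iff_prime_int.1 (Fact.out : l.Prime)).dvd_or_dvd h with h | h
    · have : l ∣ 2 := by exact_mod_cast h
      exact hl ((Nat.prime_dvd_prime_iff_eq Fact.out Nat.prime_two).1 this)
    · rw [← ZMod.intCast_zmod_eq_zero_iff_dvd] at h
      rw [h] at hr
      exact ha0 (by simpa using hr)
  have hnorm : ‖(Polynomial.X ^ 2 - Polynomial.C (a : ℤ_[l])).aeval (n : ℤ_[l])‖ <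
      ‖(Polynomial.X ^ 2 - Polynomial.C (a : ℤ_[l])).derivative.aeval (n : ℤ_[l])‖ ^ 2 := by
    have e1 : (Polynomial.X ^ 2 - Polynomial.C (a : ℤ_[l])).aeval (n : ℤ_[l]) =
        ((n ^ 2 - a : ℤ) : ℤ_[l]) := by simp
    have e2 : (Polynomial.X ^ 2 - Polynomial.C (a : ℤ_[l])).derivative.aeval (n : ℤ_[l]) =
        ((2 * n : ℤ) : ℤ_[l]) := by simp [one_add_one_eq_two]
    rw [e1, e2]
    have h2 : ‖((2 * n : ℤ) : ℤ_[l])‖ = 1 := by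
      refine le_antisymm (PadicInt.norm_le_one _) (not_lt.1 fun h => hn ?_)
      exact (PadicInt.norm_int_lt_one_iff_dvd _).1 h
    rw [h2, one_pow]
    exact (PadicInt.norm_int_lt_one_iff_dvd _).2 hd
  obtain ⟨z, hz, -⟩ := hensels_lemma hnorm
  refine ⟨z, ?_⟩
  have : z ^ 2 = (a : ℤ_[l]) := by simpa [sub_eq_zero] using hz
  exact_mod_cast congrArg (Subtype.val : ℤ_[l] → ℚ_[l]) this

variable {M : Type*} [Field M] [NumberField M]

/-- A number field with an embedding into `ℚ_[l]` has an ideal of norm `l`. -/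
theorem NumberField.exists_absNorm_eq_of_padic {l : ℕ} [Fact l.Prime] (φ : M →+* ℚ_[l]) :
    ∃ I : Ideal (𝓞 M), Ideal.absNorm I = l := by
  have h_int : ∀ x : 𝓞 M, φ (algebraMap (𝓞 M) M x) ∈ PadicInt.subring l := by
    intro x
    have h1 : IsIntegral ℤ (φ (algebraMap (𝓞 M) M x)) :=
      (RingOfIntegers.isIntegral_coe x).map φ.toIntAlgHom
    obtain ⟨y, hy⟩ := IsIntegrallyClosed.isIntegral_iff.1 (h1.tower_top (A := ℤ_[l]))
    rw [← hy]
    exact y.2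
  let ψ : 𝓞 M →+* ZMod l :=
    (PadicInt.toZMod (p := l)).comp
      ((φ.comp (algebraMap (𝓞 M) M)).codRestrict (PadicInt.subring l) h_int)
  refine ⟨RingHom.ker ψ, ?_⟩
  rw [Ideal.absNorm_apply, Submodule.cardQuot_apply,
    Nat.card_congr (RingHom.quotientKerEquivOfSurjective
      (ZMod.ringHom_surjective ψ)).toEquiv, Nat.card_zmod]

end PadicPoints

section

variable {k₀ : Type*} [Field k₀] [NumberField k₀] {p : ℕ} [Fact p.Prime] {n : ℤ} {s₀ : k₀}

/-- An ideal above a split prime of a quadratic field. -/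
theorem IsQuadExt.exists_absNorm_eq_of_legendreSym (h : IsQuadExt s₀ (n : ℚ)) (hp : p ≠ 2)
    (hn : legendreSym p n = 1) :
    ∃ I : Ideal (𝓞 k₀), I * I ⊔ Ideal.span {(p : 𝓞 k₀)} = I ∧ Ideal.absNorm I = p := by
  have hn0 : ((n : ℤ) : ZMod p) ≠ 0 := by
    intro h0
    rw [(legendreSym.eq_zero_iff p n).2 h0] at hn
    exact zero_ne_one hn
  obtain ⟨r, hr⟩ := (legendreSym.eq_one_iff p hn0).1 hn
  obtain ⟨r, rfl⟩ := ZMod.intCast_surjective r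
  obtain ⟨e, he⟩ : (p : ℤ) ∣ r ^ 2 - n := by
    rw [← ZMod.intCast_zmod_eq_zero_iff_dvd]
    push_cast
    rw [hr]; ring
  have hpp : Prime (p : ℤ) := Nat.prime_iff_prime_int.1 Fact.out
  have hcop : IsCoprime (2 * r) (p : ℤ) := by
    rw [isCoprime_comm, hpp.coprime_iff_not_dvd]
    intro hd
    rcases hpp.dvd_or_dvd hd with hd | hd
    · have : p ∣ 2 := by exact_mod_cast hd
      exact hp ((Nat.prime_dvd_prime_iff_eq Fact.out Nat.prime_two).1 this)
    · rw [← ZMod.intCast_zmod_eq_zero_iff_dvd] at hd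
      rw [hd] at hr
      exact hn0 (by simpa using hr)
  obtain ⟨u, v, huv⟩ := hcop
  obtain ⟨s, hs⟩ : ∃ s : 𝓞 k₀, algebraMap (𝓞 k₀) k₀ s = s₀ := by
    refine ⟨⟨s₀, IsIntegral.of_pow (n := 2) two_pos ?_⟩, rfl⟩
    rw [h.sq]
    simpa using isIntegral_algebraMap (R := ℤ) (A := k₀) (x := n)
  have hs2 : s ^ 2 = n := by
    apply RingOfIntegers.coe_injective
    rw [map_pow, hs, h.sq]
    simp
  have he' : (r : 𝓞 k₀) ^ 2 - n = p * e := by exact_mod_cast congrArg (Int.cast : ℤ → 𝓞 k₀) he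
  have huv' : (u : 𝓞 k₀) * (2 * r) + v * p = 1 := by
    exact_mod_cast congrArg (Int.cast : ℤ → 𝓞 k₀) huv
  let σ := RingOfIntegers.mapAlgEquiv h.conj
  have hσ : σ s = -s := by
    apply RingOfIntegers.coe_injective
    change h.conj (algebraMap (𝓞 k₀) k₀ s) = algebraMap (𝓞 k₀) k₀ (-s)
    rw [map_neg, hs, h.conj_gen]
  set I : Ideal (𝓞 k₀) := Ideal.span {(p : 𝓞 k₀), s - r} with hI
  have hpI : (p : 𝓞 k₀) ∈ I := Ideal.subset_span (by simp)
  have hsI : s - r ∈ I := Ideal.subset_span (by simp)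
  have hσI : I.map σ = Ideal.span {(p : 𝓞 k₀), -s - r} := by
    rw [hI, Ideal.map_span, Set.image_pair]
    simp only [map_natCast, map_sub, map_intCast, hσ]
  have hpσ : (p : 𝓞 k₀) ∈ I.map σ := hσI ▸ Ideal.subset_span (by simp)
  have hsσ : -s - r ∈ I.map σ := hσI ▸ Ideal.subset_span (by simp)
  refine ⟨I, le_antisymm (sup_le Ideal.mul_le_right ?_) ?_, ?_⟩
  · rwa [Ideal.span_singleton_le_iff_mem]
  · have hp' : (p : 𝓞 k₀) ∈ I * I ⊔ Ideal.span {(p : 𝓞 k₀)} :=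
      Ideal.mem_sup_right (Ideal.mem_span_singleton_self _)
    have hs' := Ideal.mem_sup_left (T := Ideal.span {(p : 𝓞 k₀)}) (Ideal.mul_mem_mul hsI hsI)
    conv_lhs => rw [hI]
    rw [Ideal.span_le]
    rintro x (rfl | rfl)
    · exact hp'
    · change s - r ∈ I * I ⊔ Ideal.span {(p : 𝓞 k₀)}
      have := add_mem (Ideal.mul_mem_left _ (-(u : 𝓞 k₀)) hs')
        (Ideal.mul_mem_left _ (v * (s - r) - u * e) hp')
      convert this using 1
      linear_combination (-u : 𝓞 k₀) * he' + (u : 𝓞 k₀) * hs2 + (r - s) * huv'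
  · have hmul : I * I.map σ = Ideal.span {(p : 𝓞 k₀)} := by
      apply le_antisymm
      · rw [hσI, Ideal.span_pair_mul_span_pair, Ideal.span_le]
        have h0 : ∀ y : 𝓞 k₀, p * y ∈ Ideal.span {(p : 𝓞 k₀)} := fun y =>
          Ideal.mul_mem_right _ _ (Ideal.mem_span_singleton_self (p : 𝓞 k₀))
        rintro y (rfl | rfl | rfl | rfl)
        · exact h0 p
        · exact h0 _
        · rw [mul_comm]; exact h0 _
        · change _ ∈ Ideal.span {(p : 𝓞 k₀)}
          convert h0 e using 1
          linear_combination he' - hs2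
      · rw [Ideal.span_singleton_le_iff_mem]
        have := add_mem (Ideal.mul_mem_left _ (-u : 𝓞 k₀)
          (add_mem (Ideal.mul_mem_mul hpI hsσ) (Ideal.mul_mem_mul hsI hpσ)))
          (Ideal.mul_mem_left _ (v : 𝓞 k₀) (Ideal.mul_mem_mul hpI hpσ))
        convert this using 1
        linear_combination (-p : 𝓞 k₀) * huv'
    have h1 : Ideal.absNorm (I.map σ) = Ideal.absNorm I := by
      rw [← Ideal.absNorm_relNorm (𝓞 ℚ), Ideal.relNorm_map_algEquiv, Ideal.absNorm_relNorm]
    have h2 := congrArg Ideal.absNorm hmul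
    rw [map_mul, h1, Ideal.absNorm_span_natCast, RingOfIntegers.rank, h.finrank_eq_two,
      ← pow_two] at h2
    exact Nat.pow_left_injective two_ne_zero h2

end

section

variable {k₀ k : Type*} [Field k₀] [NumberField k₀] [Field k] [NumberField k] [Algebra k₀ k]
  {p : ℕ} {s : k}

/-- An ideal of norm `p` over a prime dividing `p` which ramifies in a quadratic extension. -/
theorem IsQuadExt.exists_sq_eq_map (h : IsQuadExt s (p : k₀)) {I : Ideal (𝓞 k₀)}
    (hI : I * I ⊔ Ideal.span {(p : 𝓞 k₀)} = I) (hIp : Ideal.absNorm I = p) :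
    ∃ J : Ideal (𝓞 k), J ^ 2 = I.map (algebraMap (𝓞 k₀) (𝓞 k)) ∧ Ideal.absNorm J = p := by
  obtain ⟨t, ht⟩ : ∃ t : 𝓞 k, algebraMap (𝓞 k) k t = s := by
    refine ⟨⟨s, IsIntegral.of_pow (n := 2) two_pos ?_⟩, rfl⟩
    rw [h.sq, map_natCast]
    simpa using isIntegral_algebraMap (R := ℤ) (A := k) (x := (p : ℤ))
  have ht2 : t * t = p := by
    apply RingOfIntegers.coe_injective
    rw [map_mul, ht, ← pow_two, h.sq, map_natCast, map_natCast]
  have hmap : I.map (algebraMap (𝓞 k₀) (𝓞 k)) * I.map (algebraMap (𝓞 k₀) (𝓞 k)) ⊔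
      Ideal.span {(p : 𝓞 k)} = I.map (algebraMap (𝓞 k₀) (𝓞 k)) := by
    conv_rhs => rw [← hI]
    rw [Ideal.map_sup, Ideal.map_mul, Ideal.map_span, Set.image_singleton, map_natCast]
  have hsq : (I.map (algebraMap (𝓞 k₀) (𝓞 k)) ⊔ Ideal.span {t}) ^ 2 =
      I.map (algebraMap (𝓞 k₀) (𝓞 k)) := by
    set J := I.map (algebraMap (𝓞 k₀) (𝓞 k))
    rw [pow_two, Ideal.sup_mul, Ideal.mul_sup, Ideal.mul_sup,
      Ideal.span_singleton_mul_span_singleton, ht2]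
    apply le_antisymm
    · refine sup_le (sup_le Ideal.mul_le_right Ideal.mul_le_left) (sup_le Ideal.mul_le_right ?_)
      exact le_sup_right.trans hmap.le
    · conv_lhs => rw [← hmap]
      exact sup_le_sup le_sup_left le_sup_right
  refine ⟨_, hsq, ?_⟩
  have h2 := congrArg Ideal.absNorm hsq
  rw [map_pow, Ideal.absNorm_algebraMap, RingOfIntegers.finrank_eq, h.finrank_eq_two, hIp] at h2
  exact Nat.pow_left_injective two_ne_zero h2

end

section AuxiliaryPrime

variable {p q : ℕ} [Fact p.Prime] [Fact q.Prime]

/-- A prime splitting completely in `ℚ(√p, √q, √(-2))` which is not a square modulo `q`. -/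
theorem Cond1Data.exists_prime (H : Cond1Data p q) : ∃ (l : ℕ) (_ : Fact l.Prime), l ≠ 2 ∧
    legendreSym l p = 1 ∧ legendreSym l q = 1 ∧ legendreSym l (-2) = 1 ∧
    legendreSym q l = -1 := by
  have hp := (Fact.out : p.Prime)
  have hq := (Fact.out : q.Prime)
  have hp8 := H.p8
  have hq8 := H.q8
  have hp2 : p ≠ 2 := by omega
  have hq2 : q ≠ 2 := by omega
  have hpq : p ≠ q := by omega
  have c8 : ∀ r, r.Prime → r ≠ 2 → Nat.Coprime 8 r := fun r hr h2 =>
    Nat.Coprime.pow_left 3 ((Nat.coprime_primes Nat.prime_two hr).2 h2.symm)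
  have cpq : Nat.Coprime p q := (Nat.coprime_primes hp hq).2 hpq
  have c8pq : Nat.Coprime (8 * p) q := Nat.Coprime.mul_left (c8 q hq hq2) cpq
  obtain ⟨a, ha8, hap⟩ := Nat.chineseRemainder (c8 p hp hp2) 3 1
  obtain ⟨b, hb, hbq⟩ := Nat.chineseRemainder c8pq a (q - 1)
  have hb8 : b ≡ 3 [MOD 8] := (hb.of_mul_right p).trans ha8
  have hbp : b ≡ 1 [MOD p] := (hb.of_mul_left 8).trans hap
  have hcop : Nat.Coprime b (8 * p * q) := by
    refine Nat.Coprime.mul_right (Nat.Coprime.mul_right ?_ ?_) ?_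
    · rw [Nat.coprime_iff_gcd_eq_one, hb8.gcd_eq]; rfl
    · rw [Nat.coprime_iff_gcd_eq_one, hbp.gcd_eq, Nat.gcd_one_left]
    · rw [Nat.coprime_iff_gcd_eq_one, hbq.gcd_eq]
      have : Nat.Coprime (q - 1) (q - 1 + 1) := by simp
      rwa [Nat.sub_add_cancel hq.one_le] at this
  obtain ⟨l, -, hl, hlb⟩ := Nat.forall_exists_prime_gt_and_modEq 0 (by
    have := hp.pos; have := hq.pos; positivity) hcop
  have hl8 : l % 8 = 3 := ((hlb.of_mul_right q).of_mul_right p).trans hb8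
  have hlp : l ≡ 1 [MOD p] := ((hlb.of_mul_right q).of_mul_left 8).trans hbp
  have hlq : l ≡ q - 1 [MOD q] := (hlb.of_mul_left (8 * p)).trans hbq
  have hl2 : l ≠ 2 := by omega
  have hlF : Fact l.Prime := ⟨hl⟩
  have e1 : legendreSym p l = 1 := by
    have : ((l : ℕ) : ZMod p) = 1 := by
      simpa using (ZMod.natCast_eq_natCast_iff l 1 p).2 hlp
    rw [legendreSym, Int.cast_natCast, this]
    simp
  have e2 : legendreSym q l = -1 := by
    have h1 : ((l : ℕ) : ZMod q) = -1 := by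
      have h2 := (ZMod.natCast_eq_natCast_iff l (q - 1) q).2 hlq
      rw [Nat.cast_sub hq.one_le] at h2
      simpa using h2
    have h3 := H.q_neg_one
    rw [legendreSym] at h3 ⊢
    rw [Int.cast_natCast, h1]
    simpa using h3
  refine ⟨l, hlF, hl2, ?_, ?_, ?_, e2⟩
  · rw [legendreSym.quadratic_reciprocity_one_mod_four (by omega) hl2, e1]
  · rw [legendreSym.quadratic_reciprocity_three_mod_four (by omega) (by omega), e2, neg_neg]
  · have h0 : (((-2 : ℤ)) : ZMod l) ≠ 0 := by
      rw [Ne, ZMod.intCast_zmod_eq_zero_iff_dvd, dvd_neg]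
      intro h
      have : l ∣ 2 := by exact_mod_cast h
      exact hl2 ((Nat.prime_dvd_prime_iff_eq hl Nat.prime_two).1 this)
    rw [legendreSym.eq_one_iff l h0]
    have := (ZMod.exists_sq_eq_neg_two_iff hl2).2 (Or.inr hl8)
    simpa using this

end AuxiliaryPrime

section Conjugates

variable {M L : Type*} [Field M] [NumberField M] [Field L] [NumberField L] [Algebra M L]
  {θ : L} {d : M}

omit [NumberField M] [NumberField L] in
theorem IsQuadExt.map_conj_mem_nonZeroDivisors (h : IsQuadExt θ d)
    (I : nonZeroDivisors (Ideal (𝓞 L))) :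
    (I : Ideal (𝓞 L)).map (RingOfIntegers.mapAlgEquiv h.conj) ∈ nonZeroDivisors (Ideal (𝓞 L)) :=
  mem_nonZeroDivisors_of_ne_zero <|
    (Ideal.map_eq_bot_iff_of_injective (RingOfIntegers.mapAlgEquiv h.conj).injective).not.2
      (nonZeroDivisors.ne_zero I.2)

/-- The conjugate of an ideal in a quadratic extension. -/
def IsQuadExt.conjIdeal (h : IsQuadExt θ d) (I : nonZeroDivisors (Ideal (𝓞 L))) :
    nonZeroDivisors (Ideal (𝓞 L)) :=
  ⟨_, h.map_conj_mem_nonZeroDivisors I⟩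

theorem ClassGroup.extendedHom_norm (h : IsQuadExt θ d) (I : nonZeroDivisors (Ideal (𝓞 L))) :
    extendedHom (𝓞 M) (𝓞 L) (norm M L (mk0 I)) = mk0 I * mk0 (h.conjIdeal I) := by
  rw [norm_mk0, extendedHom_mk0, ← map_mul]
  congr 1
  ext1
  exact Ideal.map_relNorm_eq_mul_conj h I

theorem IsQuadExt.ringHom_ext {M L E : Type*} [Field M] [Field L] [Algebra M L] {θ : L} {d : M}
    [Semiring E] (h : IsQuadExt θ d) {φ ψ : L →+* E}
    (h1 : ∀ x, φ (algebraMap M L x) = ψ (algebraMap M L x)) (h2 : φ θ = ψ θ) : φ = ψ := by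
  ext z
  obtain ⟨x, y, rfl⟩ := h.span z
  simp only [map_add, map_mul, h1, h2]

/-- If the composite of the conjugations of `L` over `M₁` and `M₂` is the conjugation over `M₃`
and the class numbers of `M₁` and `M₂` are odd, then squaring a class of `2`-power order
of `L` amounts to taking its norm down to `M₃`. -/
theorem ClassGroup.sq_eq_extendedHom_norm {M₁ M₂ : Type*} [Field M₁] [NumberField M₁]
    [Field M₂] [NumberField M₂] [Algebra M₁ L] [Algebra M₂ L] {θ₁ θ₂ : L} {d₁ : M₁} {d₂ : M₂}
    (h₁ : IsQuadExt θ₁ d₁) (h₂ : IsQuadExt θ₂ d₂) (h : IsQuadExt θ d)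
    (hc : ∀ z, h.conj z = h₁.conj (h₂.conj z))
    (H₁ : ∀ n, ∀ c : ClassGroup (𝓞 M₁), c ^ 2 ^ n = 1 → c = 1)
    (H₂ : ∀ n, ∀ c : ClassGroup (𝓞 M₂), c ^ 2 ^ n = 1 → c = 1)
    (x : ClassGroup (𝓞 L)) (hx : ∃ n, x ^ 2 ^ n = 1) :
    x ^ 2 = extendedHom (𝓞 M) (𝓞 L) (norm M L x) := by
  obtain ⟨n, hn⟩ := hx
  obtain ⟨I, rfl⟩ := mk0_surjective x
  have e2 : mk0 I * mk0 (h₂.conjIdeal I) = 1 := by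
    rw [← extendedHom_norm, H₂ n (norm M₂ L (mk0 I)) (by rw [← map_pow, hn, map_one]), map_one]
  have hn' : mk0 (h₂.conjIdeal I) ^ 2 ^ n = 1 := by
    rw [eq_inv_of_mul_eq_one_right e2, inv_pow, hn, inv_one]
  have e1 : mk0 (h₂.conjIdeal I) * mk0 (h₁.conjIdeal (h₂.conjIdeal I)) = 1 := by
    rw [← extendedHom_norm, H₁ n (norm M₁ L _) (by rw [← map_pow, hn', map_one]), map_one]
  have e3 : h₁.conjIdeal (h₂.conjIdeal I) = h.conjIdeal I := by
    ext1
    change Ideal.map (RingOfIntegers.mapAlgEquiv h₁.conj)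
      (Ideal.map (RingOfIntegers.mapAlgEquiv h₂.conj) (I : Ideal (𝓞 L))) =
      Ideal.map (RingOfIntegers.mapAlgEquiv h.conj) (I : Ideal (𝓞 L))
    have : ((RingOfIntegers.mapAlgEquiv h₁.conj : 𝓞 L ≃ₐ[𝓞 M₁] 𝓞 L) : 𝓞 L →+* 𝓞 L).comp
        ((RingOfIntegers.mapAlgEquiv h₂.conj : 𝓞 L ≃ₐ[𝓞 M₂] 𝓞 L) : 𝓞 L →+* 𝓞 L) =
        ((RingOfIntegers.mapAlgEquiv h.conj : 𝓞 L ≃ₐ[𝓞 M] 𝓞 L) : 𝓞 L →+* 𝓞 L) := by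
      ext z
      exact (hc (algebraMap (𝓞 L) L z)).symm
    have h4 := congrArg (fun f => Ideal.map f (I : Ideal (𝓞 L))) this
    simp only [← Ideal.map_map] at h4
    exact h4
  rw [e3] at e1
  rw [extendedHom_norm h, pow_two, mul_right_inj]
  exact mul_left_cancel ((mul_comm _ _).trans (e2.trans e1.symm))

end Conjugates

section Triquadratic

variable {p q : ℕ} [Fact p.Prime] [Fact q.Prime] {B F F' k k₀ K : Type*}
  [Field B] [NumberField B] [Field F] [NumberField F] [Field F'] [NumberField F']
  [Field k] [NumberField k] [Field k₀] [NumberField k₀] [Field K] [NumberField K]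
  [Algebra B F] [Algebra B F'] [Algebra B k] [Algebra k₀ k]
  [Algebra F K] [Algebra F' K] [Algebra k K]
  {sp : B} {sq : F'} {w : F} {s : k} {s₀ : k₀}

omit [Fact p.Prime] [Fact q.Prime] [NumberField F'] [NumberField K] in
theorem IsQuadExt.exists_padic (hB : IsQuadExt sp (p : ℚ)) (hF' : IsQuadExt sq (q : B))
    {w : K} (hK : IsQuadExt w (-((2 : ℕ) : F'))) {l : ℕ} [Fact l.Prime] (hl : l ≠ 2)
    (h₁ : legendreSym l p = 1) (h₂ : legendreSym l q = 1) (h₃ : legendreSym l (-2) = 1) :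
    Nonempty (K →+* ℚ_[l]) := by
  obtain ⟨a, ha⟩ := PadicInt.exists_sq_eq_of_legendreSym hl h₁
  obtain ⟨b, hb⟩ := PadicInt.exists_sq_eq_of_legendreSym hl h₂
  obtain ⟨c, hc⟩ := PadicInt.exists_sq_eq_of_legendreSym hl h₃
  obtain ⟨φ, -, -⟩ := hB.exists_lift (algebraMap ℚ ℚ_[l]) a (by simpa using ha)
  obtain ⟨ψ, -, -⟩ := hF'.exists_lift φ b (by simpa using hb)
  obtain ⟨χ, -, -⟩ := hK.exists_lift ψ c (by
    rw [hc, map_neg, map_natCast]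
    simp)
  exact ⟨χ⟩

omit [Fact p.Prime] [Fact q.Prime] [NumberField F] [NumberField F'] [NumberField k]
  [NumberField K] in
theorem IsQuadExt.conj_eq_conj_conj (hB : IsQuadExt sp (p : ℚ)) (hF' : IsQuadExt sq (q : B))
    (hK : IsQuadExt (algebraMap F K w) (-((2 : ℕ) : F')))
    (hKF : IsQuadExt (algebraMap F' K sq) (q : F))
    (hKk : IsQuadExt (algebraMap F' K sq) (q : k))
    (hs : algebraMap k K s = algebraMap F K w * algebraMap F' K sq)
    (hp₁ : algebraMap F K (algebraMap B F sp) = algebraMap F' K (algebraMap B F' sp))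
    (hp₂ : algebraMap k K (algebraMap B k sp) = algebraMap F' K (algebraMap B F' sp)) (z : K) :
    hKk.conj z = hKF.conj (hK.conj z) := by
  have key : (hKk.conj : K →+* K) = (hKF.conj : K →+* K).comp (hK.conj : K →+* K) := by
    apply hK.ringHom_ext
    · intro x
      refine RingHom.congr_fun (f := (hKk.conj : K →+* K).comp (algebraMap F' K))
        (g := ((hKF.conj : K →+* K).comp (hK.conj : K →+* K)).comp (algebraMap F' K)) ?_ x
      apply hF'.ringHom_ext
      · intro y
        refine RingHom.congr_fun
          (f := ((hKk.conj : K →+* K).comp (algebraMap F' K)).comp (algebraMap B F'))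
          (g := (((hKF.conj : K →+* K).comp (hK.conj : K →+* K)).comp (algebraMap F' K)).comp
            (algebraMap B F')) ?_ y
        apply hB.ringHom_ext
        · intro r
          simp
        · change hKk.conj (algebraMap F' K (algebraMap B F' sp)) =
            hKF.conj (hK.conj (algebraMap F' K (algebraMap B F' sp)))
          rw [AlgEquiv.commutes, ← hp₁, AlgEquiv.commutes, hp₁, ← hp₂, AlgEquiv.commutes]
      · change hKk.conj (algebraMap F' K sq) = hKF.conj (hK.conj (algebraMap F' K sq))
        rw [AlgEquiv.commutes, hKF.conj_gen, hKk.conj_gen]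
    · change hKk.conj (algebraMap F K w) = hKF.conj (hK.conj (algebraMap F K w))
      rw [hK.conj_gen, map_neg, AlgEquiv.commutes]
      have h1 := congrArg hKk.conj hs
      rw [AlgEquiv.commutes, map_mul, hKk.conj_gen, hs] at h1
      apply mul_right_cancel₀ hKF.ne_zero
      linear_combination h1
  exact RingHom.congr_fun key z

theorem ClassGroup.extendedIdeal_sq_eq_two {M L : Type*} [Field M] [NumberField M]
    [Field L] [NumberField L] [Algebra M L] {T : nonZeroDivisors (Ideal (𝓞 M))}
    (hT : (T : Ideal (𝓞 M)) ^ 2 = Ideal.span {2}) :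
    (extendedIdeal (𝓞 M) (𝓞 L) T : Ideal (𝓞 L)) ^ 2 = Ideal.span {2} := by
  change (Ideal.map (algebraMap (𝓞 M) (𝓞 L)) (T : Ideal (𝓞 M))) ^ 2 = _
  rw [← Ideal.map_pow, hT, Ideal.map_span, Set.image_singleton, map_ofNat]

theorem Sylow.nonempty_mulEquiv_zmod_of_triquadratic (H : Cond1Data p q)
    (hB : IsQuadExt sp (p : ℚ)) (hF : IsQuadExt w (-((2 : ℕ) : B))) (hF' : IsQuadExt sq (q : B))
    (hk : IsQuadExt s (-((2 * q : ℕ) : B))) (hk₀ : IsQuadExt s₀ (-((2 * q : ℕ) : ℚ)))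
    (hkk₀ : IsQuadExt (algebraMap B k sp) (p : k₀))
    (hK : IsQuadExt (algebraMap F K w) (-((2 : ℕ) : F')))
    (hKF : IsQuadExt (algebraMap F' K sq) (q : F))
    (hKk : IsQuadExt (algebraMap F' K sq) (q : k))
    (hs : algebraMap k K s = algebraMap F K w * algebraMap F' K sq)
    (hp₁ : algebraMap F K (algebraMap B F sp) = algebraMap F' K (algebraMap B F' sp))
    (hp₂ : algebraMap k K (algebraMap B k sp) = algebraMap F' K (algebraMap B F' sp))
    (m : ℕ) (hm : ∀ Q : Sylow 2 (ClassGroup (𝓞 k₀)),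
      Nat.card (Q : Subgroup (ClassGroup (𝓞 k₀))) = 2 ^ m)
    (P : Sylow 2 (ClassGroup (𝓞 K))) :
    Nonempty ((P : Subgroup (ClassGroup (𝓞 K))) ≃* Multiplicative (ZMod (2 ^ (m + 1)))) := by
  have hp8 := H.p8
  have hq8 := H.q8
  obtain ⟨T, hT⟩ := hk₀.exists_ideal_sq_eq_two (Nat.odd_iff.2 (by omega))
  have hTk : ClassGroup.extendedHom (𝓞 k₀) (𝓞 k) (ClassGroup.mk0 T) ≠ 1 := by
    rw [ClassGroup.extendedHom_mk0]
    exact ClassGroup.mk0_ne_one_of_sq_eq_two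
      (ClassGroup.extendedIdeal_sq_eq_two hT)
      fun u z => IsQuadExt.sq_ne_two_mul_unit H hB hk u z
  have hT1 : ClassGroup.mk0 T ≠ 1 := fun h => hTk (by rw [h, map_one])
  have hT2 : ClassGroup.mk0 T ^ 2 = 1 := by
    rw [← map_pow, ClassGroup.mk0_eq_one_iff (T ^ 2).2]
    exact ⟨2, hT⟩
  obtain ⟨α, x, U, V, μ, hPell, -, hx, hμ⟩ := hB.exists_pellUnits hF' H
  obtain ⟨l, hl, hl2, hlp, hlq, hl2', hql⟩ := H.exists_prime
  obtain ⟨φ⟩ := hB.exists_padic hF' hK hl2 hlp hlq hl2'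
  obtain ⟨I, hI⟩ := NumberField.exists_absNorm_eq_of_padic φ
  have hI0 : I ∈ nonZeroDivisors (Ideal (𝓞 K)) := by
    apply mem_nonZeroDivisors_of_ne_zero
    intro h
    rw [Ideal.zero_eq_bot, ← Ideal.absNorm_eq_zero_iff, hI] at h
    exact hl.out.ne_zero h
  have hpq : legendreSym p ((-(2 * q : ℕ) : ℤ)) = 1 := by
    have : (-(2 * q : ℕ) : ℤ) = -2 * q := by push_cast; ring
    rw [this, legendreSym.mul, H.p_neg_two, H.p_q]
    rfl
  obtain ⟨P₀, hP₀, hP₀p⟩ := IsQuadExt.exists_absNorm_eq_of_legendreSym (n := -(2 * q : ℕ))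
    (by simpa using hk₀) (by omega) hpq
  obtain ⟨P₁, hP₁, hP₁p⟩ := hkk₀.exists_sq_eq_map hP₀ hP₀p
  have hpp : p ≠ 0 := by omega
  have hP₀0 : P₀ ∈ nonZeroDivisors (Ideal (𝓞 k₀)) := by
    apply mem_nonZeroDivisors_of_ne_zero
    intro h
    rw [Ideal.zero_eq_bot, ← Ideal.absNorm_eq_zero_iff, hP₀p] at h
    exact hpp h
  have hP₁0 : P₁ ∈ nonZeroDivisors (Ideal (𝓞 k)) := by
    apply mem_nonZeroDivisors_of_ne_zero
    intro h
    rw [Ideal.zero_eq_bot, ← Ideal.absNorm_eq_zero_iff, hP₁p] at h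
    exact hpp h
  refine Sylow.nonempty_mulEquiv_zmod_of_tower (ClassGroup.norm k K)
    (ClassGroup.extendedHom (𝓞 k) (𝓞 K)) (ClassGroup.norm k₀ k)
    (ClassGroup.extendedHom (𝓞 k₀) (𝓞 k)) ?_ ?_ ?_ ?_
    (ClassGroup.mk0 ⟨I, hI0⟩) ?_ ?_ (ClassGroup.mk0 ⟨P₁, hP₁0⟩) ?_ ?_
    (ClassGroup.mk0 T) hT1 hT2 ?_ ?_ m hm P
  · intro c hc hc1
    by_contra hne
    apply hTk
    rwa [ClassGroup.eq_of_sq_eq_one (fun a ha => ha.exists_unit_of_imaginary hk₀)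
      (ClassGroup.mk0 T) c hT2 hc hT1 hne]
  · exact ClassGroup.eq_of_sq_eq_one fun a ha => ha.exists_unit_of_cm_two_mul H hB hk
  · exact ClassGroup.eq_of_sq_eq_one fun a ha =>
      ha.exists_unit_of_triquadratic H hB hF' hK hPell hx hμ
  · exact ClassGroup.norm_extendedHom hkk₀.finrank_eq_two
  · rw [ClassGroup.norm_mk0]
    apply ClassGroup.not_isSquare_mk0_of_legendreSym (by omega) hk₀
    change legendreSym q (Ideal.absNorm (Ideal.relNorm (𝓞 k) I)) = -1
    rw [Ideal.absNorm_relNorm, hI, hql]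
  · rw [ClassGroup.norm_mk0, ClassGroup.norm_mk0]
    apply ClassGroup.not_isSquare_mk0_of_legendreSym (by omega) hk₀
    change legendreSym q (Ideal.absNorm (Ideal.relNorm (𝓞 k₀) (Ideal.relNorm (𝓞 k) I))) = -1
    rw [Ideal.absNorm_relNorm, Ideal.absNorm_relNorm, hI, hql]
  · apply ClassGroup.not_isSquare_mk0_of_legendreSym (by omega) hk₀
    change legendreSym q (Ideal.absNorm P₁) = -1
    rw [hP₁p, H.q_p]
  · refine ⟨ClassGroup.mk0 ⟨P₀, hP₀0⟩, ?_⟩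
    rw [ClassGroup.extendedHom_mk0, ← map_pow]
    congr 1
    ext1
    exact hP₁
  · rw [ClassGroup.extendedHom_mk0, ClassGroup.extendedHom_mk0]
    refine ClassGroup.mk0_eq_one_of_sq_eq_two
      (ClassGroup.extendedIdeal_sq_eq_two
        (ClassGroup.extendedIdeal_sq_eq_two hT)) (w := algebraMap F K w) ?_
    rw [hK.sq, map_neg, map_natCast, Nat.cast_ofNat]
  · exact ClassGroup.sq_eq_extendedHom_norm hKF hK hKk
      (hB.conj_eq_conj_conj hF' hK hKF hKk hs hp₁ hp₂)
      (ClassGroup.eq_one_of_sq_pow_eq_one fun a ha => (ha.isUnitSq_of_cm_two H hB hF).exists_eq)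
      (ClassGroup.eq_one_of_sq_pow_eq_one fun a ha => (ha.isUnitSq_of_real H hB hF').exists_eq)

end Triquadratic

section ComplexSubfields

theorem IntermediateField.exists_eq_add_mul_of_mem_sup {N : IntermediateField ℚ ℂ} {θ : ℂ}
    (hθ : θ ^ 2 ∈ N) {z : ℂ} (hz : z ∈ N ⊔ adjoin ℚ {θ}) :
    ∃ x ∈ N, ∃ y ∈ N, z = x + y * θ := by
  let S : IntermediateField ℚ ℂ :=
    { carrier := {z | ∃ x ∈ N, ∃ y ∈ N, z = x + y * θ}
      mul_mem' := by
        rintro _ _ ⟨x, hx, y, hy, rfl⟩ ⟨x', hx', y', hy', rfl⟩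
        exact ⟨x * x' + y * y' * θ ^ 2,
          add_mem (mul_mem hx hx') (mul_mem (mul_mem hy hy') hθ), x * y' + y * x',
          add_mem (mul_mem hx hy') (mul_mem hy hx'), by ring⟩
      add_mem' := by
        rintro _ _ ⟨x, hx, y, hy, rfl⟩ ⟨x', hx', y', hy', rfl⟩
        exact ⟨x + x', add_mem hx hx', y + y', add_mem hy hy', by ring⟩
      algebraMap_mem' := fun r => ⟨_, algebraMap_mem N r, 0, zero_mem N, by ring⟩
      inv_mem' := by
        rintro _ ⟨x, hx, y, hy, rfl⟩
        by_cases h0 : x - y * θ = 0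
        · refine ⟨(x + x)⁻¹, inv_mem (add_mem hx hx), 0, zero_mem N, ?_⟩
          rw [← sub_eq_zero.1 h0, zero_mul, add_zero]
        · refine ⟨x * (x ^ 2 - y ^ 2 * θ ^ 2)⁻¹, ?_, -y * (x ^ 2 - y ^ 2 * θ ^ 2)⁻¹, ?_, ?_⟩
          · exact mul_mem hx (inv_mem (sub_mem (pow_mem hx 2) (mul_mem (pow_mem hy 2) hθ)))
          · exact mul_mem (neg_mem hy)
              (inv_mem (sub_mem (pow_mem hx 2) (mul_mem (pow_mem hy 2) hθ)))
          · have e : x ^ 2 - y ^ 2 * θ ^ 2 = (x + y * θ) * (x - y * θ) := by ring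
            rw [e, mul_inv]
            linear_combination (-(x + y * θ)⁻¹) * mul_inv_cancel₀ h0 }
  have hS : N ⊔ adjoin ℚ {θ} ≤ S := by
    refine sup_le (fun x hx => ⟨x, hx, 0, zero_mem N, by ring⟩) ?_
    rw [adjoin_le_iff]
    rintro _ rfl
    exact ⟨0, zero_mem N, 1, one_mem N, by ring⟩
  exact hS hz

theorem IsQuadExt.of_le_sup {M : Type*} [Field M] [Algebra M ℂ] {L : IntermediateField ℚ ℂ}
    [Algebra M L] [IsScalarTower M L ℂ] (N : IntermediateField ℚ ℂ)
    (hN : ∀ z ∈ N, ∃ x : M, algebraMap M ℂ x = z) {θ : L} {d : M}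
    (hsq : (θ : ℂ) ^ 2 = algebraMap M ℂ d) (hsqN : (θ : ℂ) ^ 2 ∈ N)
    (hθ : ∀ x : M, algebraMap M ℂ x ≠ θ) (hL : L ≤ N ⊔ adjoin ℚ {(θ : ℂ)}) :
    IsQuadExt θ d where
  sq := by
    apply (algebraMap L ℂ).injective
    rw [← IsScalarTower.algebraMap_apply, ← hsq, map_pow]
    rfl
  notMem x hx := hθ x (by rw [IsScalarTower.algebraMap_apply M L ℂ, hx]; rfl)
  span z := by
    obtain ⟨x, hx, y, hy, h⟩ := exists_eq_add_mul_of_mem_sup hsqN (hL z.2)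
    obtain ⟨x, rfl⟩ := hN x hx
    obtain ⟨y, rfl⟩ := hN y hy
    refine ⟨x, y, (algebraMap L ℂ).injective ?_⟩
    rw [map_add, map_mul, ← IsScalarTower.algebraMap_apply, ← IsScalarTower.algebraMap_apply]
    exact h

theorem Complex.notMem_sup_adjoin_of_im_eq_zero {N : IntermediateField ℚ ℂ}
    (hN : ∀ z ∈ N, z.im = 0) {r θ : ℂ} (hr : r.im = 0) (hrN : r ∉ N) (hθ : θ.im ≠ 0)
    (hθN : θ ^ 2 ∈ N) : r ∉ N ⊔ adjoin ℚ {θ} := by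
  intro h
  obtain ⟨x, hx, y, hy, rfl⟩ := exists_eq_add_mul_of_mem_sup hθN h
  have hx0 := hN x hx
  have hy0 := hN y hy
  have hyre : y.re = 0 := by
    simpa [hx0, hy0, hθ] using hr
  have hy1 : y = 0 := Complex.ext hyre hy0
  apply hrN
  rwa [hy1, zero_mul, add_zero]

theorem Complex.im_eq_zero_of_mem_adjoin {S : Set ℂ} (hS : ∀ z ∈ S, z.im = 0) {z : ℂ}
    (hz : z ∈ adjoin ℚ S) : z.im = 0 := by
  have h : adjoin ℚ S ≤ (Complex.ofRealAm.restrictScalars ℚ).fieldRange := by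
    rw [adjoin_le_iff]
    exact fun z hz => ⟨z.re, Complex.ext rfl (by simp [hS z hz])⟩
  obtain ⟨x, rfl⟩ := h hz
  simp

variable {p q : ℕ}

theorem not_isSquare_rat_of_prime (hp : p.Prime) : ¬ IsSquare (p : ℚ) := by
  rw [Rat.isSquare_natCast_iff]
  exact (Nat.prime_iff.1 hp).irreducible.not_isSquare

theorem not_isSquare_rat_mul_of_prime (hp : p.Prime) (hq : q.Prime) (hpq : p ≠ q) :
    ¬ IsSquare ((p * q : ℕ) : ℚ) := by
  rw [Rat.isSquare_natCast_iff]
  rintro ⟨n, hn⟩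
  have h1 : p ∣ n := by
    have : p ∣ n * n := hn ▸ dvd_mul_right p q
    exact (hp.dvd_mul.1 this).elim id id
  obtain ⟨c, rfl⟩ := h1
  have h2 : q = p * (c * c) := by
    apply Nat.eq_of_mul_eq_mul_left hp.pos
    linarith
  exact hpq ((Nat.prime_dvd_prime_iff_eq hp hq).1 ⟨_, h2⟩)

theorem notMem_bot_of_sq_eq_prime (hp : p.Prime) {x : ℂ} (hx : x ^ 2 = p) :
    x ∉ (⊥ : IntermediateField ℚ ℂ) := by
  intro h
  obtain ⟨r, rfl⟩ := mem_bot.1 h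
  apply not_isSquare_rat_of_prime hp
  refine ⟨r, ?_⟩
  rw [eq_ratCast] at hx
  have : r ^ 2 = p := by exact_mod_cast hx
  rw [← this, pow_two]

theorem notMem_adjoin_of_sq_eq_prime (hp : p.Prime) (hq : q.Prime) (hpq : p ≠ q) {x y : ℂ}
    (hx : x ^ 2 = p) (hy : y ^ 2 = q) : y ∉ adjoin ℚ {x} := by
  intro h
  have hx' : x ^ 2 ∈ (⊥ : IntermediateField ℚ ℂ) := by
    rw [hx]
    exact IntermediateField.natCast_mem _ p
  rw [← bot_sup_eq (adjoin ℚ {x})] at h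
  obtain ⟨a, ha, b, hb, rfl⟩ := exists_eq_add_mul_of_mem_sup hx' h
  obtain ⟨a, rfl⟩ := mem_bot.1 ha
  obtain ⟨b, rfl⟩ := mem_bot.1 hb
  rw [eq_ratCast, eq_ratCast] at hy
  by_cases h0 : a * b = 0
  · have e : ((a ^ 2 + b ^ 2 * p : ℚ) : ℂ) = ((q : ℚ) : ℂ) := by
      push_cast
      have h0' : (a : ℂ) * b = 0 := by exact_mod_cast h0
      linear_combination hy - (b : ℂ) ^ 2 * hx - 2 * x * h0'
    have e : a ^ 2 + b ^ 2 * p = q := by exact_mod_cast e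
    rcases mul_eq_zero.1 h0 with rfl | rfl
    · exact not_isSquare_rat_mul_of_prime hp hq hpq
        ⟨b * p, by push_cast; linear_combination (-p : ℚ) * e⟩
    · exact not_isSquare_rat_of_prime hq ⟨a, by linear_combination -e⟩
  · apply notMem_bot_of_sq_eq_prime hp hx
    have h0' : (a : ℂ) * b ≠ 0 := by exact_mod_cast h0
    have e : x = algebraMap ℚ ℂ ((q - a ^ 2 - b ^ 2 * p) / (2 * (a * b))) := by
      rw [eq_ratCast]
      push_cast
      rw [eq_div_iff (by simpa using h0')]
      linear_combination hy - (b : ℂ) ^ 2 * hx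
    rw [e]
    exact IntermediateField.algebraMap_mem _ _

end ComplexSubfields

section Instantiation

theorem IntermediateField.numberField_of_le {E L : IntermediateField ℚ ℂ} [NumberField L]
    (h : E ≤ L) : NumberField E where
  to_charZero := inferInstance
  to_finiteDimensional :=
    FiniteDimensional.of_injective (inclusion h).toLinearMap (inclusion h).injective

/-- The case of subfields of `ℂ` generated by given square roots. -/
theorem Sylow.nonempty_mulEquiv_zmod_of_adjoin {p q : ℕ} [Fact p.Prime] [Fact q.Prime]
    (H : Cond1Data p q) {P Q W : ℂ} (hP : P ^ 2 = p) (hQ : Q ^ 2 = q) (hW : W ^ 2 = -2)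
    (hPim : P.im = 0) (hQim : Q.im = 0) (hWim : W.im ≠ 0) (hWQim : (W * Q).im ≠ 0)
    {B F F' k k₀ K : IntermediateField ℚ ℂ} (eB : B = adjoin ℚ {P}) (eF : F = adjoin ℚ {P, W})
    (eF' : F' = adjoin ℚ {P, Q}) (ek : k = adjoin ℚ {P, W * Q}) (ek₀ : k₀ = adjoin ℚ {W * Q})
    (eK : K = adjoin ℚ {P, Q, W}) [NumberField K]
    (m : ℕ) (hm : ∀ S : Sylow 2 (ClassGroup (𝓞 k₀)),
      Nat.card (S : Subgroup (ClassGroup (𝓞 k₀))) = 2 ^ m)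
    (S : Sylow 2 (ClassGroup (𝓞 K))) :
    Nonempty ((S : Subgroup (ClassGroup (𝓞 K))) ≃* Multiplicative (ZMod (2 ^ (m + 1)))) := by
  have hp : p.Prime := Fact.out
  have hq : q.Prime := Fact.out
  have hp8 := H.p8
  have hq8 := H.q8
  have hQ0 : Q ≠ 0 := by
    rintro rfl
    simp at hWQim
  have hWQ : (W * Q) ^ 2 = -((2 * q : ℕ) : ℂ) := by
    rw [mul_pow, hW, hQ]; push_cast; ring
  have sing : ∀ x : ℂ, x ∈ adjoin ℚ {x} := fun x => mem_adjoin_simple_self ℚ x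
  have PB : P ∈ B := eB ▸ sing P
  have PF : P ∈ F := eF ▸ subset_adjoin ℚ _ (by simp)
  have WF : W ∈ F := eF ▸ subset_adjoin ℚ _ (by simp)
  have PF' : P ∈ F' := eF' ▸ subset_adjoin ℚ _ (by simp)
  have QF' : Q ∈ F' := eF' ▸ subset_adjoin ℚ _ (by simp)
  have Pk : P ∈ k := ek ▸ subset_adjoin ℚ _ (by simp)
  have Sk : W * Q ∈ k := ek ▸ subset_adjoin ℚ _ (by simp)
  have Sk₀ : W * Q ∈ k₀ := ek₀ ▸ sing _
  have PK : P ∈ K := eK ▸ subset_adjoin ℚ _ (by simp)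
  have QK : Q ∈ K := eK ▸ subset_adjoin ℚ _ (by simp)
  have WK : W ∈ K := eK ▸ subset_adjoin ℚ _ (by simp)
  have one : ∀ (L : IntermediateField ℚ ℂ) (x : ℂ), x ∈ L → adjoin ℚ {x} ≤ L := by
    intro L x hx
    rw [adjoin_le_iff]
    rintro _ rfl
    exact hx
  have two : ∀ (L : IntermediateField ℚ ℂ) (x y : ℂ), x ∈ L → y ∈ L → adjoin ℚ {x, y} ≤ L := by
    intro L x y hx hy
    rw [adjoin_le_iff]
    rintro _ (rfl | rfl)
    exacts [hx, hy]
  have three : ∀ (L : IntermediateField ℚ ℂ) (x y z : ℂ), x ∈ L → y ∈ L → z ∈ L →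
      adjoin ℚ {x, y, z} ≤ L := by
    intro L x y z hx hy hz
    rw [adjoin_le_iff]
    rintro _ (rfl | rfl | rfl)
    exacts [hx, hy, hz]
  have hBF : B ≤ F := eB.trans_le (one _ _ PF)
  have hBF' : B ≤ F' := eB.trans_le (one _ _ PF')
  have hBk : B ≤ k := eB.trans_le (one _ _ Pk)
  have hk₀k : k₀ ≤ k := ek₀.trans_le (one _ _ Sk)
  have hFK : F ≤ K := eF.trans_le (two _ _ _ PK WK)
  have hF'K : F' ≤ K := eF'.trans_le (two _ _ _ PK QK)
  have hkK : k ≤ K := ek.trans_le (two _ _ _ PK (mul_mem WK QK))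
  have nF : NumberField F := numberField_of_le hFK
  have nF' : NumberField F' := numberField_of_le hF'K
  have nk : NumberField k := numberField_of_le hkK
  have nB : NumberField B := numberField_of_le hBF
  have nk₀ : NumberField k₀ := numberField_of_le hk₀k
  let : Algebra B F := (inclusion hBF).toRingHom.toAlgebra
  let : Algebra B F' := (inclusion hBF').toRingHom.toAlgebra
  let : Algebra B k := (inclusion hBk).toRingHom.toAlgebra
  let : Algebra k₀ k := (inclusion hk₀k).toRingHom.toAlgebra
  let : Algebra F K := (inclusion hFK).toRingHom.toAlgebra
  let : Algebra F' K := (inclusion hF'K).toRingHom.toAlgebra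
  let : Algebra k K := (inclusion hkK).toRingHom.toAlgebra
  have : IsScalarTower B F ℂ := .of_algebraMap_eq fun _ => rfl
  have : IsScalarTower B F' ℂ := .of_algebraMap_eq fun _ => rfl
  have : IsScalarTower B k ℂ := .of_algebraMap_eq fun _ => rfl
  have : IsScalarTower k₀ k ℂ := .of_algebraMap_eq fun _ => rfl
  have : IsScalarTower F K ℂ := .of_algebraMap_eq fun _ => rfl
  have : IsScalarTower F' K ℂ := .of_algebraMap_eq fun _ => rfl
  have : IsScalarTower k K ℂ := .of_algebraMap_eq fun _ => rfl
  have self : ∀ (N : IntermediateField ℚ ℂ) (z : ℂ), z ∈ N → ∃ x : N, algebraMap N ℂ x = z :=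
    fun N z hz => ⟨⟨z, hz⟩, rfl⟩
  have ne : ∀ (N : IntermediateField ℚ ℂ) (z : ℂ), z ∉ N → ∀ x : N, algebraMap N ℂ x ≠ z :=
    fun N z hz x hx => hz (hx ▸ x.2)
  have nat_mem : ∀ (N : IntermediateField ℚ ℂ) (n : ℕ), (n : ℂ) ∈ N :=
    fun N n => IntermediateField.natCast_mem N n
  have two_mem : ∀ N : IntermediateField ℚ ℂ, W ^ 2 ∈ N := fun N => by
    rw [hW]; exact neg_mem (by simp)
  have Q_mem : ∀ N : IntermediateField ℚ ℂ, Q ^ 2 ∈ N := fun N => hQ ▸ nat_mem N q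
  have P_mem : ∀ N : IntermediateField ℚ ℂ, P ^ 2 ∈ N := fun N => hP ▸ nat_mem N p
  have WQ_mem : ∀ N : IntermediateField ℚ ℂ, (W * Q) ^ 2 ∈ N := fun N => by
    rw [hWQ]; exact neg_mem (nat_mem N _)
  have hPbot : P ∉ (⊥ : IntermediateField ℚ ℂ) := notMem_bot_of_sq_eq_prime hp hP
  have hQB : Q ∉ B := eB ▸ notMem_adjoin_of_sq_eq_prime hp hq (by omega) hP hQ
  have rbot : ∀ z ∈ (⊥ : IntermediateField ℚ ℂ), z.im = 0 := by
    intro z hz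
    obtain ⟨r, rfl⟩ := mem_bot.1 hz
    simp
  have rF' : ∀ z ∈ F', z.im = 0 := fun z hz =>
    Complex.im_eq_zero_of_mem_adjoin (by rintro _ (rfl | rfl); exacts [hPim, hQim]) (eF' ▸ hz)
  have rB : ∀ z ∈ B, z.im = 0 := fun z hz => rF' z (hBF' hz)
  have lB : B ≤ ⊥ ⊔ adjoin ℚ {P} := by rw [eB]; exact le_sup_right
  have lF : F ≤ B ⊔ adjoin ℚ {W} :=
    eF.trans_le (two _ _ _ (le_sup_left (a := B) PB) (le_sup_right (a := B) (sing W)))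
  have lk : k ≤ B ⊔ adjoin ℚ {W * Q} :=
    ek.trans_le (two _ _ _ (le_sup_left (a := B) PB) (le_sup_right (a := B) (sing _)))
  have lk₀ : k₀ ≤ ⊥ ⊔ adjoin ℚ {W * Q} := by rw [ek₀]; exact le_sup_right
  have hQF : Q ∉ F := fun h =>
    Complex.notMem_sup_adjoin_of_im_eq_zero rB hQim hQB hWim (two_mem B) (lF h)
  have hQk : Q ∉ k := fun h =>
    Complex.notMem_sup_adjoin_of_im_eq_zero rB hQim hQB hWQim (WQ_mem B) (lk h)
  have hPk₀ : P ∉ k₀ := fun h =>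
    Complex.notMem_sup_adjoin_of_im_eq_zero rbot hPim hPbot hWQim (WQ_mem ⊥) (lk₀ h)
  have nebot : ∀ z : ℂ, z ∉ (⊥ : IntermediateField ℚ ℂ) → ∀ x : ℚ, algebraMap ℚ ℂ x ≠ z :=
    fun z hz x hx => hz (mem_bot.2 ⟨x, hx⟩)
  refine Sylow.nonempty_mulEquiv_zmod_of_triquadratic (p := p) (q := q) (B := B) (F := F)
    (F' := F') (k := k) (k₀ := k₀) (K := K) (sp := ⟨P, PB⟩) (sq := ⟨Q, QF'⟩) (w := ⟨W, WF⟩)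
    (s := ⟨W * Q, Sk⟩) (s₀ := ⟨W * Q, Sk₀⟩) H ?_ ?_ ?_ ?_ ?_ ?_ ?_ ?_ ?_ ?_ ?_ ?_ m hm S
  · exact .of_le_sup ⊥ (fun z hz => mem_bot.1 hz) (by simpa using hP) (P_mem _) (nebot _ hPbot)
      lB
  · exact .of_le_sup B (self B) (by rw [map_neg, map_natCast, Nat.cast_ofNat]; exact hW) (two_mem B)
      (ne _ _ fun h => hWim (rB _ h)) lF
  · exact .of_le_sup B (self B) (by simpa using hQ) (Q_mem B) (ne _ _ hQB)
      (eF'.trans_le (two _ _ _ (le_sup_left (a := B) PB) (le_sup_right (a := B) (sing Q))))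
  · exact .of_le_sup B (self B) (by rw [map_neg, map_natCast]; exact hWQ) (WQ_mem B)
      (ne _ _ fun h => hWQim (rB _ h)) lk
  · exact .of_le_sup ⊥ (fun z hz => mem_bot.1 hz) (by rw [map_neg, map_natCast]; exact hWQ)
      (WQ_mem _) (nebot _ fun h => hWQim (rbot _ h)) lk₀
  · exact .of_le_sup k₀ (self k₀) (by rw [map_natCast]; exact hP) (P_mem k₀) (ne _ _ hPk₀)
      (ek.trans_le (two _ _ _ (le_sup_right (a := k₀) (sing P)) (le_sup_left (a := k₀) Sk₀)))
  · exact .of_le_sup F' (self F') (by rw [map_neg, map_natCast, Nat.cast_ofNat]; exact hW)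
      (two_mem F')
      (ne _ _ fun h => hWim (rF' _ h))
      (eK.trans_le (three _ _ _ _ (le_sup_left (a := F') PF') (le_sup_left (a := F') QF')
        (le_sup_right (a := F') (sing W))))
  · exact .of_le_sup F (self F) (by rw [map_natCast]; exact hQ) (Q_mem F) (ne _ _ hQF)
      (eK.trans_le (three _ _ _ _ (le_sup_left (a := F) PF) (le_sup_right (a := F) (sing Q))
        (le_sup_left (a := F) WF)))
  · refine .of_le_sup k (self k) (by rw [map_natCast]; exact hQ) (Q_mem k) (ne _ _ hQk)
      (eK.trans_le (three _ _ _ _ (le_sup_left (a := k) Pk) (le_sup_right (a := k) (sing Q)) ?_))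
    have h := mul_mem (le_sup_left (a := k) (b := adjoin ℚ {Q}) Sk)
      (inv_mem (le_sup_right (a := k) (sing Q)))
    rwa [mul_inv_cancel_right₀ hQ0] at h
  · rfl
  · rfl
  · rfl

end Instantiation

theorem statement9 (p q : ℕ) (h : Cond1 p q) (m : ℕ)
    (hm : ∀ Q : Sylow 2 (ClassGroup (𝓞 ↥(k0 q))),
      Nat.card ↥(Q : Subgroup (ClassGroup (𝓞 ↥(k0 q)))) = 2 ^ m)
    [NumberField ↥(Kf p q)]
    (P : Sylow 2 (ClassGroup (𝓞 ↥(Kf p q)))) :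
    Nonempty (↥(P : Subgroup (ClassGroup (𝓞 ↥(Kf p q)))) ≃*
      Multiplicative (ZMod (2 ^ (m + 1)))) := by
  have : Fact p.Prime := ⟨h.1⟩
  have : Fact q.Prime := ⟨h.2.1⟩
  have hsqrt : ∀ n : ℕ, ((Real.sqrt n : ℝ) : ℂ) ^ 2 = n := fun n => by
    rw [← Complex.ofReal_pow, Real.sq_sqrt n.cast_nonneg, Complex.ofReal_natCast]
  have hq : q ≠ 0 := h.2.1.ne_zero
  refine Sylow.nonempty_mulEquiv_zmod_of_adjoin h.data (K := Kf p q) (P := ((Real.sqrt p : ℝ) : ℂ))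
    (Q := ((Real.sqrt q : ℝ) : ℂ)) (W := Complex.I * ((Real.sqrt 2 : ℝ) : ℂ))
    (hsqrt p) (hsqrt q) ?_ (by simp) (by simp) (by simp) (by simpa using hq)
    rfl rfl rfl rfl ?_ rfl m hm P
  · rw [mul_pow, Complex.I_sq]
    have := hsqrt 2
    push_cast at this
    rw [this]
    ring
  · rw [k0, Real.sqrt_mul zero_le_two, Complex.ofReal_mul, mul_assoc]
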